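/- Let Σ be a non-singular fan in ℝ^n satisfying conditions (2.9.1) and (2.9.2), and let D = (d_1,…,d_r) be positive integers with ∑_k d_k n_k ≠ 0. Choose D* = (d*_1,…,d*_r) as in (2.9.1) and m_0 ∈ ℕ with d_k < m_0·d*_k for all k, set D_0 = (m_0 d*_1,…,m_0 d*_r), let j_{D_0} : Pol*_{D_0}(S¹,X_Σ) → ΩU(K_Σ) be a continuous lift of i_{D_0} (note ∑_k m_0 d*_k n_k = 0), and define j_D = j_{D_0} ∘ s_{D,D_0} : Pol*_D(S¹,X_Σ) → ΩU(K_Σ). Then j_D is a homotopy equivalence through dimension d(D,Σ) = 2(r_min(Σ)−1)·d_min − 2. -/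

import Mathlib

open scoped BigOperators
attribute [local instance] Classical.propDecidable

noncomputable section

namespace Toric


/-! ### Cones and fans -/

/-- The real vector associated to an integer vector. -/
def zr {n : ℕ} (v : Fin n → ℤ) : Fin n → ℝ := fun i => (v i : ℝ)

/-- A convex rational polyhedral cone in `ℝ^n`. -/
def IsRatCone {n : ℕ} (σ : Set (Fin n → ℝ)) : Prop :=
  ∃ s : Finset (Fin n → ℤ),
    σ = {x | ∃ lam : (Fin n → ℤ) → ℝ, (∀ v, 0 ≤ lam v) ∧ x = ∑ v ∈ s, lam v • zr v}

/-- A cone is strongly convex if `σ ∩ (-σ) = {0}`. -/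
def StronglyConvex {n : ℕ} (σ : Set (Fin n → ℝ)) : Prop := σ ∩ (-σ) = {0}

/-- `τ` is a face of `σ`, cut out by a linear form nonnegative on `σ`. -/
def IsFaceOf {n : ℕ} (τ σ : Set (Fin n → ℝ)) : Prop :=
  ∃ L : (Fin n → ℝ) →ₗ[ℝ] ℝ, (∀ x ∈ σ, 0 ≤ L x) ∧ τ = σ ∩ {x | L x = 0}

/-- A fan in `ℝ^n`: a finite collection of strongly convex rational polyhedral cones,
closed under taking faces, such that the intersection of two cones is a face of each;
we also require that it strictly contains `{0}`. -/
structure Fan (n : ℕ) where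
  cones : Set (Set (Fin n → ℝ))
  finite : cones.Finite
  ratCone : ∀ σ ∈ cones, IsRatCone σ
  stronglyConvex : ∀ σ ∈ cones, StronglyConvex σ
  face_mem : ∀ σ ∈ cones, ∀ τ, IsFaceOf τ σ → τ ∈ cones
  inter_face : ∀ σ ∈ cones, ∀ τ ∈ cones, IsFaceOf (σ ∩ τ) σ
  zero_mem : ({0} : Set (Fin n → ℝ)) ∈ cones
  nontrivial : cones ≠ {({0} : Set (Fin n → ℝ))}

/-- A fan is complete if its cones cover `ℝ^n`. -/
def Fan.Complete {n : ℕ} (F : Fan n) : Prop := ⋃₀ F.cones = Set.univ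

/-- A fan is non-singular if each of its cones is spanned by part of a `ℤ`-basis of `ℤ^n`. -/
def Fan.NonSingular {n : ℕ} (F : Fan n) : Prop :=
  ∀ σ ∈ F.cones, ∃ (b : Module.Basis (Fin n) ℤ (Fin n → ℤ)) (s : Finset (Fin n)),
    σ = {x | ∃ lam : Fin n → ℝ, (∀ i, 0 ≤ lam i) ∧ x = ∑ i ∈ s, lam i • zr (b i)}

/-- The ray (one-dimensional cone) generated by a vector. -/
def ray {n : ℕ} (v : Fin n → ℝ) : Set (Fin n → ℝ) := {x | ∃ t : ℝ, 0 ≤ t ∧ x = t • v}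

/-- The cone spanned by the vectors `n_i`, `i ∈ s`. -/
def coneIdx {n r : ℕ} (N : Fin r → Fin n → ℤ) (s : Finset (Fin r)) : Set (Fin n → ℝ) :=
  {x | ∃ lam : Fin r → ℝ, (∀ i, 0 ≤ lam i) ∧ x = ∑ i ∈ s, lam i • zr (N i)}

/-- A point of `ℝ^n` lying in the lattice `ℤ^n`. -/
def IsLatticePoint {n : ℕ} (x : Fin n → ℝ) : Prop := ∀ i, ∃ m : ℤ, x i = (m : ℝ)

/-- `N 1, …, N r` is the (complete, repetition-free) list of primitive generators of the
one-dimensional cones of the fan `F`. -/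
structure IsPrimGens {n r : ℕ} (F : Fan n) (N : Fin r → Fin n → ℤ) : Prop where
  ray_mem : ∀ k, ray (zr (N k)) ∈ F.cones
  ne_zero : ∀ k, N k ≠ 0
  primitive : ∀ k, ray (zr (N k)) ∩ {x | IsLatticePoint x}
      = {x | ∃ c : ℕ, x = (c : ℝ) • zr (N k)}
  inj : Function.Injective N
  complete : ∀ σ ∈ F.cones, Module.finrank ℝ (Submodule.span ℝ σ) = 1 →
      ∃ k, σ = ray (zr (N k))

/-- Condition (2.9.1): a positive integral relation among the primitive generators. -/
def Cond1 {n r : ℕ} (N : Fin r → Fin n → ℤ) : Prop :=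
  ∃ d : Fin r → ℕ, (∀ k, 0 < d k) ∧ ∑ k, (d k : ℤ) • N k = 0

/-- Condition (2.9.2): the primitive generators span `ℤ^n` over `ℤ`. -/
def Cond2 {n r : ℕ} (N : Fin r → Fin n → ℤ) : Prop :=
  Submodule.span ℤ (Set.range N) = ⊤

/-- The underlying simplicial complex `K_Σ` of a fan. -/
def KC {n r : ℕ} (F : Fan n) (N : Fin r → Fin n → ℤ) : Set (Finset (Fin r)) :=
  {s | coneIdx N s ∈ F.cones}

/-- A primitive set: it spans no cone of the fan, but every proper subset does. -/
def PrimitiveSet {r : ℕ} (K : Set (Finset (Fin r))) (s : Finset (Fin r)) : Prop :=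
  s ∉ K ∧ ∀ t ⊂ s, t ∈ K

/-- `r_min`: the minimal cardinality of a primitive set. -/
def rmin {r : ℕ} (K : Set (Finset (Fin r))) : ℕ :=
  sInf {m | ∃ s : Finset (Fin r), PrimitiveSet K s ∧ s.card = m}

/-- `d_min = min {d_1, …, d_r}`. -/
def dmin {r : ℕ} (D : Fin r → ℕ) : ℕ := sInf (Set.range D)

/-- The stability dimension `d(D,Σ) = 2(r_min − 1) d_min − 2`. -/
def dBound {r : ℕ} (K : Set (Finset (Fin r))) (D : Fin r → ℕ) : ℤ :=
  2 * ((rmin K : ℤ) - 1) * (dmin D : ℤ) - 2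

/-- The connectivity bound `C_D(Σ) = 2(r_min − 1) d_min − 1`. -/
def CBound {r : ℕ} (K : Set (Finset (Fin r))) (D : Fin r → ℕ) : ℤ :=
  2 * ((rmin K : ℤ) - 1) * (dmin D : ℤ) - 1

/-! ### Coordinate subspaces, `U(K)`, `G_Σ` and the toric quotient -/

/-- The coordinate subspace `L_σ ⊆ ℂ^r`. -/
def LSub {r : ℕ} (σ : Finset (Fin r)) : Set (Fin r → ℂ) := {x | ∀ i ∈ σ, x i = 0}

/-- The complement `U(K)` of the coordinate subspace arrangement of type `K`. -/
def UK {r : ℕ} (K : Set (Finset (Fin r))) : Set (Fin r → ℂ) :=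
  (⋃ σ ∈ {s : Finset (Fin r) | s ∉ K}, LSub σ)ᶜ

lemma mem_UK {r : ℕ} {K : Set (Finset (Fin r))} {x : Fin r → ℂ} :
    x ∈ UK K ↔ ∀ σ : Finset (Fin r), σ ∉ K → ∃ i ∈ σ, x i ≠ 0 := by
  constructor
  · intro h σ hσ
    by_contra hc
    push_neg at hc
    exact h (Set.mem_biUnion hσ (fun i hi => hc i hi))
  · intro h hx
    rcases Set.mem_iUnion₂.1 hx with ⟨σ, hσ, hxσ⟩
    rcases h σ hσ with ⟨i, hi, hne⟩
    exact hne (hxσ i hi)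

/-- The group `G_Σ` (as a subset of `ℂ^r`). -/
def GSet {n r : ℕ} (N : Fin r → Fin n → ℤ) : Set (Fin r → ℂ) :=
  {μ | (∀ k, μ k ≠ 0) ∧ ∀ m : Fin n → ℤ, ∏ k, μ k ^ (∑ j, N k j * m j) = 1}

/-- The orbit relation of the `G_Σ`-action on `U(K_Σ)`. -/
def toricRel {n r : ℕ} (N : Fin r → Fin n → ℤ) (K : Set (Finset (Fin r)))
    (x y : ↥(UK K)) : Prop :=
  ∃ μ ∈ GSet N, (fun i => μ i * (x : Fin r → ℂ) i) = (y : Fin r → ℂ)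

/-- The toric variety `X_Σ = U(K_Σ)/G_Σ`, as a topological quotient. -/
def XS {n r : ℕ} (N : Fin r → Fin n → ℤ) (K : Set (Finset (Fin r))) : Type :=
  Quot (toricRel N K)

instance {n r : ℕ} (N : Fin r → Fin n → ℤ) (K : Set (Finset (Fin r))) :
    TopologicalSpace (XS N K) :=
  instTopologicalSpaceQuot

/-- The quotient map `q_Σ : U(K_Σ) → X_Σ`. -/
def qmap {n r : ℕ} (N : Fin r → Fin n → ℤ) (K : Set (Finset (Fin r))) :
    ↥(UK K) → XS N K :=
  Quot.mk (toricRel N K)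

/-- `q_Σ` as a continuous map. -/
def qCont {n r : ℕ} (N : Fin r → Fin n → ℤ) (K : Set (Finset (Fin r))) :
    C(↥(UK K), XS N K) :=
  ⟨qmap N K, continuous_quot_mk⟩

lemma coneIdx_empty {n r : ℕ} (N : Fin r → Fin n → ℤ) :
    coneIdx N (∅ : Finset (Fin r)) = ({0} : Set (Fin n → ℝ)) := by
  ext x
  constructor
  · rintro ⟨lam, -, hx⟩
    simpa using hx
  · intro hx
    exact ⟨0, fun i => le_refl 0, by simpa using hx⟩

lemma empty_mem_KC {n r : ℕ} (F : Fan n) (N : Fin r → Fin n → ℤ) :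
    (∅ : Finset (Fin r)) ∈ KC F N := by
  show coneIdx N ∅ ∈ F.cones
  rw [coneIdx_empty]
  exact F.zero_mem

/-- The point `(1,…,1)`. -/
def onesC {r : ℕ} : Fin r → ℂ := fun _ => 1

lemma ones_mem_UK {r : ℕ} {K : Set (Finset (Fin r))} (h : (∅ : Finset (Fin r)) ∈ K) :
    (onesC : Fin r → ℂ) ∈ UK K := by
  rw [mem_UK]
  intro σ hσ
  rcases Finset.nonempty_iff_ne_empty.2 (fun he : σ = ∅ => hσ (by rw [he]; exact h)) with ⟨i, hi⟩
  exact ⟨i, hi, one_ne_zero⟩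

/-- The base point `(1,…,1)` of `U(K_Σ)`. -/
def onesUK {r : ℕ} {K : Set (Finset (Fin r))} (h : (∅ : Finset (Fin r)) ∈ K) : ↥(UK K) :=
  ⟨onesC, ones_mem_UK h⟩

/-- The base point `[1,…,1]` of `X_Σ`. -/
def baseX {n r : ℕ} (N : Fin r → Fin n → ℤ) (K : Set (Finset (Fin r)))
    (h : (∅ : Finset (Fin r)) ∈ K) : XS N K :=
  qmap N K (onesUK h)



/-! ### Spaces of tuples of monic polynomials -/

/-- The monic polynomial `z^d + a_{d-1} z^{d-1} + ⋯ + a_0` with coefficient data `a`. -/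
def toPoly {d : ℕ} (a : Fin d → ℂ) : Polynomial ℂ :=
  Polynomial.X ^ d + ∑ i : Fin d, Polynomial.C (a i) * Polynomial.X ^ (i : ℕ)

/-- The space `Pol*_D(S¹, X_Σ)` of `r`-tuples of monic polynomials of multidegree `D`
(in coefficient coordinates) such that for every `σ ∉ K` the polynomials `{f_i : i ∈ σ}`
have no common real root. -/
def PolSp {r : ℕ} (K : Set (Finset (Fin r))) (D : Fin r → ℕ) :
    Set (∀ k : Fin r, Fin (D k) → ℂ) :=
  {f | ∀ σ : Finset (Fin r), σ ∉ K → ∀ t : ℝ,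
        ∃ k ∈ σ, (toPoly (f k)).eval (t : ℂ) ≠ 0}

lemma polEval_mem_UK {r : ℕ} {K : Set (Finset (Fin r))} {D : Fin r → ℕ}
    (f : ↥(PolSp K D)) (t : ℝ) :
    (fun k => (toPoly (f.1 k)).eval (t : ℂ)) ∈ UK K :=
  mem_UK.2 fun σ hσ => f.2 σ hσ t

/-! ### Loop spaces and induced maps on homotopy groups -/

/-- The loop space `Ω X = Map*(S¹, X)` with `S¹ = ℝ ∪ {∞}` (the one-point
compactification of `ℝ`), based at `x₀`. -/
def Loop (X : Type*) [TopologicalSpace X] (x₀ : X) : Type _ :=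
  {γ : C(OnePoint ℝ, X) // γ OnePoint.infty = x₀}

instance {X : Type*} [TopologicalSpace X] (x₀ : X) : TopologicalSpace (Loop X x₀) :=
  instTopologicalSpaceSubtype

/-- The constant loop, base point of `Ω X`. -/
def Loop.const {X : Type*} [TopologicalSpace X] (x₀ : X) : Loop X x₀ :=
  ⟨ContinuousMap.const _ x₀, rfl⟩

/-- A based continuous map induces a continuous map of loop spaces. -/
def loopMap {X Y : Type*} [TopologicalSpace X] [TopologicalSpace Y] {x₀ : X} {y₀ : Y}
    (f : C(X, Y)) (hf : f x₀ = y₀) : C(Loop X x₀, Loop Y y₀) where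
  toFun γ := ⟨f.comp γ.1, by simp [γ.2, hf]⟩
  continuous_toFun := by
    apply Continuous.subtype_mk
    exact (ContinuousMap.continuous_postcomp f).comp continuous_subtype_val

/-- The map induced by a continuous map on homotopy groups (`π_q`). -/
def piMap (q : ℕ) {X Y : Type*} [TopologicalSpace X] [TopologicalSpace Y]
    (f : C(X, Y)) (x : X) :
    HomotopyGroup (Fin q) X x → HomotopyGroup (Fin q) Y (f x) :=
  Quotient.map
    (fun p => ⟨f.comp p.1, fun y hy => by
      show f (p.1 y) = f x
      rw [p.2 y hy]⟩)
    (fun p₁ p₂ h => h.elim fun H => ⟨H.compContinuousMap f⟩)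

/-- `f` is a homotopy equivalence through dimension `d`: it induces isomorphisms on
`π_k` for all `k ≤ d` (at every base point). -/
def HomotopyEquivThrough {X Y : Type*} [TopologicalSpace X] [TopologicalSpace Y]
    (f : C(X, Y)) (d : ℤ) : Prop :=
  ∀ (x : X) (k : ℕ), (k : ℤ) ≤ d → Function.Bijective (piMap k f x)

/-- A genuine homotopy equivalence. -/
def IsHtpyEquiv {X Y : Type*} [TopologicalSpace X] [TopologicalSpace Y]
    (f : C(X, Y)) : Prop :=
  ∃ g : C(Y, X), (f.comp g).Homotopic (ContinuousMap.id Y) ∧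
    (g.comp f).Homotopic (ContinuousMap.id X)

/-! ### `i_D`, lifts, and stabilization maps -/

/-- `j : Pol*_D → Ω U(K_Σ)` is a lift of `i_D` through `Ω q_Σ`, i.e. `Ω q_Σ ∘ j = i_D`:
for every tuple `f` and real `t`, the loop `j f` at time `t` lies over the point
`[f_1(t), …, f_r(t)]` of `X_Σ` (and at `∞` over `[1,…,1]`, automatically). -/
def IsLiftOfID {n r : ℕ} (N : Fin r → Fin n → ℤ) (K : Set (Finset (Fin r)))
    (hE : (∅ : Finset (Fin r)) ∈ K) (D : Fin r → ℕ)
    (j : ↥(PolSp K D) → Loop ↥(UK K) (onesUK hE)) : Prop :=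
  ∀ (f : ↥(PolSp K D)) (t : ℝ),
    qmap N K ((j f).1 (t : OnePoint ℝ)) =
      qmap N K ⟨fun k => (toPoly (f.1 k)).eval (t : ℂ), polEval_mem_UK f t⟩

/-- `i : Pol*_D → Ω X_Σ` is the map `i_D` given by evaluation. -/
def IsID {n r : ℕ} (N : Fin r → Fin n → ℤ) (K : Set (Finset (Fin r)))
    (hE : (∅ : Finset (Fin r)) ∈ K) (D : Fin r → ℕ)
    (i : ↥(PolSp K D) → Loop (XS N K) (baseX N K hE)) : Prop :=
  ∀ (f : ↥(PolSp K D)) (t : ℝ),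
    (i f).1 (t : OnePoint ℝ) =
      qmap N K ⟨fun k => (toPoly (f.1 k)).eval (t : ℂ), polEval_mem_UK f t⟩

/-- `φ` is an admissible parameter for the stabilization maps: a homeomorphism of `ℂ`
onto the half plane `{Re < bound}` carrying `ℝ` onto `(-∞, bound)`. -/
def AdmissiblePhi (bound : ℝ) (φ : ℂ → ℂ) : Prop :=
  Continuous φ ∧ Function.Injective φ ∧ IsOpenMap φ ∧
    Set.range φ = {w : ℂ | w.re < bound} ∧
    φ '' {z : ℂ | z.im = 0} = {z : ℂ | z.im = 0 ∧ z.re < bound}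

/-- The defining property of the stabilization map
`s_{D,D'}(f)_k = φ(f_k) · (z - x_k)^{d'_k - d_k}`, where `φ(f)` denotes the monic
polynomial whose roots are the images under `φ` of the roots of `f`. -/
def StabSpec {r : ℕ} (K : Set (Finset (Fin r))) (φ : ℂ → ℂ) (xpt : Fin r → ℂ)
    (D D' : Fin r → ℕ) (s : ↥(PolSp K D) → ↥(PolSp K D')) : Prop :=
  ∀ (f : ↥(PolSp K D)) (k : Fin r),
    toPoly ((s f).1 k) =
      (((toPoly (f.1 k)).roots.map φ).map
        fun α => Polynomial.X - Polynomial.C α).prod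
        * (Polynomial.X - Polynomial.C (xpt k)) ^ (D' k - D k)

/-- The general defining property of the map `j_D : Pol*_D → Ω U(K_Σ)`:
when `∑ d_k n_k = 0` it is a lift of `i_D` through `Ω q_Σ`, and otherwise it is the
composite `j_{D₀} ∘ s_{D,D₀}` for a suitable `D₀ = m₀ D*` as in condition (2.9.1). -/
def IsJD {n r : ℕ} (N : Fin r → Fin n → ℤ) (K : Set (Finset (Fin r)))
    (hE : (∅ : Finset (Fin r)) ∈ K) (D : Fin r → ℕ)
    (j : C(↥(PolSp K D), Loop ↥(UK K) (onesUK hE))) : Prop :=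
  ((∑ k, (D k : ℤ) • N k = 0) ∧ IsLiftOfID N K hE D j) ∨
  ((∑ k, (D k : ℤ) • N k ≠ 0) ∧
    ∃ (dstar : Fin r → ℕ) (m₀ : ℕ),
      (∀ k, 0 < dstar k) ∧ (∑ k, (dstar k : ℤ) • N k = 0) ∧
      (∀ k, D k < m₀ * dstar k) ∧
      ∃ (φ : ℂ → ℂ) (xpt : Fin r → ℂ),
        AdmissiblePhi ((∑ k, D k : ℕ) : ℝ) φ ∧
        (∀ k, ((∑ k, D k : ℕ) : ℝ) < (xpt k).re) ∧ Function.Injective xpt ∧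
        ∃ (j₀ : C(↥(PolSp K fun k => m₀ * dstar k), Loop ↥(UK K) (onesUK hE)))
          (s₀ : C(↥(PolSp K D), ↥(PolSp K fun k => m₀ * dstar k))),
          IsLiftOfID N K hE _ j₀ ∧ StabSpec K φ xpt D _ s₀ ∧ j = j₀.comp s₀)

/-! ### Stabilized (colimit) spaces -/

/-- The multidegree `D + t·e`. -/
def Dt {r : ℕ} (D : Fin r → ℕ) (t : ℕ) : Fin r → ℕ := fun k => D k + t

/-- Carrier of the stabilized space: the disjoint union of the `Pol*_{D+te}`. -/
def ColCar {r : ℕ} (K : Set (Finset (Fin r))) (D : Fin r → ℕ) : Type :=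
  Σ t : ℕ, ↥(PolSp K (Dt D t))

instance {r : ℕ} (K : Set (Finset (Fin r))) (D : Fin r → ℕ) :
    TopologicalSpace (ColCar K D) := by
  unfold ColCar; infer_instance

/-- The identifications generating the colimit along the stabilization maps. -/
def ColRel {r : ℕ} (K : Set (Finset (Fin r))) (D : Fin r → ℕ)
    (s : ∀ t : ℕ, ↥(PolSp K (Dt D t)) → ↥(PolSp K (Dt D (t + 1)))) :
    ColCar K D → ColCar K D → Prop :=
  fun a b => b = ⟨a.1 + 1, s a.1 a.2⟩

/-- The stabilized space `Pol^Σ_{D+∞} = colim_t Pol*_{D+te}(S¹, X_Σ)`. -/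
def PolColim {r : ℕ} (K : Set (Finset (Fin r))) (D : Fin r → ℕ)
    (s : ∀ t : ℕ, ↥(PolSp K (Dt D t)) → ↥(PolSp K (Dt D (t + 1)))) : Type :=
  Quot (ColRel K D s)

instance {r : ℕ} (K : Set (Finset (Fin r))) (D : Fin r → ℕ)
    (s : ∀ t : ℕ, ↥(PolSp K (Dt D t)) → ↥(PolSp K (Dt D (t + 1)))) :
    TopologicalSpace (PolColim K D s) :=
  instTopologicalSpaceQuot

/-- Admissibility of a family of stabilization maps `s_{D+te}`. -/
def AdmissibleStabFamily {r : ℕ} (K : Set (Finset (Fin r))) (D : Fin r → ℕ)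
    (s : ∀ t : ℕ, ↥(PolSp K (Dt D t)) → ↥(PolSp K (Dt D (t + 1)))) : Prop :=
  ∀ t : ℕ, ∃ (φ : ℂ → ℂ) (xpt : Fin r → ℂ),
    AdmissiblePhi ((∑ k, Dt D t k : ℕ) : ℝ) φ ∧
    (∀ k, ((∑ k, Dt D t k : ℕ) : ℝ) < (xpt k).re) ∧ Function.Injective xpt ∧
    StabSpec K φ xpt (Dt D t) (Dt D (t + 1)) (s t)

/-!
A family of loops in `U(K)` over a compact `X ⊆ E` with `dim E + 1 ≤ 2 (r_min - 1) d_min` is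
deformed to polynomials one coordinate at a time. Approximate the family by a `C¹` one and perturb
it generically. Then at every parameter there is a monic `p` of degree `d_i` with
`0 < Re (p g conj q_i)` at all times at which the coordinate `q_i` must not vanish, for a fixed
nonvanishing weight `g` making `p g` continuous at `∞`: otherwise Carathéodory's theorem gives a
positive linear relation between few points of the moment curve, which a parameter count as in
Sard's theorem excludes generically. The admissible `p` form a convex set, defined by an open
condition, so a partition of unity selects them continuously, and a straight-line homotopy replaces
`q_i` by `p g`, relative to a closed set on which `q_i` is of this form already. This relative
compression property says that the map from polynomials to loops induces bijections on `π_k`.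

The quotient map `q_Σ` is principal, so a lift of `i_D` is `f ↦ f g` up to nonvanishing factors
which depend on `f`. The polynomial space is connected, so these factors are homotopic to fixed
powers of the Cayley transform and can be absorbed in the weights. Stabilization only changes the
weights as well, once `φ_D` is deformed to a real-linear map of `ℂ` and the added roots are off
the real line.
-/

/-! ### Parametric transversality -/

section Transversality

open scoped Topology

variable {Y V Z : Type*} [NormedAddCommGroup V] [NormedSpace ℝ V]
  [NormedAddCommGroup Z] [NormedSpace ℝ Z]
  {A : Y → V →L[ℝ] Z} {b : Y → Z}

/-- A parametrisation of the solution set of `A y u + b y = 0`, given a linear section `s` of some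
`A y₀`: a solution `u` is recovered from `y` and the component of `u` in `ker (A y₀)`. -/
def zeroParam (A : Y → V →L[ℝ] Z) (b : Y → Z) (s : Z →L[ℝ] V) (p : Y × V) : V :=
  p.2 - s (Ring.inverse (A p.1 ∘L s) (A p.1 p.2 + b p.1))

lemma zeroParam_sub_apply {s : Z →L[ℝ] V} {y : Y} {u : V} (hs : IsUnit (A y ∘L s))
    (hu : A y u + b y = 0) (z : Z) : zeroParam A b s (y, u - s z) = u := by
  have hres : A y (u - s z) + b y = -(A y ∘L s) z := by
    rw [map_sub, sub_add_eq_add_sub, hu, zero_sub, ContinuousLinearMap.comp_apply]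
  have hinv : Ring.inverse (A y ∘L s) ((A y ∘L s) z) = z :=
    DFunLike.congr_fun (Ring.inverse_mul_cancel _ hs) z
  rw [zeroParam, hres, map_neg, hinv, map_neg, sub_neg_eq_add, sub_add_cancel]

variable [NormedAddCommGroup Y] [NormedSpace ℝ Y]

lemma contDiffAt_zeroParam [CompleteSpace Z] (hA : ContDiff ℝ 1 A) (hb : ContDiff ℝ 1 b)
    {s : Z →L[ℝ] V} {p : Y × V} (hs : IsUnit (A p.1 ∘L s)) :
    ContDiffAt ℝ 1 (zeroParam A b s) p := by
  have hAp : ContDiffAt ℝ 1 (fun p : Y × V => A p.1) p := (hA.comp contDiff_fst).contDiffAt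
  have hbp : ContDiffAt ℝ 1 (fun p : Y × V => b p.1) p := (hb.comp contDiff_fst).contDiffAt
  have hinv : ContDiffAt ℝ 1 (fun p : Y × V => Ring.inverse (A p.1 ∘L s)) p := by
    obtain ⟨unit, hunit⟩ := hs
    have hinverse := contDiffAt_ringInverse ℝ (n := 1) unit
    rw [hunit] at hinverse
    exact hinverse.comp p (hAp.clm_comp contDiffAt_const)
  exact contDiffAt_snd.sub
    (contDiffAt_const.clm_apply (hinv.clm_apply ((hAp.clm_apply contDiffAt_snd).add hbp)))

variable [FiniteDimensional ℝ Y] [FiniteDimensional ℝ V] [FiniteDimensional ℝ Z]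

lemma dimH_image_zeroParam_le (hA : ContDiff ℝ 1 A) (hb : ContDiff ℝ 1 b) {s : Z →L[ℝ] V}
    (W : Set Y) (hs : ∀ y ∈ W, IsUnit (A y ∘L s)) (K : Submodule ℝ V) :
    dimH (zeroParam A b s '' (W ×ˢ (K : Set V))) ≤
      (Module.finrank ℝ Y + Module.finrank ℝ K : ℕ) := by
  have : CompleteSpace Z := FiniteDimensional.complete ℝ Z
  let incl : Y × K → Y × V := Prod.map id K.subtypeL
  have hincl : ContDiff ℝ 1 incl := contDiff_id.prodMap K.subtypeL.contDiff
  have himage : zeroParam A b s '' (W ×ˢ (K : Set V)) =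
      (zeroParam A b s ∘ incl) '' (W ×ˢ Set.univ) := by
    rw [Set.image_comp, Set.prodMap_image_prod, Set.image_id]
    simp
  rw [himage]
  calc dimH ((zeroParam A b s ∘ incl) '' (W ×ˢ Set.univ))
      ≤ dimH (W ×ˢ (Set.univ : Set K)) := dimH_image_le_of_locally_lipschitzOn fun p hp => by
        obtain ⟨C, t, ht, hC⟩ := ((contDiffAt_zeroParam hA hb (p := incl p) (hs _ hp.1)).comp p
          hincl.contDiffAt).exists_lipschitzOnWith
        exact ⟨C, t, mem_nhdsWithin_of_mem_nhds ht, hC⟩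
    _ ≤ dimH (Set.univ : Set (Y × K)) := dimH_mono (Set.subset_univ _)
    _ = (Module.finrank ℝ Y + Module.finrank ℝ K : ℕ) := by
      rw [Real.dimH_univ_eq_finrank, Module.finrank_prod]

lemma exists_mem_nhds_dimH_zeros_le (hA : ContDiff ℝ 1 A) (hb : ContDiff ℝ 1 b) {y₀ : Y}
    (hy₀ : Function.Surjective (A y₀)) :
    ∃ W ∈ 𝓝 y₀, dimH {u : V | ∃ y ∈ W, A y u + b y = 0} ≤
      (Module.finrank ℝ Y + Module.finrank ℝ V - Module.finrank ℝ Z : ℕ) := by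
  have : CompleteSpace Z := FiniteDimensional.complete ℝ Z
  have hrange : LinearMap.range (A y₀ : V →ₗ[ℝ] Z) = ⊤ := LinearMap.range_eq_top.2 hy₀
  obtain ⟨section₀, hsection₀⟩ := (A y₀ : V →ₗ[ℝ] Z).exists_rightInverse_of_surjective hrange
  let s : Z →L[ℝ] V := LinearMap.toContinuousLinearMap section₀
  have hs : ∀ z, A y₀ (s z) = z := LinearMap.congr_fun hsection₀
  let W : Set Y := {y | IsUnit (A y ∘L s)}
  let K := LinearMap.ker (A y₀ : V →ₗ[ℝ] Z)
  have hW : W ∈ 𝓝 y₀ := by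
    have hcont : Continuous fun y => A y ∘L s := (hA.clm_comp contDiff_const).continuous
    refine (Units.isOpen.preimage hcont).mem_nhds ?_
    have hone : A y₀ ∘L s = 1 := ContinuousLinearMap.ext hs
    simp [hone]
  have hsub : {u : V | ∃ y ∈ W, A y u + b y = 0} ⊆ zeroParam A b s '' (W ×ˢ (K : Set V)) := by
    rintro u ⟨y, hy, hu⟩
    refine ⟨(y, u - s (A y₀ u)), ⟨hy, ?_⟩, zeroParam_sub_apply hy hu _⟩
    simp [K, hs]
  have hker : Module.finrank ℝ Z + Module.finrank ℝ K = Module.finrank ℝ V := by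
    rw [← LinearMap.finrank_range_add_finrank_ker (A y₀ : V →ₗ[ℝ] Z), hrange, finrank_top]
  have hdim : Module.finrank ℝ Y + Module.finrank ℝ V - Module.finrank ℝ Z =
      Module.finrank ℝ Y + Module.finrank ℝ K := by omega
  exact ⟨W, hW, hdim ▸ (dimH_mono hsub).trans (dimH_image_zeroParam_le hA hb W (fun _ h => h) K)⟩

lemma dimH_zeros_le (hA : ContDiff ℝ 1 A) (hb : ContDiff ℝ 1 b) :
    dimH {u : V | ∃ y, Function.Surjective (A y) ∧ A y u + b y = 0} ≤
      (Module.finrank ℝ Y + Module.finrank ℝ V - Module.finrank ℝ Z : ℕ) := by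
  have : ProperSpace Y := FiniteDimensional.proper ℝ Y
  choose! W hW hdim using fun y₀ (hy₀ : Function.Surjective (A y₀)) =>
    exists_mem_nhds_dimH_zeros_le hA hb hy₀
  obtain ⟨t, hsurj, hcount, hcover⟩ := TopologicalSpace.countable_cover_nhdsWithin
    (s := {y | Function.Surjective (A y)}) fun y hy => mem_nhdsWithin_of_mem_nhds (hW y hy)
  have hsub : {u : V | ∃ y, Function.Surjective (A y) ∧ A y u + b y = 0} ⊆
      ⋃ y₀ ∈ t, {u : V | ∃ y ∈ W y₀, A y u + b y = 0} := by
    rintro u ⟨y, hy, hu⟩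
    obtain ⟨y₀, hy₀, hyW⟩ := Set.mem_iUnion₂.1 (hcover hy)
    exact Set.mem_iUnion₂.2 ⟨y₀, hy₀, y, hyW, hu⟩
  refine (dimH_mono hsub).trans ?_
  rw [dimH_bUnion hcount]
  exact iSup₂_le fun y₀ hy₀ => hdim y₀ (hsurj hy₀)

lemma dense_setOf_forall_surjective_ne {ι : Type*} [Countable ι] {Y Z : ι → Type*}
    [∀ i, NormedAddCommGroup (Y i)] [∀ i, NormedSpace ℝ (Y i)]
    [∀ i, FiniteDimensional ℝ (Y i)]
    [∀ i, NormedAddCommGroup (Z i)] [∀ i, NormedSpace ℝ (Z i)]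
    [∀ i, FiniteDimensional ℝ (Z i)]
    {A : ∀ i, Y i → V →L[ℝ] Z i} {b : ∀ i, Y i → Z i}
    (hA : ∀ i, ContDiff ℝ 1 (A i)) (hb : ∀ i, ContDiff ℝ 1 (b i))
    (hdim : ∀ i, Module.finrank ℝ (Y i) < Module.finrank ℝ (Z i)) :
    Dense {u : V | ∀ i y, Function.Surjective (A i y) → A i y u + b i y ≠ 0} := by
  rcases Nat.eq_zero_or_pos (Module.finrank ℝ V) with hV | hV
  · have hnot : ∀ i y, ¬Function.Surjective (A i y) := fun i y hsurj => by
      have := LinearMap.finrank_le_finrank_of_surjective (f := (A i y : V →ₗ[ℝ] Z i)) hsurj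
      have := hdim i
      omega
    simp [hnot]
  let S : ι → Set V := fun i => {u | ∃ y, Function.Surjective (A i y) ∧ A i y u + b i y = 0}
  have hS : dimH (⋃ i, S i) < Module.finrank ℝ V := by
    rw [dimH_iUnion]
    have hle : ⨆ i, dimH (S i) ≤ (Module.finrank ℝ V - 1 : ℕ) :=
      iSup_le fun i => (dimH_zeros_le (hA i) (hb i)).trans <| by
        have := hdim i
        exact_mod_cast (by omega)
    exact hle.trans_lt (by exact_mod_cast (by omega))
  convert dense_compl_of_dimH_lt_finrank hS using 1
  ext u
  simp [S]

end Transversality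

/-! ### Convex hulls of compact sets -/

section ConvexHull

variable {E : Type*} [NormedAddCommGroup E] [NormedSpace ℝ E] [FiniteDimensional ℝ E]

lemma exists_fin_injective_of_mem_convexHull {s : Set E} {x : E} (hx : x ∈ convexHull ℝ s) :
    ∃ m ≤ Module.finrank ℝ E + 1, ∃ (z : Fin m → E) (w : Fin m → ℝ), (∀ i, z i ∈ s) ∧
      Function.Injective z ∧ (∀ i, 0 < w i) ∧ ∑ i, w i = 1 ∧ ∑ i, w i • z i = x := by
  obtain ⟨ι, _, z, w, hz, haff, hw, hw_sum, hx_sum⟩ := eq_pos_convex_span_of_mem_convexHull hx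
  let e : Fin (Fintype.card ι) ≃ ι := (Fintype.equivFin ι).symm
  refine ⟨Fintype.card ι, ?_, z ∘ e, w ∘ e, fun i => hz ⟨_, rfl⟩,
    haff.injective.comp e.injective, fun i => hw _, ?_, ?_⟩
  · exact haff.card_le_finrank_succ.trans (Nat.succ_le_succ (Submodule.finrank_le _))
  · exact (e.sum_comp w).trans hw_sum
  · exact (e.sum_comp fun i => w i • z i).trans hx_sum

lemma convexHull_eq_biUnion_image_stdSimplex (s : Set E) :
    convexHull ℝ s = ⋃ m ∈ Set.Iic (Module.finrank ℝ E + 1),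
      (fun p : (Fin m → ℝ) × (Fin m → E) => ∑ i, p.1 i • p.2 i) ''
        (stdSimplex ℝ (Fin m) ×ˢ Set.univ.pi fun _ => s) := by
  apply Set.Subset.antisymm
  · intro x hx
    obtain ⟨m, hm, z, w, hz, -, hw, hw_sum, rfl⟩ := exists_fin_injective_of_mem_convexHull hx
    exact Set.mem_biUnion hm ⟨(w, z), ⟨⟨fun i => (hw i).le, hw_sum⟩, fun i _ => hz i⟩, rfl⟩
  · refine Set.iUnion₂_subset fun m _ => ?_
    rintro _ ⟨⟨w, z⟩, ⟨hw, hz⟩, rfl⟩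
    exact (convex_convexHull ℝ s).sum_mem (fun i _ => hw.1 i) hw.2
      fun i _ => subset_convexHull ℝ s (hz i trivial)

lemma isCompact_convexHull {s : Set E} (hs : IsCompact s) : IsCompact (convexHull ℝ s) := by
  rw [convexHull_eq_biUnion_image_stdSimplex]
  exact (Set.finite_Iic _).isCompact_biUnion fun m _ =>
    ((isCompact_stdSimplex ℝ (Fin m)).prod (isCompact_univ_pi fun _ => hs)).image (by fun_prop)

/-- A version of Gordan's alternative. -/
lemma exists_le_re_or_exists_sum_smul_eq_zero [NormedSpace ℂ E] [IsScalarTower ℝ ℂ E]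
    {T : Type*} [TopologicalSpace T] {v : T → E} {W : Set T} (hW : IsCompact W)
    (hv : ContinuousOn v W) :
    (∃ (f : StrongDual ℂ E) (ε : ℝ), 0 < ε ∧ ∀ t ∈ W, ε ≤ (f (v t)).re) ∨
    ∃ m ≤ Module.finrank ℝ E + 1, ∃ (t : Fin m → T) (ν : Fin m → ℝ), 0 < m ∧
      Function.Injective t ∧ (∀ j, t j ∈ W) ∧ (∀ j, 0 < ν j) ∧ ∑ j, ν j • v (t j) = 0 := by
  by_cases hzero : (0 : E) ∈ convexHull ℝ (v '' W)
  · right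
    obtain ⟨m, hm, z, w, hz, hinj, hw, hw_sum, hsum⟩ :=
      exists_fin_injective_of_mem_convexHull hzero
    choose t ht htz using hz
    obtain rfl : z = v ∘ t := funext fun i => (htz i).symm
    refine ⟨m, hm, t, w, Nat.pos_of_ne_zero ?_, hinj.of_comp, ht, hw, hsum⟩
    rintro rfl
    simp at hw_sum
  · left
    have hclosed : IsClosed (convexHull ℝ (v '' W)) :=
      (isCompact_convexHull (hW.image_of_continuousOn hv)).isClosed
    obtain ⟨f, ε, hε, hf⟩ :=
      RCLike.geometric_hahn_banach_point_closed (𝕜 := ℂ) (convex_convexHull ℝ _) hclosed hzero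
    rw [map_zero] at hε
    exact ⟨f, ε, hε, fun t ht => (hf _ (subset_convexHull ℝ _ ⟨t, ht, rfl⟩)).le⟩

end ConvexHull

/-! ### Functions on the circle `OnePoint ℝ` and their `C¹` approximation -/

section Circle

open scoped Topology

/-- The extension to the circle `OnePoint ℝ` of a function on the line with limit `c` at `∞`. -/
def circleExtension (h : ℝ → ℂ) (c : ℂ) (hc : Continuous h)
    (hlim : Filter.Tendsto h (Filter.cocompact ℝ) (𝓝 c)) : C(OnePoint ℝ, ℂ) :=
  OnePoint.continuousMapMk ⟨h, hc⟩ c (by rwa [Filter.coclosedCompact_eq_cocompact])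

@[simp] lemma circleExtension_coe (h : ℝ → ℂ) (c : ℂ) (hc hlim) (t : ℝ) :
    circleExtension h c hc hlim (t : OnePoint ℝ) = h t := rfl

@[simp] lemma circleExtension_infty (h : ℝ → ℂ) (c : ℂ) (hc hlim) :
    circleExtension h c hc hlim OnePoint.infty = c := rfl

lemma ofReal_add_I_ne_zero (t : ℝ) : (t : ℂ) + Complex.I ≠ 0 := fun h => by
  simpa using congrArg Complex.im h

lemma contDiff_inv_ofReal_add_I : ContDiff ℝ 1 fun t : ℝ => ((t : ℂ) + Complex.I)⁻¹ :=
  (Complex.ofRealCLM.contDiff.add contDiff_const).inv ofReal_add_I_ne_zero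

lemma tendsto_inv_ofReal_add_I :
    Filter.Tendsto (fun t : ℝ => ((t : ℂ) + Complex.I)⁻¹) (Filter.cocompact ℝ) (𝓝 0) := by
  refine Filter.tendsto_inv₀_cobounded.comp (tendsto_norm_atTop_iff_cobounded.1 ?_)
  refine Filter.tendsto_atTop_mono (fun t : ℝ => ?_) (tendsto_norm_cocompact_atTop (E := ℝ))
  simpa using Complex.abs_re_le_norm ((t : ℂ) + Complex.I)

/-- The function `t ↦ (t + i)⁻¹` on the circle, an embedding of `OnePoint ℝ` into `ℂ`. -/
def circleCoord : C(OnePoint ℝ, ℂ) :=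
  circleExtension _ 0 contDiff_inv_ofReal_add_I.continuous tendsto_inv_ofReal_add_I

lemma circleCoord_coe (t : ℝ) : circleCoord (t : OnePoint ℝ) = ((t : ℂ) + Complex.I)⁻¹ := rfl

lemma circleCoord_infty : circleCoord OnePoint.infty = 0 := rfl

lemma circleCoord_injective : Function.Injective circleCoord := by
  intro a b h
  induction a using OnePoint.rec with
  | infty =>
    induction b using OnePoint.rec with
    | infty => rfl
    | coe b => exact absurd h.symm (inv_ne_zero (ofReal_add_I_ne_zero b))
  | coe a =>
    induction b using OnePoint.rec with
    | infty => exact absurd h (inv_ne_zero (ofReal_add_I_ne_zero a))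
    | coe b =>
      rw [circleCoord_coe, circleCoord_coe, inv_inj, add_left_inj, Complex.ofReal_inj] at h
      rw [h]

variable {X E : Type*} [TopologicalSpace X] [NormedAddCommGroup E] [NormedSpace ℝ E]

/-- The star subalgebra of the functions on `X × OnePoint ℝ` which, on `X × ℝ` and on
`X × {∞}`, are pulled back along `ι : X → E` from `C¹` functions on `E × ℝ` and on `E`. -/
def c1Functions (ι : X → E) : StarSubalgebra ℂ C(X × OnePoint ℝ, ℂ) where
  carrier := {f | ∃ (G : E × ℝ → ℂ) (G' : E → ℂ), ContDiff ℝ 1 G ∧ ContDiff ℝ 1 G' ∧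
    (∀ x (t : ℝ), f (x, (t : OnePoint ℝ)) = G (ι x, t)) ∧
    ∀ x, f (x, OnePoint.infty) = G' (ι x)}
  mul_mem' := by
    rintro f g ⟨G, G', hG, hG', hf, hf'⟩ ⟨H, H', hH, hH', hg, hg'⟩
    exact ⟨G * H, G' * H', hG.mul hH, hG'.mul hH',
      fun x t => by simp [hf, hg], fun x => by simp [hf', hg']⟩
  add_mem' := by
    rintro f g ⟨G, G', hG, hG', hf, hf'⟩ ⟨H, H', hH, hH', hg, hg'⟩
    exact ⟨G + H, G' + H', hG.add hH, hG'.add hH',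
      fun x t => by simp [hf, hg], fun x => by simp [hf', hg']⟩
  algebraMap_mem' c := ⟨fun _ => c, fun _ => c, contDiff_const, contDiff_const,
    fun _ _ => rfl, fun _ => rfl⟩
  star_mem' := by
    rintro f ⟨G, G', hG, hG', hf, hf'⟩
    exact ⟨star ∘ G, star ∘ G', Complex.conjCLE.contDiff.comp hG,
      Complex.conjCLE.contDiff.comp hG', fun x t => by simp [hf], fun x => by simp [hf']⟩

lemma separatesPoints_c1Functions {ι : X → E} (hι : Continuous ι)
    (hinj : Function.Injective ι) : (c1Functions ι).SeparatesPoints := by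
  rintro ⟨x, s⟩ ⟨y, t⟩ hne
  by_cases hst : s = t
  · subst hst
    have hxy : ι x ≠ ι y := fun h => hne (by rw [hinj h])
    obtain ⟨L, hL⟩ := SeparatingDual.exists_separating_of_ne (R := ℝ) hxy
    have hLc : ContDiff ℝ 1 fun e => (L e : ℂ) := Complex.ofRealCLM.contDiff.comp L.contDiff
    exact ⟨_, ⟨⟨fun p => (L (ι p.1) : ℂ), by fun_prop⟩, ⟨fun p => (L p.1 : ℂ),
      fun e => (L e : ℂ), hLc.comp contDiff_fst, hLc, fun _ _ => rfl, fun _ => rfl⟩, rfl⟩,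
      fun h => hL (Complex.ofReal_injective h)⟩
  · exact ⟨_, ⟨⟨fun p => circleCoord p.2, by fun_prop⟩, ⟨fun p => ((p.2 : ℂ) + Complex.I)⁻¹,
      fun _ => 0, contDiff_inv_ofReal_add_I.comp contDiff_snd, contDiff_const,
      fun _ _ => rfl, fun _ => rfl⟩, rfl⟩, fun h => hst (circleCoord_injective h)⟩

variable [CompactSpace X] {ι : X → E} (hι : Continuous ι) (hinj : Function.Injective ι)

include hι hinj

lemma exists_mem_c1Functions_norm_sub_lt (f : C(X × OnePoint ℝ, ℂ)) {ε : ℝ} (hε : 0 < ε) :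
    ∃ g ∈ c1Functions ι, ∀ p, ‖g p - f p‖ < ε := by
  have hdense := ContinuousMap.starSubalgebra_topologicalClosure_eq_top_of_separatesPoints
    (c1Functions ι) (separatesPoints_c1Functions hι hinj)
  have hf : f ∈ closure (c1Functions ι : Set C(X × OnePoint ℝ, ℂ)) := by
    rw [← StarSubalgebra.topologicalClosure_coe, hdense]
    trivial
  obtain ⟨g, hg, hdist⟩ := Metric.mem_closure_iff.1 hf ε hε
  rw [dist_comm, dist_eq_norm] at hdist
  exact ⟨g, hg, fun p => ((g - f).norm_coe_le_norm p).trans_lt hdist⟩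

lemma exists_based_c1_norm_sub_lt (f : C(X × OnePoint ℝ, ℂ))
    (hf : ∀ x, f (x, OnePoint.infty) = 1) {ε : ℝ} (hε : 0 < ε) :
    ∃ (g : C(X × OnePoint ℝ, ℂ)) (G : E × ℝ → ℂ), ContDiff ℝ 1 G ∧
      (∀ x (t : ℝ), g (x, (t : OnePoint ℝ)) = G (ι x, t)) ∧
      (∀ x, g (x, OnePoint.infty) = 1) ∧ ∀ p, ‖g p - f p‖ < ε := by
  obtain ⟨g, ⟨G, G', hG, hG', hg, hg'⟩, hclose⟩ :=
    exists_mem_c1Functions_norm_sub_lt hι hinj f (half_pos hε)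
  refine ⟨⟨fun p => g p - g (p.1, OnePoint.infty) + 1, by fun_prop⟩,
    fun p => G p - G' p.1 + 1, (hG.sub (hG'.comp contDiff_fst)).add contDiff_const,
    fun x t => by simp [hg, hg'], fun x => by simp, fun ⟨x, t⟩ => ?_⟩
  have hinfty := hclose (x, OnePoint.infty)
  rw [hf] at hinfty
  calc ‖g (x, t) - g (x, OnePoint.infty) + 1 - f (x, t)‖
      = ‖(g (x, t) - f (x, t)) - (g (x, OnePoint.infty) - 1)‖ := by congr 1; ring
    _ ≤ ‖g (x, t) - f (x, t)‖ + ‖g (x, OnePoint.infty) - 1‖ := norm_sub_le _ _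
    _ < ε := by linarith [hclose (x, t)]

lemma exists_c1_norm_sub_lt (f : C(X, ℂ)) {ε : ℝ} (hε : 0 < ε) :
    ∃ G : E → ℂ, ContDiff ℝ 1 G ∧ ∀ x, ‖G (ι x) - f x‖ < ε := by
  obtain ⟨g, ⟨-, G', -, hG', -, hg'⟩, hclose⟩ :=
    exists_mem_c1Functions_norm_sub_lt hι hinj (f.comp ContinuousMap.fst) hε
  exact ⟨G', hG', fun x => hg' x ▸ hclose (x, OnePoint.infty)⟩

end Circle

/-! ### Interpolation and moments -/

section Vandermonde

variable {K : Type*} [Field K]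

lemma exists_sum_mul_pow_eq {ι : Type*} {M : ℕ} {t : ι → K} {J : Finset ι}
    (ht : Set.InjOn t J) (hJ : J.card ≤ M) (z : ι → K) :
    ∃ c : Fin M → K, ∀ j ∈ J, ∑ s, c s * t j ^ (s : ℕ) = z j := by
  let p := Lagrange.interpolate J t z
  have hp : p ∈ Polynomial.degreeLT K M := Polynomial.mem_degreeLT.2
    ((Lagrange.degree_interpolate_lt z ht).trans_le (by exact_mod_cast hJ))
  refine ⟨fun s => p.coeff s, fun j hj => ?_⟩
  rw [← Lagrange.eval_interpolate_at_node z ht hj,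
    Polynomial.eval_eq_sum_degreeLTEquiv hp (t j)]
  rfl

lemma det_transpose_vandermonde_ne_zero {d : ℕ} {t : Fin d → K} (ht : Function.Injective t) :
    (Matrix.vandermonde t).transpose.det ≠ 0 := by
  rwa [Matrix.det_transpose, Matrix.det_vandermonde_ne_zero_iff]

lemma exists_sum_pow_mul_eq {n d : ℕ} (hdn : d ≤ n) {t : Fin n → K}
    (ht : Function.Injective t) (w : Fin d → K) :
    ∃ x : Fin n → K, ∀ l : Fin d, ∑ j, t j ^ (l : ℕ) * x j = w l := by
  obtain ⟨m, rfl⟩ := Nat.exists_eq_add_of_le hdn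
  let A := (Matrix.vandermonde (t ∘ Fin.castAdd m)).transpose
  have hA : IsUnit A.det := isUnit_iff_ne_zero.2
    (det_transpose_vandermonde_ne_zero (ht.comp (Fin.castAdd_injective d m)))
  refine ⟨Fin.append (A⁻¹.mulVec w) 0, fun l => ?_⟩
  have hsolve : A.mulVec (A⁻¹.mulVec w) = w := by
    rw [Matrix.mulVec_mulVec, Matrix.mul_nonsing_inv A hA, Matrix.one_mulVec]
  rw [Fin.sum_univ_add, ← congrFun hsolve l]
  simp [A, Matrix.mulVec, dotProduct, Matrix.vandermonde_apply]

lemma eq_zero_of_sum_pow_mul_eq_zero {n d : ℕ} (hnd : n ≤ d) {t : Fin n → K}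
    (ht : Function.Injective t) {x : Fin n → K}
    (hx : ∀ l : Fin d, ∑ j, t j ^ (l : ℕ) * x j = 0) : x = 0 := by
  refine Matrix.eq_zero_of_mulVec_eq_zero (det_transpose_vandermonde_ne_zero ht) ?_
  ext l
  simpa [Matrix.mulVec, dotProduct, Matrix.vandermonde_apply] using hx (Fin.castLE hnd l)

end Vandermonde

/-! ### Generic perturbations -/

section Generic

variable {E : Type*} [NormedAddCommGroup E] [NormedSpace ℝ E] {r : ℕ} {M : Fin r → ℕ}

/-- The polynomial with coefficients `u`, multiplied by the weight `h`. -/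
def weightedPoly {m : ℕ} (h : ℝ → ℂ) (u : Fin m → ℂ) (t : ℝ) : ℂ :=
  (∑ s, u s * (t : ℂ) ^ (s : ℕ)) * h t

lemma contDiff_weightedPoly {m : ℕ} {h : ℝ → ℂ} (hh : ContDiff ℝ 1 h) (u : Fin m → ℂ) :
    ContDiff ℝ 1 (weightedPoly h u) :=
  (ContDiff.sum fun _ _ => contDiff_const.mul (Complex.ofRealCLM.contDiff.pow _)).mul hh

lemma exists_weightedPoly_eq {m n : ℕ} {h : ℝ → ℂ} (hh : ∀ t, h t ≠ 0) {t : Fin n → ℝ}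
    (ht : Function.Injective t) {J : Finset (Fin n)} (hJ : J.card ≤ m) (z : Fin n → ℂ) :
    ∃ u : Fin m → ℂ, ∀ j ∈ J, weightedPoly h u (t j) = z j := by
  obtain ⟨u, hu⟩ := exists_sum_mul_pow_eq (t := fun j => (t j : ℂ)) (J := J)
    (fun _ _ _ _ hab => ht (Complex.ofReal_injective hab)) hJ fun j => z j / h (t j)
  exact ⟨u, fun j hj => by rw [weightedPoly, hu j hj, div_mul_cancel₀ _ (hh _)]⟩

/-- The family of weighted polynomials with weights `h k` as a linear function of their
coefficients. -/
def weightedPolyFamily (h : Fin r → ℝ → ℂ) :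
    (∀ k, Fin (M k) → ℂ) →ₗ[ℝ] Fin r → ℝ → ℂ where
  toFun u k := weightedPoly (h k) (u k)
  map_add' u v := by
    ext k t
    simp [weightedPoly, add_mul, Finset.sum_add_distrib]
  map_smul' c u := by
    ext k t
    simp only [weightedPoly, Pi.smul_apply, Complex.real_smul, RingHom.id_apply, mul_assoc,
      ← Finset.mul_sum]

/-- The values of `P k` at the times `t j` with `k ∈ τ j`, together with the first `d` moments of
`P i`, weighted by `ν` and `conj g`. These vanish when, at the times `t j`, the coordinate `i` may
not vanish and `0` is a positive combination obstructing the choice of a polynomial of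
degree `d`. -/
def obstruction (i : Fin r) (d : ℕ) (g : ℝ → ℂ) {n : ℕ} (τ : Fin n → Finset (Fin r))
    (t ν : Fin n → ℝ) :
    (Fin r → ℝ → ℂ) →ₗ[ℝ] ({p : Fin n × Fin r // p.2 ∈ τ p.1} → ℂ) × (Fin d → ℂ) where
  toFun P := (fun p => P p.1.2 (t p.1.1),
    fun l => ∑ j, (ν j : ℂ) * star (g (t j)) * (t j : ℂ) ^ (l : ℕ) * P i (t j))
  map_add' P Q := by
    ext p <;> simp [mul_add, Finset.sum_add_distrib]
  map_smul' c P := by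
    ext p
    · rfl
    · simp only [Pi.smul_apply, Complex.real_smul, RingHom.id_apply, Prod.smul_mk, Finset.mul_sum]
      exact Finset.sum_congr rfl fun j _ => by ring

lemma obstruction_eq_zero_iff {i : Fin r} {d : ℕ} {g : ℝ → ℂ} {n : ℕ}
    {τ : Fin n → Finset (Fin r)} {t ν : Fin n → ℝ} {P : Fin r → ℝ → ℂ} :
    obstruction i d g τ t ν P = 0 ↔ (∀ j, ∀ k ∈ τ j, P k (t j) = 0) ∧
      ∀ l : Fin d, ∑ j, (ν j : ℂ) * star (g (t j)) * (t j : ℂ) ^ (l : ℕ) * P i (t j) = 0 := by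
  simp [obstruction, Prod.ext_iff, funext_iff]

lemma contDiff_obstruction (i : Fin r) (d : ℕ) {g : ℝ → ℂ} (hg : ContDiff ℝ 1 g) {n : ℕ}
    (τ : Fin n → Finset (Fin r)) {P : Fin r → E × ℝ → ℂ} (hP : ∀ k, ContDiff ℝ 1 (P k)) :
    ContDiff ℝ 1 fun y : E × (Fin n → ℝ) × (Fin n → ℝ) =>
      obstruction i d g τ y.2.1 y.2.2 fun k s => P k (y.1, s) := by
  have hreal : ContDiff ℝ 1 fun x : ℝ => (x : ℂ) := Complex.ofRealCLM.contDiff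
  have hstar : ContDiff ℝ 1 fun t => star (g t) := Complex.conjCLE.contDiff.comp hg
  have ht : ∀ j, ContDiff ℝ 1 fun y : E × (Fin n → ℝ) × (Fin n → ℝ) => y.2.1 j :=
    fun j => by fun_prop
  have hν : ∀ j, ContDiff ℝ 1 fun y : E × (Fin n → ℝ) × (Fin n → ℝ) => y.2.2 j :=
    fun j => by fun_prop
  have hPt : ∀ k j, ContDiff ℝ 1 fun y : E × (Fin n → ℝ) × (Fin n → ℝ) => P k (y.1, y.2.1 j) :=
    fun k j => (hP k).comp (contDiff_fst.prodMk (ht j))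
  exact (contDiff_pi.2 fun p => hPt _ _).prodMk <| contDiff_pi.2 fun l => ContDiff.sum fun j _ =>
    (((hreal.comp (hν j)).mul (hstar.comp (ht j))).mul ((hreal.comp (ht j)).pow _)).mul (hPt i j)

lemma obstruction_weightedPolyFamily_surjective {i : Fin r} {d : ℕ} {h : Fin r → ℝ → ℂ}
    {g : ℝ → ℂ} (hh : ∀ k t, h k t ≠ 0) (hg : ∀ t, g t ≠ 0) {n : ℕ}
    {τ : Fin n → Finset (Fin r)} {t ν : Fin n → ℝ} (ht : Function.Injective t)
    (hν : ∀ j, 0 < ν j) (hi : ∀ j, i ∉ τ j)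
    (hM : ∀ k ≠ i, (Finset.univ.filter fun j => k ∈ τ j).card ≤ M k) (hMi : n ≤ M i)
    (hdn : d ≤ n) :
    Function.Surjective (obstruction i d g τ t ν ∘ₗ weightedPolyFamily (M := M) h) := by
  rintro ⟨z, w⟩
  obtain ⟨x, hx⟩ :=
    exists_sum_pow_mul_eq hdn (t := fun j => (t j : ℂ)) (Complex.ofReal_injective.comp ht) w
  have hvalues : ∀ k, ∃ u : Fin (M k) → ℂ,
      (∀ j (hj : k ∈ τ j), weightedPoly (h k) u (t j) = z ⟨(j, k), hj⟩) ∧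
      (k = i → ∀ j, weightedPoly (h k) u (t j) = x j / (ν j * star (g (t j)))) := by
    intro k
    by_cases hk : k = i
    · subst hk
      obtain ⟨u, hu⟩ := exists_weightedPoly_eq (hh k) ht (J := Finset.univ)
        (by simpa using hMi) fun j => x j / (ν j * star (g (t j)))
      exact ⟨u, fun j hj => absurd hj (hi j), fun _ j => hu j (Finset.mem_univ j)⟩
    · obtain ⟨u, hu⟩ := exists_weightedPoly_eq (hh k) ht (hM k hk)
        fun j => if hj : k ∈ τ j then z ⟨(j, k), hj⟩ else 0
      exact ⟨u, fun j hj => by rw [hu j (by simpa using hj), dif_pos hj], fun hki => absurd hki hk⟩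
  choose u hu hui using hvalues
  refine ⟨u, Prod.ext (funext fun p => hu _ _ p.2) (funext fun l => ?_)⟩
  change ∑ j, (ν j : ℂ) * star (g (t j)) * (t j : ℂ) ^ (l : ℕ) *
    weightedPoly (h i) (u i) (t j) = w l
  rw [← hx l]
  refine Finset.sum_congr rfl fun j _ => ?_
  have hνj : (ν j : ℂ) ≠ 0 := by exact_mod_cast (hν j).ne'
  have hgj : star (g (t j)) ≠ 0 := star_ne_zero.2 (hg _)
  rw [hui i rfl j]
  field_simp

lemma finrank_incidence_prod_moments (d : ℕ) {n : ℕ} (τ : Fin n → Finset (Fin r)) :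
    Module.finrank ℝ (({p : Fin n × Fin r // p.2 ∈ τ p.1} → ℂ) × (Fin d → ℂ)) =
      2 * ∑ j, (τ j).card + 2 * d := by
  have hcard : Fintype.card {p : Fin n × Fin r // p.2 ∈ τ p.1} = ∑ j, (τ j).card := by
    rw [Fintype.card_subtype, Finset.card_filter, Fintype.sum_prod_type]
    simp
  rw [Module.finrank_prod, Module.finrank_pi_fintype, Module.finrank_pi_fintype]
  simp [hcard, mul_comm]

/-- A solution of the obstruction equations is a zero of a system of `2 n R + 2 d` real equations
in the `dim E + 2 n` unknowns `(e, t, ν)`. -/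
lemma exists_perturbation_obstruction_ne_zero [FiniteDimensional ℝ E] (i : Fin r) {d R : ℕ}
    {F : Fin r → E × ℝ → ℂ} (hF : ∀ k, ContDiff ℝ 1 (F k))
    {h : Fin r → ℝ → ℂ} (hh : ∀ k t, h k t ≠ 0) (hhc : ∀ k, ContDiff ℝ 1 (h k))
    {g : ℝ → ℂ} (hg : ∀ t, g t ≠ 0) (hgc : ContDiff ℝ 1 g)
    (hdim : ∀ n, d ≤ n → Module.finrank ℝ E + 2 * n < 2 * n * R + 2 * d)
    {ε : ℝ} (hε : 0 < ε) :
    ∃ u : ∀ k, Fin (M k) → ℂ, ‖u‖ < ε ∧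
      ∀ (n : ℕ) (e : E) (t ν : Fin n → ℝ) (τ : Fin n → Finset (Fin r)),
        Function.Injective t → (∀ j, 0 < ν j) → d ≤ n → n ≤ M i →
        (∀ j, i ∉ τ j) → (∀ j, R ≤ (τ j).card) →
        (∀ k ≠ i, (Finset.univ.filter fun j => k ∈ τ j).card ≤ M k) →
        obstruction i d g τ t ν (fun k s => F k (e, s) + weightedPoly (h k) (u k) s) ≠ 0 := by
  let I := {p : Σ n : ℕ, Fin n → Finset (Fin r) // d ≤ p.1 ∧ ∀ j, R ≤ (p.2 j).card}
  let A (p : I) (y : E × (Fin p.1.1 → ℝ) × (Fin p.1.1 → ℝ)) :=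
    LinearMap.toContinuousLinearMap
      (obstruction i d g p.1.2 y.2.1 y.2.2 ∘ₗ weightedPolyFamily (M := M) h)
  let b (p : I) (y : E × (Fin p.1.1 → ℝ) × (Fin p.1.1 → ℝ)) :=
    obstruction i d g p.1.2 y.2.1 y.2.2 fun k s => F k (y.1, s)
  have hA : ∀ p, ContDiff ℝ 1 (A p) := fun p => contDiff_clm_apply_iff.2 fun u =>
    contDiff_obstruction (E := E) i d hgc p.1.2 (P := fun k q => weightedPoly (h k) (u k) q.2)
      fun k => (contDiff_weightedPoly (hhc k) _).comp contDiff_snd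
  have hb : ∀ p, ContDiff ℝ 1 (b p) := fun p => contDiff_obstruction i d hgc p.1.2 hF
  have hrank : ∀ p : I, Module.finrank ℝ (E × (Fin p.1.1 → ℝ) × (Fin p.1.1 → ℝ)) <
      Module.finrank ℝ (({q : Fin p.1.1 × Fin r // q.2 ∈ p.1.2 q.1} → ℂ) × (Fin d → ℂ)) := by
    rintro ⟨⟨n, τ⟩, hdn, hR⟩
    have hsum : n * R ≤ ∑ j, (τ j).card := by
      simpa using Finset.card_nsmul_le_sum Finset.univ (fun j => (τ j).card) R fun j _ => hR j
    have hsource : Module.finrank ℝ (E × (Fin n → ℝ) × (Fin n → ℝ)) =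
        Module.finrank ℝ E + 2 * n := by
      simp [two_mul]
    rw [finrank_incidence_prod_moments, hsource]
    nlinarith [hdim n hdn]
  obtain ⟨u, hu, hgeneric⟩ :=
    Metric.dense_iff.1 (dense_setOf_forall_surjective_ne hA hb hrank) 0 ε hε
  refine ⟨u, by simpa using hu, fun n e t ν τ ht hν hdn hn hi hR hM => ?_⟩
  have hne := hgeneric ⟨⟨n, τ⟩, hdn, hR⟩ (e, t, ν)
    (obstruction_weightedPolyFamily_surjective hh hg ht hν hi hM hn hdn)
  rwa [add_comm, LinearMap.coe_toContinuousLinearMap', LinearMap.comp_apply, ← map_add] at hne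

end Generic

/-! ### Weighted polynomials on the circle -/

section Weights

open scoped Topology

/-- A weight for polynomials of degree `d`: a nowhere vanishing `C¹` function `g` on the line
asymptotic to `t⁻ᵈ`, so that `p * g` extends to the circle `ℝ ∪ {∞}`, with value `1` at `∞`, for
every monic `p` of degree `d`. -/
structure PolyWeight (d : ℕ) (g : ℝ → ℂ) : Prop where
  contDiff : ContDiff ℝ 1 g
  ne_zero : ∀ t, g t ≠ 0
  tendsto : Filter.Tendsto (fun t : ℝ => (t : ℂ) ^ d * g t) (Filter.cocompact ℝ) (𝓝 1)

lemma tendsto_inv_ofReal :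
    Filter.Tendsto (fun t : ℝ => (t : ℂ)⁻¹) (Filter.cocompact ℝ) (𝓝 0) := by
  refine Filter.tendsto_inv₀_cobounded.comp ?_
  rw [← tendsto_norm_atTop_iff_cobounded]
  simpa only [Complex.norm_real] using tendsto_norm_cocompact_atTop (E := ℝ)

lemma eventually_cocompact_ne (c : ℝ) : ∀ᶠ t : ℝ in Filter.cocompact ℝ, t ≠ c :=
  isCompact_singleton.compl_mem_cocompact

namespace PolyWeight

variable {d : ℕ} {g : ℝ → ℂ}

lemma continuous (hg : PolyWeight d g) : Continuous g := hg.contDiff.continuous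

lemma tendsto_pow_mul_of_lt (hg : PolyWeight d g) {l : ℕ} (hl : l < d) :
    Filter.Tendsto (fun t : ℝ => (t : ℂ) ^ l * g t) (Filter.cocompact ℝ) (𝓝 0) := by
  have h := (tendsto_inv_ofReal.pow (d - l)).mul hg.tendsto
  rw [zero_pow (by omega), zero_mul] at h
  refine h.congr' ?_
  filter_upwards [eventually_cocompact_ne 0] with t ht
  have htne : (t : ℂ) ≠ 0 := by exact_mod_cast ht
  rw [← Nat.sub_add_cancel hl.le, pow_add, Nat.add_sub_cancel, inv_pow]
  field_simp

/-- The extension of `t ↦ tᵈ * g t` to the circle. -/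
def leadingTerm (hg : PolyWeight d g) : C(OnePoint ℝ, ℂ) :=
  circleExtension (fun t : ℝ => (t : ℂ) ^ d * g t) 1
    (by have := hg.continuous; fun_prop) hg.tendsto

/-- The extension of `t ↦ tˡ * g t`, `l < d`, to the circle. -/
def lowerTerm (hg : PolyWeight d g) (l : Fin d) : C(OnePoint ℝ, ℂ) :=
  circleExtension (fun t : ℝ => (t : ℂ) ^ (l : ℕ) * g t) 0
    (by have := hg.continuous; fun_prop) (hg.tendsto_pow_mul_of_lt l.2)

/-- The weighted polynomial of degree less than `d` with coefficients `u`, on the circle. -/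
def lowerEval (hg : PolyWeight d g) (u : Fin d → ℂ) (s : OnePoint ℝ) : ℂ :=
  ∑ l, u l * hg.lowerTerm l s

/-- The weighted monic polynomial of degree `d` with coefficients `u`, on the circle. -/
def monicEval (hg : PolyWeight d g) (u : Fin d → ℂ) (s : OnePoint ℝ) : ℂ :=
  hg.leadingTerm s + hg.lowerEval u s

lemma lowerEval_coe (hg : PolyWeight d g) (u : Fin d → ℂ) (t : ℝ) :
    hg.lowerEval u (t : OnePoint ℝ) = weightedPoly g u t := by
  simp only [lowerEval, weightedPoly, Finset.sum_mul, lowerTerm, circleExtension_coe, mul_assoc]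

@[simp] lemma lowerEval_infty (hg : PolyWeight d g) (u : Fin d → ℂ) :
    hg.lowerEval u OnePoint.infty = 0 := by
  simp [lowerEval, lowerTerm]

lemma lowerEval_add (hg : PolyWeight d g) (u v : Fin d → ℂ) (s : OnePoint ℝ) :
    hg.lowerEval (u + v) s = hg.lowerEval u s + hg.lowerEval v s := by
  simp [lowerEval, add_mul, Finset.sum_add_distrib]

lemma lowerEval_sub (hg : PolyWeight d g) (u v : Fin d → ℂ) (s : OnePoint ℝ) :
    hg.lowerEval (u - v) s = hg.lowerEval u s - hg.lowerEval v s := by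
  simp [lowerEval, sub_mul, Finset.sum_sub_distrib]

lemma continuous_lowerEval (hg : PolyWeight d g) :
    Continuous fun p : (Fin d → ℂ) × OnePoint ℝ => hg.lowerEval p.1 p.2 := by
  unfold lowerEval
  fun_prop

lemma exists_norm_lowerEval_le (hg : PolyWeight d g) :
    ∃ C : ℝ, 0 < C ∧ ∀ u s, ‖hg.lowerEval u s‖ ≤ C * ‖u‖ := by
  refine ⟨∑ l, ‖hg.lowerTerm l‖ + 1, by positivity, fun u s => ?_⟩
  calc ‖hg.lowerEval u s‖ ≤ ∑ l, ‖u l * hg.lowerTerm l s‖ := norm_sum_le _ _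
    _ ≤ ∑ l, ‖u‖ * ‖hg.lowerTerm l‖ := by
        refine Finset.sum_le_sum fun l _ => ?_
        rw [norm_mul]
        exact mul_le_mul (norm_le_pi_norm u l) (ContinuousMap.norm_coe_le_norm _ _)
          (norm_nonneg _) (norm_nonneg _)
    _ = (∑ l, ‖hg.lowerTerm l‖) * ‖u‖ := by rw [← Finset.mul_sum, mul_comm]
    _ ≤ _ := by gcongr; linarith

end PolyWeight

lemma eval_toPoly {d : ℕ} (a : Fin d → ℂ) (z : ℂ) :
    (toPoly a).eval z = z ^ d + ∑ l, a l * z ^ (l : ℕ) := by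
  simp [toPoly, Polynomial.eval_finsetSum]

lemma PolyWeight.monicEval_coe {d : ℕ} {g : ℝ → ℂ} (hg : PolyWeight d g) (u : Fin d → ℂ) (t : ℝ) :
    hg.monicEval u (t : OnePoint ℝ) = (toPoly u).eval (t : ℂ) * g t := by
  rw [monicEval, lowerEval_coe, weightedPoly, eval_toPoly, add_mul]
  rfl

@[simp] lemma PolyWeight.monicEval_infty {d : ℕ} {g : ℝ → ℂ} (hg : PolyWeight d g)
    (u : Fin d → ℂ) : hg.monicEval u OnePoint.infty = 1 := by
  simp [monicEval, leadingTerm]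

lemma PolyWeight.continuous_monicEval {d : ℕ} {g : ℝ → ℂ} (hg : PolyWeight d g) :
    Continuous fun p : (Fin d → ℂ) × OnePoint ℝ => hg.monicEval p.1 p.2 := by
  have := hg.continuous_lowerEval
  unfold monicEval
  fun_prop

lemma tendsto_mul_inv_add_I :
    Filter.Tendsto (fun t : ℝ => (t : ℂ) * ((t : ℂ) + Complex.I)⁻¹) (Filter.cocompact ℝ)
      (𝓝 1) := by
  have h : (fun t : ℝ => (t : ℂ) * ((t : ℂ) + Complex.I)⁻¹) =
      fun t : ℝ => 1 - Complex.I * ((t : ℂ) + Complex.I)⁻¹ := by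
    ext t
    have := ofReal_add_I_ne_zero t
    field_simp
    ring
  rw [h]
  simpa using (tendsto_inv_ofReal_add_I.const_mul Complex.I).const_sub 1

lemma polyWeight_inv_add_I_pow (d : ℕ) :
    PolyWeight d fun t : ℝ => ((t : ℂ) + Complex.I)⁻¹ ^ d where
  contDiff := contDiff_inv_ofReal_add_I.pow d
  ne_zero t := pow_ne_zero _ (inv_ne_zero (ofReal_add_I_ne_zero t))
  tendsto := by simpa [mul_pow] using tendsto_mul_inv_add_I.pow d

lemma degree_sum_C_mul_X_pow_lt {d : ℕ} (a : Fin d → ℂ) :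
    (∑ i : Fin d, Polynomial.C (a i) * Polynomial.X ^ (i : ℕ)).degree < (d : WithBot ℕ) := by
  rw [Polynomial.degree_lt_iff_coeff_zero]
  intro m hm
  rw [Polynomial.finsetSum_coeff]
  refine Finset.sum_eq_zero fun i _ => ?_
  rw [Polynomial.coeff_C_mul_X_pow, if_neg (by have := i.2; omega)]

lemma monic_toPoly {d : ℕ} (a : Fin d → ℂ) : (toPoly a).Monic :=
  Polynomial.monic_X_pow_add (degree_sum_C_mul_X_pow_lt a)

lemma natDegree_toPoly {d : ℕ} (a : Fin d → ℂ) : (toPoly a).natDegree = d := by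
  apply Polynomial.natDegree_eq_of_degree_eq_some
  rw [toPoly, Polynomial.degree_add_eq_left_of_degree_lt] <;> rw [Polynomial.degree_X_pow]
  exact degree_sum_C_mul_X_pow_lt a

lemma card_le_of_eval_toPoly_eq_zero {d n : ℕ} (a : Fin d → ℂ) {t : Fin n → ℝ}
    (ht : Function.Injective t) {J : Finset (Fin n)}
    (hJ : ∀ j ∈ J, (toPoly a).eval (t j : ℂ) = 0) : J.card ≤ d := by
  rw [← Finset.card_image_of_injective J (Complex.ofReal_injective.comp ht), ← natDegree_toPoly a]
  refine Polynomial.card_le_degree_of_subset_roots fun z hz => ?_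
  obtain ⟨j, hj, rfl⟩ := Finset.mem_image.1 (Finset.mem_def.2 hz)
  exact (Polynomial.mem_roots (monic_toPoly a).ne_zero).2 (hJ j hj)

lemma coeff_toPoly {d : ℕ} (a : Fin d → ℂ) (l : Fin d) : (toPoly a).coeff (l : ℕ) = a l := by
  simp [toPoly, Polynomial.finsetSum_coeff, Polynomial.coeff_X_pow, Fin.val_inj,
    Finset.sum_ite_eq, l.2.ne]

lemma toPoly_injective {d : ℕ} : Function.Injective (toPoly (d := d)) := fun a b hab =>
  funext fun l => by rw [← coeff_toPoly a, hab, coeff_toPoly]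

lemma PolyWeight.monicEval_injective {d : ℕ} {g : ℝ → ℂ} (hg : PolyWeight d g) :
    Function.Injective hg.monicEval := by
  intro u v huv
  refine toPoly_injective (Polynomial.eq_of_infinite_eval_eq _ _ ?_)
  refine (Set.infinite_range_of_injective Complex.ofReal_injective).mono ?_
  rintro _ ⟨t, rfl⟩
  have ht := congrFun huv (t : OnePoint ℝ)
  rw [hg.monicEval_coe, hg.monicEval_coe] at ht
  exact mul_right_cancel₀ (hg.ne_zero t) ht

end Weights

section Arrangement

variable {r : ℕ} {K : Set (Finset (Fin r))} {i : Fin r} {q : Fin r → ℂ}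

/-- The vanishing of the coordinates of `q` other than `i` forces the `i`-th coordinate of every
point of `U(K)` agreeing with `q` off `i` to be nonzero. -/
def ForcesNeZero (K : Set (Finset (Fin r))) (i : Fin r) (q : Fin r → ℂ) : Prop :=
  ∃ σ : Finset (Fin r), σ ∉ K ∧ i ∈ σ ∧ ∀ k ∈ σ, k ≠ i → q k = 0

lemma isClosed_forcesNeZero (K : Set (Finset (Fin r))) (i : Fin r) :
    IsClosed {q | ForcesNeZero K i q} := by
  have hunion : {q : Fin r → ℂ | ForcesNeZero K i q} =
      ⋃ σ : {σ : Finset (Fin r) // σ ∉ K ∧ i ∈ σ}, {q | ∀ k ∈ σ.1, k ≠ i → q k = 0} := by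
    ext q
    simp only [ForcesNeZero, Set.mem_ofPred_eq, Set.mem_iUnion, Subtype.exists, exists_prop,
      and_assoc]
  rw [hunion]
  refine isClosed_iUnion_of_finite fun σ => ?_
  simp only [Set.ofPred_forall]
  exact isClosed_iInter fun k => isClosed_iInter fun _ => isClosed_iInter fun _ =>
    isClosed_eq (continuous_apply k) continuous_const

lemma ForcesNeZero.ne_zero (h : ForcesNeZero K i q) (hq : q ∈ UK K) : q i ≠ 0 := by
  obtain ⟨σ, hσ, -, hz⟩ := h
  obtain ⟨k, hk, hne⟩ := mem_UK.1 hq σ hσ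
  by_cases hki : k = i
  · rwa [hki] at hne
  · exact absurd (hz k hk hki) hne

lemma update_mem_UK (hq : q ∈ UK K) {c : ℂ} (hc : ForcesNeZero K i q → c ≠ 0) :
    Function.update q i c ∈ UK K := by
  refine mem_UK.2 fun σ hσ => ?_
  obtain ⟨k, hk, hne⟩ := mem_UK.1 hq σ hσ
  by_cases hforced : i ∈ σ ∧ ∀ k ∈ σ, k ≠ i → q k = 0
  · exact ⟨i, hforced.1, by simpa using hc ⟨σ, hσ, hforced⟩⟩
  obtain ⟨k, hk, hki, hne⟩ : ∃ k ∈ σ, k ≠ i ∧ q k ≠ 0 := by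
    by_cases hki : k = i
    · subst hki
      simpa [hk] using hforced
    · exact ⟨k, hk, hki, hne⟩
  exact ⟨k, hk, by rwa [Function.update_of_ne hki]⟩

lemma not_forcesNeZero_one (hK : ∀ σ, σ ∉ K → 2 ≤ σ.card) (hq : ∀ k, q k = 1) :
    ¬ ForcesNeZero K i q := by
  rintro ⟨σ, hσ, -, hz⟩
  obtain ⟨k, hk, hki⟩ := Finset.exists_mem_ne (hK σ hσ) i
  simpa [hq] using hz k hk hki

lemma isOpen_UK (K : Set (Finset (Fin r))) : IsOpen (UK K) := by
  rw [UK, isOpen_compl_iff]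
  refine (Set.toFinite _).isClosed_biUnion fun σ _ => ?_
  simp only [LSub, Set.ofPred_forall]
  exact isClosed_iInter fun k => isClosed_iInter fun _ =>
    isClosed_eq (continuous_apply k) continuous_const

end Arrangement

/-! ### Generic approximation of loops -/

section GenericApproximation

open scoped Topology

section Alternative

variable {d : ℕ} {g : ℝ → ℂ} {q : OnePoint ℝ → ℂ} {W : Set ℝ}

lemma PolyWeight.exists_monicEval_re_pos (hg : PolyWeight d g) (hq : Continuous q)
    (hW : IsCompact W) {u : Fin d → ℂ} {ε : ℝ} (hε : 0 < ε)
    (hu : ∀ t ∈ W, ε ≤ (hg.lowerEval u (t : OnePoint ℝ) * star (q t)).re) :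
    ∃ p : Fin d → ℂ, ∀ t ∈ W, 0 < (hg.monicEval p (t : OnePoint ℝ) * star (q t)).re := by
  have hlead : Continuous fun t : ℝ => (hg.leadingTerm (t : OnePoint ℝ) * star (q t)).re := by
    have hcoe := OnePoint.continuous_coe (X := ℝ)
    exact Complex.continuous_re.comp
      ((hg.leadingTerm.continuous.comp hcoe).mul (hq.comp hcoe).star)
  obtain ⟨C, hC⟩ := (hW.image hlead).bddBelow
  let s : ℝ := (|C| + 1) / ε
  refine ⟨(s : ℂ) • u, fun t ht => ?_⟩
  have hmonic : hg.monicEval ((s : ℂ) • u) (t : OnePoint ℝ) * star (q t) =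
      hg.leadingTerm t * star (q t) + s * (hg.lowerEval u t * star (q t)) := by
    simp only [monicEval, lowerEval, Pi.smul_apply, smul_eq_mul, mul_assoc, ← Finset.mul_sum]
    ring
  rw [hmonic, Complex.add_re, Complex.re_ofReal_mul]
  have hs : s * ε = |C| + 1 := div_mul_cancel₀ _ hε.ne'
  have hscaled := mul_le_mul_of_nonneg_left (hu t ht) (show 0 ≤ s by positivity)
  linarith [hC ⟨t, ht, rfl⟩, neg_abs_le C]

/-- Carathéodory's theorem turns the absence of a positive solution into a relation between the
values of the moment curve. -/
lemma PolyWeight.exists_re_pos_or_moments_eq_zero (hg : PolyWeight d g) (hq : Continuous q)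
    (hW : IsCompact W) :
    (∃ p : Fin d → ℂ, ∀ t ∈ W, 0 < (hg.monicEval p (t : OnePoint ℝ) * star (q t)).re) ∨
    ∃ m ≤ 2 * d + 1, ∃ (t ν : Fin m → ℝ), 0 < m ∧ Function.Injective t ∧ (∀ j, t j ∈ W) ∧
      (∀ j, 0 < ν j) ∧
      ∀ l : Fin d, ∑ j, (ν j : ℂ) * star (g (t j)) * (t j : ℂ) ^ (l : ℕ) * q (t j) = 0 := by
  let v : ℝ → Fin d → ℂ := fun t l => g t * star (q (t : OnePoint ℝ)) * (t : ℂ) ^ (l : ℕ)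
  have hv : Continuous v := by
    have := OnePoint.continuous_coe (X := ℝ)
    have := hg.continuous
    fun_prop
  rcases exists_le_re_or_exists_sum_smul_eq_zero hW hv.continuousOn with
    ⟨f, ε, hε, hf⟩ | ⟨m, hm, t, ν, hm0, ht, htW, hν, hsum⟩
  · refine Or.inl (hg.exists_monicEval_re_pos hq hW hε
      (u := fun l => f fun j => if l = j then 1 else 0) fun t ht => (hf t ht).trans_eq ?_)
    have hfv := f.toLinearMap.pi_apply_eq_sum_univ (v t)
    rw [ContinuousLinearMap.coe_coe] at hfv
    rw [hfv, hg.lowerEval_coe, weightedPoly, Finset.sum_mul, Finset.sum_mul]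
    congr 1
    exact Finset.sum_congr rfl fun l _ => by simp only [v, smul_eq_mul]; ring
  · have hfinrank : Module.finrank ℝ (Fin d → ℂ) = 2 * d := by
      simp [Module.finrank_pi_fintype, mul_comm]
    refine Or.inr ⟨m, hfinrank ▸ hm, t, ν, hm0, ht, htW, hν, fun l => ?_⟩
    have hstar := congrArg star (congrFun hsum l)
    simp only [Finset.sum_apply, Pi.zero_apply, star_sum, star_zero] at hstar
    rw [← hstar]
    refine Finset.sum_congr rfl fun j _ => ?_
    simp only [v, Pi.smul_apply, Complex.real_smul, star_mul', star_pow,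
      Complex.star_def, Complex.conj_ofReal, Complex.conj_conj]
    ring

end Alternative

section Families

variable {X E : Type*} [TopologicalSpace X] [NormedAddCommGroup E] [NormedSpace ℝ E] {ι : X → E}
  {d : ℕ} {g : ℝ → ℂ}

/-- `f` is a family of weighted monic polynomials with coefficients depending continuously on the
parameter. -/
def PolyWeight.IsPolyFamily (hg : PolyWeight d g) (f : X × OnePoint ℝ → ℂ) : Prop :=
  ∃ c : C(X, Fin d → ℂ), ∀ x s, f (x, s) = hg.monicEval (c x) s

/-- `f` is a family of functions on the circle, with value `1` at `∞`, whose restriction to the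
line is the pullback along `ι` of the `C¹` function `G`. -/
structure IsC1Family (ι : X → E) (f : C(X × OnePoint ℝ, ℂ)) (G : E × ℝ → ℂ) : Prop where
  contDiff : ContDiff ℝ 1 G
  apply_coe : ∀ x (t : ℝ), f (x, (t : OnePoint ℝ)) = G (ι x, t)
  apply_infty : ∀ x, f (x, OnePoint.infty) = 1

lemma PolyWeight.IsPolyFamily.card_le {hg : PolyWeight d g} {f : X × OnePoint ℝ → ℂ}
    (hf : hg.IsPolyFamily f) (x : X) {n : ℕ} {t : Fin n → ℝ} (ht : Function.Injective t)
    {J : Finset (Fin n)} (hJ : ∀ j ∈ J, f (x, (t j : OnePoint ℝ)) = 0) : J.card ≤ d := by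
  obtain ⟨c, hc⟩ := hf
  refine card_le_of_eval_toPoly_eq_zero (c x) ht fun j hj => ?_
  have hzero := hJ j hj
  rw [hc, hg.monicEval_coe] at hzero
  exact (mul_eq_zero.1 hzero).resolve_right (hg.ne_zero _)

lemma PolyWeight.IsPolyFamily.add_lowerEval {hg : PolyWeight d g} {f : X × OnePoint ℝ → ℂ}
    (hf : hg.IsPolyFamily f) (v : Fin d → ℂ) :
    hg.IsPolyFamily fun p => f p + hg.lowerEval v p.2 := by
  obtain ⟨c, hc⟩ := hf
  refine ⟨⟨fun x => c x + v, by fun_prop⟩, fun x s => ?_⟩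
  simp only [hc, ContinuousMap.coe_mk, monicEval, lowerEval_add, add_assoc]

lemma PolyWeight.exists_norm_lowerEval_lt (hg : PolyWeight d g) {ε : ℝ} (hε : 0 < ε) :
    ∃ δ > 0, ∀ u, ‖u‖ < δ → ∀ s, ‖hg.lowerEval u s‖ < ε := by
  obtain ⟨C, hC, hle⟩ := hg.exists_norm_lowerEval_le
  refine ⟨ε / C, by positivity, fun u hu s => (hle u s).trans_lt ?_⟩
  rwa [lt_div_iff₀' hC] at hu

variable [CompactSpace X]

lemma PolyWeight.IsPolyFamily.exists_c1_approx (hι : Continuous ι) (hinj : Function.Injective ι)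
    {hg : PolyWeight d g} {f : X × OnePoint ℝ → ℂ} (hf : hg.IsPolyFamily f) {ε : ℝ} (hε : 0 < ε) :
    ∃ (f₁ : C(X × OnePoint ℝ, ℂ)) (G : E × ℝ → ℂ), IsC1Family ι f₁ G ∧ hg.IsPolyFamily f₁ ∧
      ∀ p, ‖f₁ p - f p‖ < ε := by
  obtain ⟨c, hc⟩ := hf
  obtain ⟨δ, hδ, hsmall⟩ := hg.exists_norm_lowerEval_lt hε
  choose G hG hGc using fun l => exists_c1_norm_sub_lt hι hinj ⟨fun x => c x l, by fun_prop⟩ hδ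
  have hGcont : ∀ l, Continuous (G l) := fun l => (hG l).continuous
  let c₁ : C(X, Fin d → ℂ) := ⟨fun x l => G l (ι x), by fun_prop⟩
  have hf₁ : Continuous fun p : X × OnePoint ℝ => hg.monicEval (c₁ p.1) p.2 :=
    hg.continuous_monicEval.comp ((c₁.continuous.comp continuous_fst).prodMk continuous_snd)
  refine ⟨⟨_, hf₁⟩, fun p => ((p.2 : ℂ) ^ d + ∑ l, G l p.1 * (p.2 : ℂ) ^ (l : ℕ)) * g p.2,
    ⟨?_, fun x t => ?_, fun x => hg.monicEval_infty _⟩, ⟨c₁, fun _ _ => rfl⟩, ?_⟩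
  · have hofReal : ContDiff ℝ 1 fun p : E × ℝ => (p.2 : ℂ) :=
      Complex.ofRealCLM.contDiff.comp contDiff_snd
    refine ((hofReal.pow _).add (ContDiff.sum fun l _ => ?_)).mul (hg.contDiff.comp contDiff_snd)
    exact ((hG l).comp contDiff_fst).mul (hofReal.pow _)
  · exact (hg.monicEval_coe _ _).trans (by rw [eval_toPoly]; rfl)
  · rintro ⟨x, s⟩
    change ‖hg.monicEval (c₁ x) s - f (x, s)‖ < ε
    rw [hc, monicEval, monicEval, add_sub_add_left_eq_sub, ← lowerEval_sub]
    exact hsmall _ ((pi_norm_lt_iff hδ).2 fun l => hGc l x) s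

/-- Polynomial coordinates have few zeros, and the others can be perturbed by polynomials of high
degree: either way, perturbations prescribe the values at the zeros independently. -/
lemma exists_perturbable_approx (hι : Continuous ι) (hinj : Function.Injective ι)
    (hg : PolyWeight d g) (L : ℕ) {f : C(X × OnePoint ℝ, ℂ)}
    (hf : ∀ x, f (x, OnePoint.infty) = 1) {isPoly : Prop} (hpoly : isPoly → hg.IsPolyFamily f)
    {ε : ℝ} (hε : 0 < ε) :
    ∃ (M : ℕ) (h : ℝ → ℂ) (hh : PolyWeight M h) (f₁ : C(X × OnePoint ℝ, ℂ)) (G : E × ℝ → ℂ),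
      IsC1Family ι f₁ G ∧ (∀ p, ‖f₁ p - f p‖ < ε) ∧
      (isPoly → ∀ v, hg.IsPolyFamily fun p => f₁ p + hh.lowerEval v p.2) ∧
      (¬ isPoly → L ≤ M) ∧
      ∀ v x n (t : Fin n → ℝ) (J : Finset (Fin n)), n ≤ L → Function.Injective t →
        (∀ j ∈ J, f₁ (x, (t j : OnePoint ℝ)) + hh.lowerEval v (t j) = 0) → J.card ≤ M := by
  by_cases hp : isPoly
  · obtain ⟨f₁, G, hG, hf₁, happrox⟩ := (hpoly hp).exists_c1_approx hι hinj hε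
    exact ⟨d, g, hg, f₁, G, hG, happrox, fun _ v => hf₁.add_lowerEval v, (absurd hp ·),
      fun v x n t J _ ht hJ => (hf₁.add_lowerEval v).card_le x ht hJ⟩
  · obtain ⟨f₁, G, hG, hcoe, hinfty, happrox⟩ := exists_based_c1_norm_sub_lt hι hinj f hf hε
    exact ⟨L, _, polyWeight_inv_add_I_pow L, f₁, G, ⟨hG, hcoe, hinfty⟩, happrox, (absurd · hp),
      fun _ => le_rfl, fun v x n t J hn _ _ => (J.card_le_univ.trans_eq (by simp)).trans hn⟩

end Families

variable {r : ℕ} {K : Set (Finset (Fin r))} {i : Fin r}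

lemma isCompact_setOf_forcesNeZero (hK : ∀ σ, σ ∉ K → 2 ≤ σ.card) {q : OnePoint ℝ → Fin r → ℂ}
    (hq : Continuous q) (hinf : ∀ k, q OnePoint.infty k = 1) :
    IsCompact {t : ℝ | ForcesNeZero K i (q (t : OnePoint ℝ))} := by
  have hclosed : IsClosed {s | ForcesNeZero K i (q s)} := (isClosed_forcesNeZero K i).preimage hq
  refine OnePoint.isOpenEmbedding_coe (X := ℝ) |>.isInducing.isCompact_preimage'
    hclosed.isCompact fun s hs => ?_
  induction s using OnePoint.rec with
  | infty => exact absurd hs (not_forcesNeZero_one hK hinf)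
  | coe t => exact ⟨t, rfl⟩

variable {X E : Type*} [TopologicalSpace X] [CompactSpace X] [NormedAddCommGroup E]
  [NormedSpace ℝ E] [FiniteDimensional ℝ E] {ι : X → E} {R : ℕ} {D : Fin r → ℕ}
  {g : Fin r → ℝ → ℂ}

lemma add_two_mul_lt_of_le {m n d : ℕ} (hR : 1 ≤ R) (hm : m + 1 ≤ 2 * R * d) (hn : d ≤ n) :
    m + 2 * n < 2 * n * R + 2 * d := by
  obtain ⟨a, rfl⟩ := Nat.exists_eq_add_of_le' hR
  obtain ⟨b, rfl⟩ := Nat.exists_eq_add_of_le hn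
  nlinarith [Nat.zero_le (a * b)]

lemma exists_approx_moments_ne_zero (hι : Continuous ι) (hinj : Function.Injective ι)
    (hR : 1 ≤ R) (hK : ∀ σ, σ ∉ K → R + 1 ≤ σ.card) (hg : ∀ k, PolyWeight (D k) (g k))
    (hE : Module.finrank ℝ E + 1 ≤ 2 * R * D i) {A : Finset (Fin r)} (hi : i ∉ A)
    {P : C(X × OnePoint ℝ, Fin r → ℂ)} (hP : ∀ x k, P (x, OnePoint.infty) k = 1)
    (hA : ∀ k ∈ A, (hg k).IsPolyFamily fun p => P p k) {ε : ℝ} (hε : 0 < ε) :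
    ∃ Q : C(X × OnePoint ℝ, Fin r → ℂ),
      (∀ x k, Q (x, OnePoint.infty) k = 1) ∧ (∀ p k, ‖Q p k - P p k‖ < ε) ∧
      (∀ k ∈ A, (hg k).IsPolyFamily fun p => Q p k) ∧
      ∀ x m (t ν : Fin m → ℝ), Function.Injective t → (∀ j, 0 < ν j) → D i ≤ m → m ≤ 2 * D i + 1 →
        (∀ j, ForcesNeZero K i (Q (x, (t j : OnePoint ℝ)))) →
        ∃ l : Fin (D i), ∑ j, (ν j : ℂ) * star (g i (t j)) * (t j : ℂ) ^ (l : ℕ) *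
          Q (x, (t j : OnePoint ℝ)) i ≠ 0 := by
  choose M h hh f G hG hfP hfpoly hM hcard using fun k =>
    exists_perturbable_approx hι hinj (hg k) (2 * D i + 1) (f := ⟨fun p => P p k, by fun_prop⟩)
      (fun x => hP x k) (hA k) (half_pos hε)
  choose δ hδ hsmall using fun k => (hh k).exists_norm_lowerEval_lt (half_pos hε)
  have : Nonempty (Fin r) := ⟨i⟩
  obtain ⟨k₀, hk₀⟩ := Finite.exists_min δ
  obtain ⟨u, hu, hgeneric⟩ := exists_perturbation_obstruction_ne_zero i (fun k => (hG k).contDiff)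
    (fun k => (hh k).ne_zero) (fun k => (hh k).contDiff) (hg i).ne_zero (hg i).contDiff
    (fun _ => add_two_mul_lt_of_le hR hE) (hδ k₀)
  have hlower : ∀ k, Continuous fun p : X × OnePoint ℝ => (hh k).lowerEval (u k) p.2 := fun k =>
    (hh k).continuous_lowerEval.comp (continuous_const.prodMk continuous_snd)
  refine ⟨⟨fun p k => f k p + (hh k).lowerEval (u k) p.2, by fun_prop⟩, fun x k => ?_,
    fun p k => ?_, fun k hk => hfpoly k hk (u k), fun x m t ν ht hν hdm hm hforce => ?_⟩
  · simp [(hG k).apply_infty]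
  · have hukδ : ‖u k‖ < δ k := (norm_le_pi_norm u k).trans_lt (hu.trans_le (hk₀ k))
    calc ‖f k p + (hh k).lowerEval (u k) p.2 - P p k‖
        = ‖(f k p - P p k) + (hh k).lowerEval (u k) p.2‖ := by rw [add_sub_right_comm]
      _ < ε := (norm_add_le _ _).trans_lt
          ((add_lt_add (hfP k p) (hsmall k (u k) hukδ p.2)).trans_eq (add_halves ε))
  · choose σ hσK hσi hσz using hforce
    by_contra! hmoments
    refine hgeneric m (ι x) t ν (fun j => (σ j).erase i) ht hν hdm (hm.trans (hM i hi))
      (fun j => Finset.notMem_erase i _) (fun j => ?_) (fun k hki => ?_) ?_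
    · have := hK _ (hσK j)
      rw [Finset.card_erase_of_mem (hσi j)]
      omega
    · refine hcard k (u k) x m t _ hm ht fun j hj => ?_
      exact hσz j k (Finset.mem_of_mem_erase (Finset.mem_filter.1 hj).2) hki
    · refine obstruction_eq_zero_iff.2 ⟨fun j k hk => ?_, fun l => ?_⟩
      · rw [← (hG k).apply_coe, ← (hh k).lowerEval_coe]
        exact hσz j k (Finset.mem_of_mem_erase hk) (Finset.ne_of_mem_erase hk)
      · simpa only [ContinuousMap.coe_mk, (hG i).apply_coe, (hh i).lowerEval_coe] using hmoments l

lemma exists_approx_monicEval_re_pos (hι : Continuous ι) (hinj : Function.Injective ι)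
    (hR : 1 ≤ R) (hK : ∀ σ, σ ∉ K → R + 1 ≤ σ.card) (hg : ∀ k, PolyWeight (D k) (g k))
    (hE : Module.finrank ℝ E + 1 ≤ 2 * R * D i) {A : Finset (Fin r)} (hi : i ∉ A)
    {P : C(X × OnePoint ℝ, Fin r → ℂ)} (hP : ∀ x k, P (x, OnePoint.infty) k = 1)
    (hA : ∀ k ∈ A, (hg k).IsPolyFamily fun p => P p k) {ε : ℝ} (hε : 0 < ε) :
    ∃ Q : C(X × OnePoint ℝ, Fin r → ℂ),
      (∀ x k, Q (x, OnePoint.infty) k = 1) ∧ (∀ p k, ‖Q p k - P p k‖ < ε) ∧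
      (∀ k ∈ A, (hg k).IsPolyFamily fun p => Q p k) ∧
      ∀ x, (∀ s, Q (x, s) ∈ UK K) → ∃ p : Fin (D i) → ℂ, ∀ s, ForcesNeZero K i (Q (x, s)) →
        0 < ((hg i).monicEval p s * star (Q (x, s) i)).re := by
  obtain ⟨Q, hQ, hQP, hQA, hmoments⟩ :=
    exists_approx_moments_ne_zero hι hinj hR hK hg hE hi hP hA hε
  refine ⟨Q, hQ, hQP, hQA, fun x hx => ?_⟩
  have hK2 : ∀ σ, σ ∉ K → 2 ≤ σ.card := fun σ hσ => (Nat.succ_le_succ hR).trans (hK σ hσ)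
  rcases (hg i).exists_re_pos_or_moments_eq_zero (q := fun s => Q (x, s) i) (by fun_prop)
    (isCompact_setOf_forcesNeZero (i := i) hK2 (q := fun s => Q (x, s)) (by fun_prop) (hQ x)) with
    ⟨p, hp⟩ | ⟨m, hm, t, ν, hm0, ht, htW, hν, hzero⟩
  · refine ⟨p, fun s hs => ?_⟩
    induction s using OnePoint.rec with
    | infty => exact absurd hs (not_forcesNeZero_one hK2 (hQ x))
    | coe t => exact hp t hs
  · have hforce : ∀ j, ForcesNeZero K i (Q (x, (t j : OnePoint ℝ))) := htW
    have hdm : D i ≤ m := by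
      by_contra! hlt
      have hne : ∀ j, (ν j : ℂ) * star (g i (t j)) * Q (x, (t j : OnePoint ℝ)) i ≠ 0 := fun j =>
        mul_ne_zero (mul_ne_zero (by exact_mod_cast (hν j).ne') (star_ne_zero.2 ((hg i).ne_zero _)))
          ((hforce j).ne_zero (hx _))
      refine hne ⟨0, hm0⟩ (congrFun (eq_zero_of_sum_pow_mul_eq_zero hlt.le (t := fun j => (t j : ℂ))
        (x := fun j => ν j * star (g i (t j)) * Q (x, (t j : OnePoint ℝ)) i)
        (Complex.ofReal_injective.comp ht) fun l => ?_) ⟨0, hm0⟩)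
      exact (Finset.sum_congr rfl fun j _ => by ring).trans (hzero l)
    obtain ⟨l, hl⟩ := hmoments x m t ν ht hν hdm hm hforce
    exact absurd (hzero l) hl

end GenericApproximation

/-! ### Replacing a coordinate by a polynomial -/

section Replacement

open scoped Topology

lemma homotopicRel_of_segment_subset {Z V : Type*} [TopologicalSpace Z] [TopologicalSpace V]
    [AddCommGroup V] [Module ℝ V] [ContinuousAdd V] [ContinuousSMul ℝ V] {S : Set V}
    {P Q : C(Z, S)} {B : Set Z}
    (h : ∀ z, ∀ u ∈ Set.Icc (0 : ℝ) 1, (1 - u) • (P z : V) + u • (Q z : V) ∈ S)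
    (hB : ∀ z ∈ B, P z = Q z) : P.HomotopicRel Q B := by
  refine ⟨⟨⟨⟨fun p => ⟨(1 - (p.1 : ℝ)) • (P p.2 : V) + (p.1 : ℝ) • (Q p.2 : V),
    h p.2 p.1 p.1.2⟩, by fun_prop⟩, fun z => ?_, fun z => ?_⟩, fun t z hz => ?_⟩⟩
  · ext1; simp
  · ext1; simp
  · apply Subtype.ext
    change (1 - (t : ℝ)) • (P z : V) + (t : ℝ) • (Q z : V) = P z
    rw [← hB z hz, ← add_smul, sub_add_cancel, one_smul]

lemma re_mul_star_pos {a b : ℂ} (h : ‖a - b‖ < ‖b‖) : 0 < (a * star b).re := by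
  have hsplit : (a * star b).re = ((a - b) * star b).re + ‖b‖ ^ 2 := by
    rw [← Complex.normSq_eq_norm_sq, ← Complex.ofReal_re (Complex.normSq b), ← Complex.mul_conj,
      ← Complex.add_re, Complex.star_def]
    congr 1
    ring
  have hle : -(‖a - b‖ * ‖b‖) ≤ ((a - b) * star b).re := by
    refine (abs_le.1 ((Complex.abs_re_le_norm _).trans_eq ?_)).1
    rw [norm_mul, norm_star]
  rw [hsplit]
  nlinarith [(norm_nonneg _).trans_lt h]

lemma convexComb_pos {a x y : ℝ} (ha : a ∈ Set.Icc (0 : ℝ) 1) (hx : 0 < x) (hy : 0 < y) :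
    0 < (1 - a) * x + a * y := by
  simpa using convex_Ioi (0 : ℝ) hx hy (sub_nonneg.2 ha.2) ha.1 (sub_add_cancel 1 a)

lemma PolyWeight.monicEval_convexComb {d : ℕ} {g : ℝ → ℂ} (hg : PolyWeight d g) (u v : Fin d → ℂ)
    (s : OnePoint ℝ) (a : ℝ) :
    hg.monicEval ((1 - a) • u + a • v) s = (1 - a) • hg.monicEval u s + a • hg.monicEval v s := by
  have hlower : hg.lowerEval ((1 - a) • u + a • v) s =
      (1 - a) • hg.lowerEval u s + a • hg.lowerEval v s := by
    simp [lowerEval, Finset.smul_sum, add_mul, Finset.sum_add_distrib, mul_assoc]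
  simp only [monicEval, hlower, Complex.real_smul]
  push_cast
  ring

variable {r : ℕ} {K : Set (Finset (Fin r))} {i : Fin r}

lemma exists_pos_forall_norm_sub_lt_imp_mem_UK {Z : Type*} [TopologicalSpace Z] [CompactSpace Z]
    (P : C(Z, UK K)) :
    ∃ δ > 0, ∀ z (q : Fin r → ℂ), (∀ k, ‖q k - (P z).1 k‖ < δ) → q ∈ UK K := by
  have hcompact : IsCompact (Set.range fun z => (P z).1) := isCompact_range (by fun_prop)
  obtain ⟨δ, hδ, hsub⟩ := hcompact.exists_thickening_subset_open (isOpen_UK K)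
    (Set.range_subset_iff.2 fun z => (P z).2)
  refine ⟨δ, hδ, fun z q hq => hsub (Metric.mem_thickening_iff.2 ⟨_, ⟨z, rfl⟩, ?_⟩)⟩
  rw [dist_pi_lt_iff hδ]
  simpa only [dist_eq_norm] using hq

lemma ForcesNeZero.le_norm {δ : ℝ} {p q : Fin r → ℂ} (hq : ForcesNeZero K i q)
    (hball : ∀ q' : Fin r → ℂ, (∀ k, ‖q' k - p k‖ < δ) → q' ∈ UK K)
    (hqp : ∀ k, ‖q k - p k‖ < δ) : δ ≤ ‖p i‖ := by
  by_contra! hlt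
  have hmem : Function.update q i 0 ∈ UK K := hball _ fun k => by
    by_cases hk : k = i
    · subst hk; simpa using hlt
    · simpa [hk] using hqp k
  have hforced : ForcesNeZero K i (Function.update q i 0) := by
    obtain ⟨σ, hσ, hi, hz⟩ := hq
    exact ⟨σ, hσ, hi, fun k hk hki => by simpa [hki] using hz k hk hki⟩
  exact hforced.ne_zero hmem (by simp)

/-- The monic polynomials by which the `i`-th coordinate of the loop `q` in `U(K)` can be replaced
along a straight-line homotopy, because they point in the same direction whenever that coordinate
is forced to be nonzero. -/
def PolyWeight.replacements {d : ℕ} {g : ℝ → ℂ} (hg : PolyWeight d g)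
    (K : Set (Finset (Fin r))) (i : Fin r) (q : OnePoint ℝ → Fin r → ℂ) : Set (Fin d → ℂ) :=
  {p | ∀ s, ForcesNeZero K i (q s) → 0 < (hg.monicEval p s * star (q s i)).re}

section Replacements

variable {d : ℕ} {g : ℝ → ℂ} {hg : PolyWeight d g} {p : Fin d → ℂ} {q : OnePoint ℝ → Fin r → ℂ}

lemma PolyWeight.convex_replacements : Convex ℝ (hg.replacements K i q) := by
  intro p hp p' hp' a b ha hb hab s hs
  obtain rfl : a = 1 - b := by linarith
  rw [hg.monicEval_convexComb, add_mul, Complex.add_re, smul_mul_assoc, smul_mul_assoc,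
    Complex.smul_re, Complex.smul_re, smul_eq_mul, smul_eq_mul]
  exact convexComb_pos ⟨hb, sub_nonneg.1 ha⟩ (hp s hs) (hp' s hs)

lemma PolyWeight.update_mem_UK_of_mem_replacements (hp : p ∈ hg.replacements K i q)
    {s : OnePoint ℝ} (hq : q s ∈ UK K) {u : ℝ} (hu : u ∈ Set.Icc (0 : ℝ) 1) :
    Function.update (q s) i ((1 - u) • q s i + u • hg.monicEval p s) ∈ UK K := by
  refine update_mem_UK hq fun hforced hzero => ?_
  have hself : 0 < (q s i * star (q s i)).re :=
    re_mul_star_pos (by simpa using hforced.ne_zero hq)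
  have hpos := convexComb_pos hu hself (hp s hforced)
  rw [← smul_eq_mul, ← smul_eq_mul u, ← Complex.smul_re, ← Complex.smul_re, ← smul_mul_assoc,
    ← smul_mul_assoc, ← Complex.add_re, ← add_mul, hzero] at hpos
  simp at hpos

lemma PolyWeight.mem_replacements_of_norm_sub_lt {δ : ℝ} {q₀ : OnePoint ℝ → Fin r → ℂ}
    (hball : ∀ s (q' : Fin r → ℂ), (∀ k, ‖q' k - q₀ s k‖ < δ) → q' ∈ UK K)
    (hq : ∀ s k, ‖q s k - q₀ s k‖ < δ / 4) (hp : ∀ s, ‖hg.monicEval p s - q₀ s i‖ < δ / 4) :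
    p ∈ hg.replacements K i q := by
  intro s hs
  have hqs := hq s i
  have hδ : 0 < δ := by linarith [norm_nonneg (q s i - q₀ s i)]
  have hlarge : δ ≤ ‖q₀ s i‖ := hs.le_norm (hball s) fun k => (hq s k).trans (by linarith)
  have hsmall : ‖hg.monicEval p s - q s i‖ < δ / 4 + δ / 4 :=
    (norm_sub_le_norm_sub_add_norm_sub _ (q₀ s i) _).trans_lt
      (add_lt_add (hp s) ((norm_sub_rev _ _).trans_lt hqs))
  have hnorm := norm_sub_norm_le (q₀ s i) (q s i)
  rw [norm_sub_rev] at hnorm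
  exact re_mul_star_pos (by linarith)

variable {X : Type*} [TopologicalSpace X]

lemma PolyWeight.isOpen_setOf_mem_replacements (p : Fin d → ℂ)
    (Q : C(X × OnePoint ℝ, Fin r → ℂ)) :
    IsOpen {x | p ∈ hg.replacements K i fun s => Q (x, s)} := by
  have hmonic : Continuous fun y : X × OnePoint ℝ => hg.monicEval p y.2 :=
    hg.continuous_monicEval.comp (continuous_const.prodMk continuous_snd)
  have hclosed : IsClosed ({y | ForcesNeZero K i (Q y)} ∩
      {y | (hg.monicEval p y.2 * star (Q y i)).re ≤ 0}) :=
    ((isClosed_forcesNeZero K i).preimage Q.continuous).inter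
      (isClosed_le (Complex.continuous_re.comp (hmonic.mul (by fun_prop))) continuous_const)
  convert (isClosedMap_fst_of_compactSpace _ hclosed).isOpen_compl using 1
  ext x
  simp [replacements]

lemma PolyWeight.exists_continuous_mem_replacements [NormalSpace X] [ParacompactSpace X]
    (hg : PolyWeight d g) (Q : C(X × OnePoint ℝ, Fin r → ℂ)) {A O : Set X} (hA : IsClosed A)
    (hO : IsOpen O) (hAO : A ⊆ O) (c : C(X, Fin d → ℂ))
    (hc : ∀ x ∈ O, c x ∈ hg.replacements K i fun s => Q (x, s))
    (hne : ∀ x ∉ O, (hg.replacements K i fun s => Q (x, s)).Nonempty) :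
    ∃ c' : C(X, Fin d → ℂ), (∀ x ∈ A, c' x = c x) ∧
      ∀ x, c' x ∈ hg.replacements K i fun s => Q (x, s) := by
  let T : X → Set (Fin d → ℂ) := fun x =>
    {p | x ∈ A → p = c x} ∩ hg.replacements K i fun s => Q (x, s)
  have hTconvex : ∀ x, Convex ℝ (T x) := by
    refine fun x => Convex.inter (fun p hp p' hp' a b _ _ hab hx => ?_) convex_replacements
    rw [hp hx, hp' hx, ← add_smul, hab, one_smul]
  obtain ⟨c', hc'⟩ := exists_continuous_forall_mem_convex_of_local hTconvex fun x => by
    by_cases hx : x ∈ O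
    · exact ⟨O, hO.mem_nhds hx, c, c.continuous.continuousOn, fun y hy => ⟨fun _ => rfl, hc y hy⟩⟩
    · obtain ⟨p, hp⟩ := hne x hx
      exact ⟨_ ∩ Aᶜ, Filter.inter_mem ((isOpen_setOf_mem_replacements p Q).mem_nhds hp)
        (hA.isOpen_compl.mem_nhds fun h => hx (hAO h)), fun _ => p, continuousOn_const,
        fun y hy => ⟨fun h => absurd h hy.2, hy.1⟩⟩
  exact ⟨c', fun x => (hc' x).1, fun x => (hc' x).2⟩

lemma PolyWeight.exists_homotopicRel_replacement (hg : PolyWeight d g)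
    {Q : C(X × OnePoint ℝ, UK K)} (hQ : ∀ x, (Q (x, OnePoint.infty)).1 i = 1) {A : Set X}
    {c : C(X, Fin d → ℂ)} (hcA : ∀ x ∈ A, ∀ s, (Q (x, s)).1 i = hg.monicEval (c x) s)
    (hc : ∀ x, c x ∈ hg.replacements K i fun s => (Q (x, s)).1) :
    ∃ Q' : C(X × OnePoint ℝ, UK K), (hg.IsPolyFamily fun p => (Q' p).1 i) ∧
      (∀ k ≠ i, ∀ p, (Q' p).1 k = (Q p).1 k) ∧
      Q.HomotopicRel Q' {p | p.1 ∈ A ∨ p.2 = OnePoint.infty} := by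
  have hmem : ∀ (p : X × OnePoint ℝ), ∀ u ∈ Set.Icc (0 : ℝ) 1,
      Function.update (Q p).1 i ((1 - u) • (Q p).1 i + u • hg.monicEval (c p.1) p.2) ∈ UK K :=
    fun p u hu => update_mem_UK_of_mem_replacements (hc p.1) (Q p).2 hu
  have hmonic : Continuous fun p : X × OnePoint ℝ => hg.monicEval (c p.1) p.2 :=
    hg.continuous_monicEval.comp ((c.continuous.comp continuous_fst).prodMk continuous_snd)
  have hone : ∀ p, Function.update (Q p).1 i (hg.monicEval (c p.1) p.2) ∈ UK K := fun p => by
    simpa using hmem p 1 (by simp)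
  refine ⟨⟨fun p => ⟨_, hone p⟩,
      ((continuous_subtype_val.comp Q.continuous).update i hmonic).subtype_mk hone⟩,
    ⟨c, fun x s => by simp⟩, fun k hk p => by simp [hk],
    homotopicRel_of_segment_subset (fun p u hu => ?_) ?_⟩
  · convert hmem p u hu using 1
    ext k
    by_cases hk : k = i
    · simp [hk]
    · simp [hk, ← add_mul]
  · rintro ⟨x, s⟩ hxs
    have hi : (Q (x, s)).1 i = hg.monicEval (c x) s := by
      rcases hxs with hx | rfl
      · exact hcA x hx s
      · rw [hQ, hg.monicEval_infty]
    apply Subtype.ext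
    simp [← hi]

lemma PolyWeight.IsPolyFamily.convexComb {f f' : X × OnePoint ℝ → ℂ} (hf : hg.IsPolyFamily f)
    (hf' : hg.IsPolyFamily f') (χ : C(X, ℝ)) :
    hg.IsPolyFamily fun p => (1 - χ p.1) • f p + χ p.1 • f' p := by
  obtain ⟨c, hc⟩ := hf
  obtain ⟨c', hc'⟩ := hf'
  refine ⟨⟨fun x => (1 - χ x) • c x + χ x • c' x, by fun_prop⟩, fun x s => ?_⟩
  simp only [hc, hc', ContinuousMap.coe_mk, hg.monicEval_convexComb]

lemma PolyWeight.isOpen_setOf_forall_norm_sub_lt (hg : PolyWeight d g) (c : C(X, Fin d → ℂ))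
    (f : C(X × OnePoint ℝ, ℂ)) (ε : ℝ) :
    IsOpen {x | ∀ s, ‖hg.monicEval (c x) s - f (x, s)‖ < ε} := by
  have hmonic : Continuous fun p : X × OnePoint ℝ => hg.monicEval (c p.1) p.2 :=
    hg.continuous_monicEval.comp ((c.continuous.comp continuous_fst).prodMk continuous_snd)
  have hclosed : IsClosed {p : X × OnePoint ℝ | ε ≤ ‖hg.monicEval (c p.1) p.2 - f p‖} :=
    isClosed_le continuous_const (by fun_prop)
  convert (isClosedMap_fst_of_compactSpace _ hclosed).isOpen_compl using 1
  ext x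
  simp

end Replacements

lemma norm_convexComb_sub_lt {V : Type*} [SeminormedAddCommGroup V] [NormedSpace ℝ V] {p q : V}
    {u ε : ℝ} (hu : u ∈ Set.Icc (0 : ℝ) 1) (h : ‖q - p‖ < ε) :
    ‖(1 - u) • p + u • q - p‖ < ε := by
  rw [← mem_ball_iff_norm] at h ⊢
  exact convex_ball p ε (Metric.mem_ball_self ((norm_nonneg _).trans_lt (mem_ball_iff_norm.1 h))) h
    (sub_nonneg.2 hu.2) hu.1 (sub_add_cancel 1 u)

lemma exists_homotopicRel_convexComb {Z : Type*} [TopologicalSpace Z] {P : C(Z, UK K)} {δ ε : ℝ}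
    (hball : ∀ z (q : Fin r → ℂ), (∀ k, ‖q k - (P z).1 k‖ < δ) → q ∈ UK K) (hεδ : ε ≤ δ)
    {Q : C(Z, Fin r → ℂ)} (hQ : ∀ z k, ‖Q z k - (P z).1 k‖ < ε) {χ : C(Z, ℝ)}
    (hχ : ∀ z, χ z ∈ Set.Icc (0 : ℝ) 1) {B : Set Z}
    (hB : ∀ z ∈ B, χ z = 0 ∨ Q z = (P z).1) :
    ∃ R : C(Z, UK K), (∀ z, (R z).1 = (1 - χ z) • (P z).1 + χ z • Q z) ∧
      (∀ z k, ‖(R z).1 k - (P z).1 k‖ < ε) ∧ P.HomotopicRel R B := by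
  have hnear : ∀ z k, ‖((1 - χ z) • (P z).1 + χ z • Q z) k - (P z).1 k‖ < ε := fun z k =>
    norm_convexComb_sub_lt (hχ z) (hQ z k)
  have hmem : ∀ z, (1 - χ z) • (P z).1 + χ z • Q z ∈ UK K := fun z =>
    hball z _ fun k => (hnear z k).trans_le hεδ
  refine ⟨⟨fun z => ⟨_, hmem z⟩, .subtype_mk (by fun_prop) hmem⟩, fun z => rfl, hnear,
    homotopicRel_of_segment_subset (fun z u hu => hball z _ fun k =>
      (norm_convexComb_sub_lt hu (hnear z k)).trans_le hεδ) fun z hz => Subtype.ext ?_⟩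
  rcases hB z hz with h | h <;> simp [h, ← add_smul]

section Compression

variable {X E : Type*} [TopologicalSpace X] [CompactSpace X] [NormedAddCommGroup E]
  [NormedSpace ℝ E] [FiniteDimensional ℝ E] {ι : X → E} {R : ℕ} {D : Fin r → ℕ}
  {g : Fin r → ℝ → ℂ}

lemma exists_homotopicRel_replaceable (hι : Continuous ι) (hinj : Function.Injective ι)
    (hR : 1 ≤ R) (hK : ∀ σ, σ ∉ K → R + 1 ≤ σ.card) (hg : ∀ k, PolyWeight (D k) (g k))
    (hE : Module.finrank ℝ E + 1 ≤ 2 * R * D i) {B : Finset (Fin r)} (hi : i ∉ B)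
    {P : C(X × OnePoint ℝ, UK K)} (hP : ∀ x k, (P (x, OnePoint.infty)).1 k = 1)
    (hB : ∀ k ∈ B, (hg k).IsPolyFamily fun p => (P p).1 k) {A : Set X} (hA : IsClosed A)
    (c : C(X, Fin (D i) → ℂ)) (hcA : ∀ x ∈ A, ∀ s, (P (x, s)).1 i = (hg i).monicEval (c x) s) :
    ∃ Q : C(X × OnePoint ℝ, UK K), (∀ k ∈ B, (hg k).IsPolyFamily fun p => (Q p).1 k) ∧
      P.HomotopicRel Q {p | p.1 ∈ A ∨ p.2 = OnePoint.infty} ∧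
      ∃ O : Set X, IsOpen O ∧ A ⊆ O ∧
        (∀ x ∈ O, c x ∈ (hg i).replacements K i fun s => (Q (x, s)).1) ∧
        ∀ x ∉ O, ((hg i).replacements K i fun s => (Q (x, s)).1).Nonempty := by
  have : T2Space X := T2Space.of_injective_continuous hinj hι
  obtain ⟨δ, hδ, hball⟩ := exists_pos_forall_norm_sub_lt_imp_mem_UK P
  have hδ4 : 0 < δ / 4 := by positivity
  let O : Set X := {x | ∀ s, ‖(hg i).monicEval (c x) s - (P (x, s)).1 i‖ < δ / 4}
  have hO : IsOpen O :=
    (hg i).isOpen_setOf_forall_norm_sub_lt c ⟨fun p => (P p).1 i,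
      (continuous_apply i).comp (continuous_subtype_val.comp P.continuous)⟩ (δ / 4)
  have hAO : A ⊆ O := fun x hx s => by rwa [hcA x hx, sub_self, norm_zero]
  obtain ⟨χ, hχA, hχO, hχ⟩ := exists_continuous_zero_one_of_isClosed hA hO.isClosed_compl
    (Set.disjoint_compl_right_iff_subset.2 hAO)
  obtain ⟨G, hG, hGP, hGB, hGpos⟩ := exists_approx_monicEval_re_pos hι hinj hR hK hg hE hi
    (P := ⟨fun p => (P p).1, by fun_prop⟩) hP hB hδ4
  obtain ⟨Q, hQ, hQP, hPQ⟩ := exists_homotopicRel_convexComb hball (by linarith) hGP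
    (χ := χ.comp ContinuousMap.fst) (fun p => hχ p.1)
    (B := {p | p.1 ∈ A ∨ p.2 = OnePoint.infty}) fun p hp => hp.imp (hχA ·) fun h => by
      obtain ⟨x, rfl⟩ : ∃ x, p = (x, OnePoint.infty) := ⟨p.1, Prod.ext rfl h⟩
      ext k; rw [hG, hP]
  refine ⟨Q, fun k hk => ?_, hPQ, O, hO, hAO, fun x hx =>
    PolyWeight.mem_replacements_of_norm_sub_lt (fun s => hball (x, s)) (fun s => hQP (x, s)) hx,
    fun x hx => ?_⟩
  · simp only [hQ]
    exact (hB k hk).convexComb (hGB k hk) χ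
  · have hQG : ∀ s, G (x, s) = (Q (x, s)).1 := fun s => by
      have hχx : χ x = 1 := hχO hx
      simp [hQ, hχx]
    obtain ⟨p, hp⟩ := hGpos x fun s => by rw [hQG]; exact (Q (x, s)).2
    exact ⟨p, fun s => by simpa only [hQG] using hp s⟩

lemma exists_homotopicRel_isPolyFamily_insert (hι : Continuous ι) (hinj : Function.Injective ι)
    (hR : 1 ≤ R) (hK : ∀ σ, σ ∉ K → R + 1 ≤ σ.card) (hg : ∀ k, PolyWeight (D k) (g k))
    (hE : Module.finrank ℝ E + 1 ≤ 2 * R * D i) {B : Finset (Fin r)} (hi : i ∉ B)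
    {P : C(X × OnePoint ℝ, UK K)} (hP : ∀ x k, (P (x, OnePoint.infty)).1 k = 1)
    (hB : ∀ k ∈ B, (hg k).IsPolyFamily fun p => (P p).1 k) {A : Set X} (hA : IsClosed A)
    (c : C(X, Fin (D i) → ℂ)) (hcA : ∀ x ∈ A, ∀ s, (P (x, s)).1 i = (hg i).monicEval (c x) s) :
    ∃ P' : C(X × OnePoint ℝ, UK K), (∀ k ∈ insert i B, (hg k).IsPolyFamily fun p => (P' p).1 k) ∧
      P.HomotopicRel P' {p | p.1 ∈ A ∨ p.2 = OnePoint.infty} := by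
  have : T2Space X := T2Space.of_injective_continuous hinj hι
  obtain ⟨Q, hQB, hPQ, O, hO, hAO, hcO, hne⟩ :=
    exists_homotopicRel_replaceable hι hinj hR hK hg hE hi hP hB hA c hcA
  obtain ⟨c', hc'A, hc'⟩ := (hg i).exists_continuous_mem_replacements
    ⟨fun p => (Q p).1, by fun_prop⟩ hA hO hAO c hcO hne
  have hQP : ∀ p, p.1 ∈ A ∨ p.2 = OnePoint.infty → P p = Q p := fun p hp =>
    hPQ.some.fst_eq_snd hp
  obtain ⟨P', hP'i, hP'k, hQP'⟩ := (hg i).exists_homotopicRel_replacement (A := A)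
    (fun x => by rw [← hQP _ (Or.inr rfl), hP])
    (fun x hx s => by rw [← hQP _ (Or.inl hx), hcA x hx, hc'A x hx]) hc'
  refine ⟨P', fun k hk => ?_, hPQ.trans hQP'⟩
  obtain rfl | hki := eq_or_ne k i
  · exact hP'i
  · simpa only [hP'k k hki] using hQB k (Finset.mem_of_mem_insert_of_ne hk hki)

theorem exists_homotopicRel_monicEval (hι : Continuous ι) (hinj : Function.Injective ι)
    (hR : 1 ≤ R) (hK : ∀ σ, σ ∉ K → R + 1 ≤ σ.card) (hg : ∀ k, PolyWeight (D k) (g k))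
    (hE : ∀ i, Module.finrank ℝ E + 1 ≤ 2 * R * D i)
    {P : C(X × OnePoint ℝ, UK K)} (hP : ∀ x k, (P (x, OnePoint.infty)).1 k = 1)
    {A : Set X} (hA : IsClosed A) (c : ∀ k, C(X, Fin (D k) → ℂ))
    (hcA : ∀ x ∈ A, ∀ s k, (P (x, s)).1 k = (hg k).monicEval (c k x) s) :
    ∃ (P' : C(X × OnePoint ℝ, UK K)) (c' : ∀ k, C(X, Fin (D k) → ℂ)),
      (∀ k, ∀ x ∈ A, c' k x = c k x) ∧
      (∀ k x s, (P' (x, s)).1 k = (hg k).monicEval (c' k x) s) ∧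
      P.HomotopicRel P' {p | p.1 ∈ A ∨ p.2 = OnePoint.infty} := by
  have hstep : ∀ B : Finset (Fin r), ∃ P' : C(X × OnePoint ℝ, UK K),
      (∀ k ∈ B, (hg k).IsPolyFamily fun p => (P' p).1 k) ∧
      P.HomotopicRel P' {p | p.1 ∈ A ∨ p.2 = OnePoint.infty} := by
    intro B
    induction B using Finset.induction_on with
    | empty => exact ⟨P, by simp, .refl _⟩
    | insert i B hi ih =>
      obtain ⟨Q, hQB, hPQ⟩ := ih
      have hQP : ∀ p, p.1 ∈ A ∨ p.2 = OnePoint.infty → P p = Q p := fun p hp =>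
        hPQ.some.fst_eq_snd hp
      obtain ⟨P', hP'B, hQP'⟩ := exists_homotopicRel_isPolyFamily_insert hι hinj hR hK hg (hE i) hi
        (fun x k => by rw [← hQP _ (Or.inr rfl), hP]) hQB hA (c i)
        fun x hx s => by rw [← hQP _ (Or.inl hx), hcA x hx]
      exact ⟨P', hP'B, hPQ.trans hQP'⟩
  obtain ⟨P', hP', hPP'⟩ := hstep Finset.univ
  choose c' hc' using fun k => hP' k (Finset.mem_univ k)
  refine ⟨P', c', fun k x hx => (hg k).monicEval_injective (funext fun s => ?_), hc', hPP'⟩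
  rw [← hc', ← hcA x hx, hPP'.some.fst_eq_snd (x := (x, s)) (Or.inl hx)]

end Compression

end Replacement

/-! ### Relative compression of families of loops -/

section Lifting

/-- A space `L` has the homotopy extension property when a homotopy defined on a closed subset of a
compact Hausdorff space can be extended along every extension of its initial map. -/
def HasHomotopyExtension (L : Type*) [TopologicalSpace L] : Prop :=
  ∀ (Z : Type) [TopologicalSpace Z] [CompactSpace Z] [T2Space Z] (B : Set Z), IsClosed B →
    ∀ (F : C(Z, L)) (h : C(unitInterval × B, L)), (∀ z, h (0, z) = F z) →
      ∃ H : C(unitInterval × Z, L), (∀ z, H (0, z) = F z) ∧ ∀ u (z : B), H (u, z) = h (u, z)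

lemma exists_continuousMap_eq_of_isClosed {Z L : Type*} [TopologicalSpace Z] [TopologicalSpace L]
    {A B : Set Z} (hA : IsClosed A) (hB : IsClosed B) (f : C(A, L)) (g : C(B, L))
    (h : ∀ z (hz : z ∈ A) (hz' : z ∈ B), f ⟨z, hz⟩ = g ⟨z, hz'⟩) :
    ∃ F : C((A ∪ B : Set Z), L), (∀ z (hz : z ∈ A), F ⟨z, Or.inl hz⟩ = f ⟨z, hz⟩) ∧
      ∀ z (hz : z ∈ B), F ⟨z, Or.inr hz⟩ = g ⟨z, hz⟩ := by
  classical
  let F : (A ∪ B : Set Z) → L := fun z =>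
    if hz : z.1 ∈ A then f ⟨z, hz⟩ else g ⟨z, z.2.resolve_left hz⟩
  have hFA : ∀ z (hz : z ∈ A), F ⟨z, Or.inl hz⟩ = f ⟨z, hz⟩ := fun z hz => dif_pos hz
  have hFB : ∀ z (hz : z ∈ B), F ⟨z, Or.inr hz⟩ = g ⟨z, hz⟩ := fun z hz => by
    by_cases hz' : z ∈ A
    · rw [hFA z hz', h z hz' hz]
    · exact dif_neg hz'
  refine ⟨⟨F, ?_⟩, hFA, hFB⟩
  rw [← continuousOn_univ]
  have hcover : (Set.univ : Set (A ∪ B : Set Z)) = (↑) ⁻¹' A ∪ (↑) ⁻¹' B :=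
    (Set.eq_univ_of_forall fun z => z.2).symm
  rw [hcover]
  refine ContinuousOn.union_of_isClosed ?_ ?_ (hA.preimage continuous_subtype_val)
    (hB.preimage continuous_subtype_val) <;> rw [continuousOn_iff_continuous_domRestrict]
  · exact (f.continuous.comp (.subtype_mk (by fun_prop) fun z => z.2)).congr fun z =>
      (hFA z.1 z.2).symm
  · exact (g.continuous.comp (.subtype_mk (by fun_prop) fun z => z.2)).congr fun z =>
      (hFB z.1 z.2).symm

lemma hasHomotopyExtension_of_isOpen {V : Type*} [TopologicalSpace V] [TietzeExtension.{0} V]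
    {U : Set V} (hU : IsOpen U) : HasHomotopyExtension U := by
  intro Z _ _ _ B hB F h h0
  have hbottom : IsClosed {p : unitInterval × Z | p.1 = 0} :=
    isClosed_eq continuous_fst continuous_const
  have hside : IsClosed {p : unitInterval × Z | p.2 ∈ B} := hB.preimage continuous_snd
  obtain ⟨g₀, hg₀F, hg₀h⟩ := exists_continuousMap_eq_of_isClosed hbottom hside
    ⟨fun p => (F p.1.2).1, by fun_prop⟩ ⟨fun p => (h (p.1.1, ⟨p.1.2, p.2⟩)).1, by fun_prop⟩
    (by rintro ⟨u, z⟩ (rfl : u = 0) hz; exact congrArg Subtype.val (h0 ⟨z, hz⟩).symm)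
  obtain ⟨g, hg⟩ := ContinuousMap.exists_restrict_eq (hbottom.union hside) g₀
  have hgF : ∀ z, g (0, z) = F z := fun z => (DFunLike.congr_fun hg _).trans (hg₀F (0, z) rfl)
  have hgh : ∀ u (z : B), g (u, z) = h (u, z) := fun u z =>
    (DFunLike.congr_fun hg ⟨(u, z), Or.inr z.2⟩).trans (hg₀h (u, z) z.2)
  have hO : IsOpen {z | ∀ u, g (u, z) ∈ U} := by
    convert (isClosedMap_snd_of_compactSpace _
      (hU.isClosed_compl.preimage g.continuous)).isOpen_compl
    ext z; simp
  obtain ⟨χ, hχ0, hχ1, hχ⟩ := exists_continuous_zero_one_of_isClosed hO.isClosed_compl hB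
    (Set.disjoint_compl_left_iff_subset.2 fun z hz u => (hgh u ⟨z, hz⟩).symm ▸ Subtype.property _)
  let ψ : C(Z, unitInterval) := ⟨fun z => ⟨χ z, hχ z⟩, by fun_prop⟩
  have hmem : ∀ p : unitInterval × Z, g (p.1 * ψ p.2, p.2) ∈ U := by
    rintro ⟨u, z⟩
    by_cases hz : ∀ u, g (u, z) ∈ U
    · exact hz _
    · have hψ : ψ z = 0 := Subtype.ext (hχ0 hz)
      simp [hψ, hgF]
  refine ⟨⟨fun p => ⟨_, hmem p⟩, .subtype_mk (by fun_prop) hmem⟩, fun z => ?_, fun u z => ?_⟩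
  · ext1; simp [hgF]
  · have hψ : ψ z = 1 := Subtype.ext (hχ1 z.2)
    ext1; simp [hψ, hgh]

namespace Loop

variable {Y V : Type*} [TopologicalSpace Y] [TopologicalSpace V] {v : V}

/-- The map `Y × S¹ → V` adjoint to a map from `Y` to the loop space of `V`. -/
def uncurry (J : C(Y, Loop V v)) : C(Y × OnePoint ℝ, V) where
  toFun p := (J p.1).1 p.2
  continuous_toFun := by
    have hval : Continuous fun y => (J y).1 := continuous_subtype_val.comp J.continuous
    exact (ContinuousMap.uncurry ⟨_, hval⟩).continuous

@[simp]
lemma uncurry_apply (J : C(Y, Loop V v)) (p : Y × OnePoint ℝ) : uncurry J p = (J p.1).1 p.2 := rfl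

/-- The map from `Y` to the loop space of `V` adjoint to a map `Y × S¹ → V` that is constant on
`Y × {∞}`. -/
def curry (G : C(Y × OnePoint ℝ, V)) (h : ∀ y, G (y, OnePoint.infty) = v) : C(Y, Loop V v) :=
  ⟨fun y => ⟨G.curry y, h y⟩, G.curry.continuous.subtype_mk h⟩

@[simp]
lemma curry_apply (G : C(Y × OnePoint ℝ, V)) (h : ∀ y, G (y, OnePoint.infty) = v) (y : Y)
    (s : OnePoint ℝ) : (curry G h y).1 s = G (y, s) := rfl

lemma ext_apply {γ γ' : Loop V v} (h : ∀ s, γ.1 s = γ'.1 s) : γ = γ' :=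
  Subtype.ext (ContinuousMap.ext h)

lemma homotopicRel_of_uncurry {J₀ J₁ : C(Y, Loop V v)} {A : Set Y}
    (h : (uncurry J₀).HomotopicRel (uncurry J₁) {p | p.1 ∈ A ∨ p.2 = OnePoint.infty}) :
    J₀.HomotopicRel J₁ A := by
  obtain ⟨H⟩ := h
  let G : C((unitInterval × Y) × OnePoint ℝ, V) := ⟨fun p => H (p.1.1, (p.1.2, p.2)), by fun_prop⟩
  have hG : ∀ y, G (y, OnePoint.infty) = v := fun y =>
    (H.eq_fst y.1 (x := (y.2, OnePoint.infty)) (Or.inr rfl)).trans (J₀ y.2).2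
  exact ⟨⟨⟨curry G hG, fun y => ext_apply fun s => H.apply_zero (y, s),
    fun y => ext_apply fun s => H.apply_one (y, s)⟩,
    fun u y hy => ext_apply fun s => H.eq_fst u (x := (y, s)) (Or.inl hy)⟩⟩

end Loop

lemma HasHomotopyExtension.loop {V : Type*} [TopologicalSpace V] (hV : HasHomotopyExtension V)
    (v : V) : HasHomotopyExtension (Loop V v) := by
  intro Z _ _ _ B hB F h h0
  have hside : IsClosed {p : unitInterval × Z × OnePoint ℝ | p.2.1 ∈ B} :=
    hB.preimage (by fun_prop)
  have hbase : IsClosed {p : unitInterval × Z × OnePoint ℝ | p.2.2 = OnePoint.infty} :=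
    isClosed_eq (by fun_prop) (by fun_prop)
  obtain ⟨g, hgh, hgv⟩ := exists_continuousMap_eq_of_isClosed hside hbase
    ((Loop.uncurry h).comp
      ⟨fun p => ((p.1.1, ⟨p.1.2.1, p.2⟩), p.1.2.2), by fun_prop⟩)
    (ContinuousMap.const _ v) (by rintro ⟨u, z, s⟩ hz (rfl : s = _); exact (h (u, ⟨z, hz⟩)).2)
  obtain ⟨H, hH0, hHg⟩ := hV (Z × OnePoint ℝ) {p | p.1 ∈ B ∨ p.2 = OnePoint.infty}
    ((hB.preimage continuous_fst).union (isClosed_eq (by fun_prop) (by fun_prop)))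
    (Loop.uncurry F) ⟨fun p => g ⟨(p.1, p.2.1), p.2.2⟩, by fun_prop⟩ (by
      rintro ⟨⟨z, s⟩, hz | (rfl : s = _)⟩
      · exact (hgh (0, z, s) hz).trans (congrArg (fun γ : Loop V v => γ.1 s) (h0 ⟨z, hz⟩))
      · exact (hgv (0, z, _) rfl).trans (F z).2.symm)
  refine ⟨Loop.curry ⟨fun p => H (p.1.1, (p.1.2, p.2)), by fun_prop⟩ fun p =>
    (hHg p.1 ⟨(p.2, _), Or.inr rfl⟩).trans (hgv (p.1, p.2, _) rfl),
    fun z => Loop.ext_apply fun s => hH0 (z, s), fun u z => Loop.ext_apply fun s => ?_⟩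
  exact (hHg u ⟨(z.1, s), Or.inl z.2⟩).trans (hgh (u, z.1, s) z.2)

/-- The subset `{0, 1} × X ∪ [0, 1] × A` of the cylinder on `X`. -/
def cylinderBoundary {X : Type*} (A : Set X) : Set (unitInterval × X) :=
  {p | p.1 = 0 ∨ p.1 = 1 ∨ p.2 ∈ A}

section CylinderBoundary

variable {X : Type*} [TopologicalSpace X] {A : Set X}

lemma isClosed_cylinderBoundary (hA : IsClosed A) : IsClosed (cylinderBoundary A) :=
  (isClosed_eq continuous_fst continuous_const).union
    ((isClosed_eq continuous_fst continuous_const).union (hA.preimage continuous_snd))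

lemma exists_continuousMap_cylinderBoundary (hA : IsClosed A) {L : Type*} [TopologicalSpace L]
    (f g : C(X, L)) (hfg : ∀ x ∈ A, f x = g x) :
    ∃ F : C(cylinderBoundary A, L), (∀ x, F ⟨(0, x), Or.inl rfl⟩ = f x) ∧
      (∀ x, F ⟨(1, x), Or.inr (Or.inl rfl)⟩ = g x) ∧
      ∀ u x (hx : x ∈ A), F ⟨(u, x), Or.inr (Or.inr hx)⟩ = g x := by
  obtain ⟨F, hFf, hFg⟩ := exists_continuousMap_eq_of_isClosed
    (A := {p : unitInterval × X | p.1 = 0}) (B := {p : unitInterval × X | p.1 = 1 ∨ p.2 ∈ A})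
    (isClosed_eq continuous_fst continuous_const)
    ((isClosed_eq continuous_fst continuous_const).union (hA.preimage continuous_snd))
    ⟨fun p => f p.1.2, by fun_prop⟩ ⟨fun p => g p.1.2, by fun_prop⟩ (by
      rintro ⟨u, x⟩ (hu : u = 0) (hu' | hx)
      · exact absurd (hu.symm.trans hu') zero_ne_one
      · exact hfg x hx)
  exact ⟨F, fun x => hFf (0, x) rfl, fun x => hFg (1, x) (Or.inl rfl),
    fun u x hx => hFg (u, x) (Or.inr hx)⟩

end CylinderBoundary

/-- The relative compression property in dimension `m`: a map from a compact subspace of an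
`m`-dimensional vector space to `L` that lifts through `J` on a closed subset is homotopic, relative
to that subset, to a map with a lift extending the given one. -/
def HasCompression {Y L : Type*} [TopologicalSpace Y] [TopologicalSpace L] (m : ℕ) (J : C(Y, L)) :
    Prop :=
  ∀ (X E : Type) [TopologicalSpace X] [CompactSpace X] [NormedAddCommGroup E] [NormedSpace ℝ E]
    [FiniteDimensional ℝ E] (ι : X → E), Continuous ι → Function.Injective ι →
    Module.finrank ℝ E ≤ m → ∀ (A : Set X), IsClosed A → ∀ (P : C(X, L)) (f₀ : C(A, Y)),
      (∀ a : A, P a = J (f₀ a)) →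
        ∃ f : C(X, Y), (∀ a : A, f a = f₀ a) ∧ P.HomotopicRel (J.comp f) A

namespace HasCompression

variable {Y Y' L : Type*} [TopologicalSpace Y] [TopologicalSpace Y'] [TopologicalSpace L] {m : ℕ}

lemma comp_homeomorph {J : C(Y, L)} (hJ : HasCompression m J) (e : Y' ≃ₜ Y) :
    HasCompression m (J.comp (e : C(Y', Y))) := by
  intro X E _ _ _ _ _ ι hι hinj hE A hA P f₀ hP
  obtain ⟨f, hf, hPf⟩ := hJ X E ι hι hinj hE A hA P ((e : C(Y', Y)).comp f₀) hP
  refine ⟨(e.symm : C(Y, Y')).comp f, fun a => by simp [hf], ?_⟩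
  convert hPf using 1
  ext x; simp

lemma exists_homotopicRel_of_homotopies (hL : HasHomotopyExtension L) {X : Type}
    [TopologicalSpace X] [CompactSpace X] [T2Space X] {A : Set X} (hA : IsClosed A)
    {p₀ p₁ q₀ q₁ : C(X, L)} (H : p₀.Homotopy p₁) (H' : q₀.Homotopy q₁)
    (hHH' : ∀ u, ∀ a ∈ A, H (u, a) = H' (u, a)) (h : p₁.HomotopicRel q₁ A) :
    p₀.HomotopicRel q₀ A := by
  obtain ⟨N⟩ := h
  let curryL : C(unitInterval × X, L) → C(X, C(unitInterval, L)) := fun G =>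
    (G.comp ⟨fun z : X × unitInterval => (unitInterval.symm z.2, z.1), by fun_prop⟩).curry
  obtain ⟨g, hg0, hg1, hgA⟩ := exists_continuousMap_cylinderBoundary hA (curryL H) (curryL H')
    fun a ha => ContinuousMap.ext fun u => hHH' _ a ha
  obtain ⟨M, -, hMg⟩ := hL (unitInterval × X) (cylinderBoundary A)
    (isClosed_cylinderBoundary hA) N ⟨fun z => g z.2 z.1, by fun_prop⟩ (by
      rintro ⟨⟨v, x⟩, (rfl : v = 0) | (rfl : v = 1) | hx⟩
      · simp [hg0, curryL]
      · simp [hg1, curryL]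
      · have hN : N (v, x) = p₁ x := N.eq_fst v hx
        have hH := hHH' 1 x hx
        simp only [ContinuousMap.Homotopy.apply_one] at hH
        simp [hgA v x hx, curryL, hN, hH])
  have hM : ∀ z (hz : z ∈ cylinderBoundary A), M (1, z) = g ⟨z, hz⟩ 1 := fun z hz => hMg 1 ⟨z, hz⟩
  refine ⟨⟨⟨M.comp ⟨fun z => (1, z), by fun_prop⟩, fun x => ?_, fun x => ?_⟩, fun v x hx => ?_⟩⟩
  · exact (hM (0, x) (Or.inl rfl)).trans (by simp [hg0, curryL])
  · exact (hM (1, x) (Or.inr (Or.inl rfl))).trans (by simp [hg1, curryL])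
  · refine (hM (v, x) (Or.inr (Or.inr hx))).trans ?_
    have hH := hHH' 0 x hx
    simp only [ContinuousMap.Homotopy.apply_zero] at hH
    simp [hgA v x hx, curryL, hH]

theorem of_homotopic (hL : HasHomotopyExtension L) {J₀ J₁ : C(Y, L)} (h : J₀.Homotopic J₁)
    (hJ : HasCompression m J₁) : HasCompression m J₀ := by
  obtain ⟨Θ⟩ := h
  intro X E _ _ _ _ _ ι hι hinj hE A hA P f₀ hP
  have : T2Space X := T2Space.of_injective_continuous hinj hι
  obtain ⟨H, hH0, hHΘ⟩ := hL X A hA P ⟨fun z => Θ (z.1, f₀ z.2), by fun_prop⟩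
    fun a => by simp [hP]
  obtain ⟨f, hf, hPf⟩ := hJ X E ι hι hinj hE A hA (H.comp ⟨fun x => (1, x), by fun_prop⟩) f₀
    fun a => (hHΘ 1 a).trans (Θ.apply_one _)
  exact ⟨f, hf, exists_homotopicRel_of_homotopies hL hA ⟨H, hH0, fun _ => rfl⟩
    (Θ.compContinuousMap f) (fun u a ha => (hHΘ u ⟨a, ha⟩).trans (by simp [hf ⟨a, ha⟩])) hPf⟩

lemma isClosed_cubeBoundary (k : ℕ) : IsClosed (Cube.boundary (Fin k)) := by
  simp only [Cube.boundary, Set.ofPred_exists]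
  exact isClosed_iUnion_of_finite fun i =>
    (isClosed_eq (continuous_apply i) continuous_const).union
      (isClosed_eq (continuous_apply i) continuous_const)

variable {k : ℕ} {J : C(Y, L)}

lemma piMap_injective (hJ : HasCompression m J) (hk : k + 1 ≤ m) (y : Y) :
    Function.Injective (piMap k J y) := by
  intro a b
  refine Quotient.inductionOn₂ a b fun p q hpq => Quotient.sound ?_
  obtain ⟨H⟩ : (J.comp p.1).HomotopicRel (J.comp q.1) (Cube.boundary (Fin k)) := Quotient.exact hpq
  have hpy : ∀ x ∈ Cube.boundary (Fin k), p.1 x = y := p.2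
  have hpq : ∀ x ∈ Cube.boundary (Fin k), p.1 x = q.1 x := fun x hx =>
    (hpy x hx).trans (q.2 x hx).symm
  obtain ⟨f₀, hf₀p, hf₀q, hf₀A⟩ :=
    exists_continuousMap_cylinderBoundary (isClosed_cubeBoundary k) p.1 q.1 hpq
  obtain ⟨f, hf, -⟩ := hJ (unitInterval × (Fin k → unitInterval)) (ℝ × (Fin k → ℝ))
    (fun x => ((x.1 : ℝ), fun i => (x.2 i : ℝ))) (by fun_prop)
    (fun x x' h => Prod.ext (Subtype.ext (congrArg Prod.fst h))
      (funext fun i => Subtype.ext (congrFun (congrArg Prod.snd h) i)))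
    (by simpa [add_comm] using hk) _ (isClosed_cylinderBoundary (isClosed_cubeBoundary k)) H f₀ (by
      rintro ⟨⟨u, x⟩, (rfl : u = 0) | (rfl : u = 1) | hx⟩
      · simp [hf₀p]
      · simp [hf₀q]
      · simpa [hf₀A u x hx, ← hpq x hx] using H.eq_fst u hx)
  exact ⟨⟨⟨f, fun x => (hf ⟨(0, x), Or.inl rfl⟩).trans (hf₀p x),
    fun x => (hf ⟨(1, x), Or.inr (Or.inl rfl)⟩).trans (hf₀q x)⟩,
    fun u x hx => ((hf ⟨(u, x), Or.inr (Or.inr hx)⟩).trans (hf₀A u x hx)).trans (hpq x hx).symm⟩⟩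

lemma piMap_surjective (hJ : HasCompression m J) (hk : k ≤ m) (y : Y) :
    Function.Surjective (piMap k J y) := by
  refine fun b => Quotient.inductionOn b fun p => ?_
  obtain ⟨f, hf, hpf⟩ := hJ (Fin k → unitInterval) (Fin k → ℝ) (fun x i => (x i : ℝ)) (by fun_prop)
    (fun x x' h => funext fun i => Subtype.ext (congrFun h i)) (by simpa using hk)
    (Cube.boundary (Fin k)) (isClosed_cubeBoundary k) p.1 (ContinuousMap.const _ y)
    fun a => p.2 a a.2
  exact ⟨Quotient.mk _ ⟨f, fun x hx => hf ⟨x, hx⟩⟩, Quotient.sound hpf.symm⟩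

theorem homotopyEquivThrough (hJ : HasCompression m J) {d : ℤ} (hd : d + 1 ≤ m) :
    HomotopyEquivThrough J d := fun y k hk =>
  ⟨hJ.piMap_injective (by omega) y, hJ.piMap_surjective (by omega) y⟩

end HasCompression

end Lifting

theorem hasCompression_of_monicEval {r : ℕ} {K : Set (Finset (Fin r))} {D : Fin r → ℕ}
    {hE : (∅ : Finset (Fin r)) ∈ K} {R m : ℕ} (hR : 1 ≤ R) (hK : ∀ σ, σ ∉ K → R + 1 ≤ σ.card)
    (hm : ∀ k, m + 1 ≤ 2 * R * D k) {g : Fin r → ℝ → ℂ} (hg : ∀ k, PolyWeight (D k) (g k))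
    (J : C(PolSp K D, Loop (UK K) (onesUK hE)))
    (hJ : ∀ f s k, ((J f).1 s).1 k = (hg k).monicEval (f.1 k) s) : HasCompression m J := by
  intro X E _ _ _ _ _ ι hι hinj hEm A hA P f₀ hP
  have : T2Space X := T2Space.of_injective_continuous hinj hι
  let c₀ : ∀ k, C(A, Fin (D k) → ℂ) := fun k =>
    ⟨fun a => (f₀ a).1 k, (continuous_apply k).comp (continuous_subtype_val.comp f₀.continuous)⟩
  choose c hc using fun k => ContinuousMap.exists_restrict_eq hA (c₀ k)
  have hc : ∀ k (a : A), c k a = (f₀ a).1 k := fun k a => DFunLike.congr_fun (hc k) a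
  obtain ⟨P', c', hc', hP', hPP'⟩ := exists_homotopicRel_monicEval hι hinj hR hK hg
    (fun k => (Nat.succ_le_succ hEm).trans (hm k)) (P := Loop.uncurry P)
    (fun x k => congrArg (fun q : UK K => q.1 k) (P x).2) hA c (fun x hx s k => by
      rw [Loop.uncurry_apply, hP ⟨x, hx⟩, hJ, hc k ⟨x, hx⟩])
  have hmem : ∀ x, (fun k => c' k x) ∈ PolSp K D := fun x σ hσ t => by
    obtain ⟨k, hk, hne⟩ := mem_UK.1 (P' (x, (t : OnePoint ℝ))).2 σ hσ
    rw [hP', PolyWeight.monicEval_coe] at hne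
    exact ⟨k, hk, left_ne_zero_of_mul hne⟩
  refine ⟨⟨fun x => ⟨_, hmem x⟩, .subtype_mk (by fun_prop) hmem⟩,
    fun a => Subtype.ext (funext fun k => (hc' k a a.2).trans (hc k a)),
    Loop.homotopicRel_of_uncurry ?_⟩
  convert hPP' using 1
  ext p k
  exact (hJ _ _ _).trans (hP' k p.1 p.2).symm

/-! ### Roots of monic polynomials -/

section Roots

open Polynomial

/-- The coefficients of `p` in degrees less than `d`; a one-sided inverse of `toPoly`. -/
def lowerCoeffs (d : ℕ) (p : ℂ[X]) : Fin d → ℂ := fun l => p.coeff l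

lemma toPoly_lowerCoeffs {d : ℕ} {p : ℂ[X]} (hp : p.Monic) (hd : p.natDegree = d) :
    toPoly (lowerCoeffs d p) = p := by
  conv_rhs => rw [hp.as_sum, hd]
  simp only [toPoly, lowerCoeffs, Fin.sum_univ_eq_sum_range (fun l => C (p.coeff l) * X ^ l)]

/-- The families of polynomials over `Y` whose coefficients vary continuously. -/
def continuousCoeffs (Y : Type*) [TopologicalSpace Y] : Submonoid (Y → ℂ[X]) where
  carrier := {p | ∀ l, Continuous fun y => (p y).coeff l}
  one_mem' _ := continuous_const
  mul_mem' hp hq l := by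
    simp only [Pi.mul_apply, coeff_mul]
    exact continuous_finsetSum _ fun i _ => (hp i.1).mul (hq i.2)

lemma X_sub_C_mem_continuousCoeffs {Y : Type*} [TopologicalSpace Y] {x : Y → ℂ}
    (hx : Continuous x) : (fun y => X - C (x y)) ∈ continuousCoeffs Y := fun l => by
  obtain rfl | hl := eq_or_ne l 0
  · exact hx.neg.congr fun y => by simp
  · simpa [coeff_C, hl] using continuous_const

/-- The monic polynomial whose roots are the images under `ψ` of those of `p`. -/
def mapRoots (ψ : ℂ → ℂ) (p : ℂ[X]) : ℂ[X] := ((p.roots.map ψ).map fun α => X - C α).prod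

lemma monic_mapRoots (ψ : ℂ → ℂ) (p : ℂ[X]) : (mapRoots ψ p).Monic :=
  monic_multiset_prod_of_monic _ _ fun α _ => monic_X_sub_C α

@[simp] lemma roots_mapRoots (ψ : ℂ → ℂ) (p : ℂ[X]) : (mapRoots ψ p).roots = p.roots.map ψ :=
  roots_multiset_prod_X_sub_C _

lemma natDegree_mapRoots (ψ : ℂ → ℂ) (p : ℂ[X]) : (mapRoots ψ p).natDegree = p.natDegree := by
  rw [mapRoots, natDegree_multiset_prod_X_sub_C_eq_card, Multiset.card_map,
    (IsAlgClosed.splits p).natDegree_eq_card_roots]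

@[simp] lemma mapRoots_mapRoots (ψ ψ' : ℂ → ℂ) (p : ℂ[X]) :
    mapRoots ψ (mapRoots ψ' p) = mapRoots (ψ ∘ ψ') p := by
  rw [mapRoots, roots_mapRoots, Multiset.map_map ψ, mapRoots]

lemma mapRoots_id {p : ℂ[X]} (hp : p.Monic) : mapRoots id p = p := by
  rw [mapRoots, Multiset.map_id]
  exact ((IsAlgClosed.splits p).eq_prod_roots_of_monic hp).symm

lemma exists_of_eval_mapRoots_eq_zero {ψ : ℂ → ℂ} {p : ℂ[X]} {z : ℂ}
    (h : (mapRoots ψ p).eval z = 0) : ∃ α, p.eval α = 0 ∧ ψ α = z := by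
  have hz : z ∈ (mapRoots ψ p).roots := (mem_roots (monic_mapRoots ψ p).ne_zero).2 h
  rw [roots_mapRoots] at hz
  obtain ⟨α, hα, rfl⟩ := Multiset.mem_map.1 hz
  exact ⟨α, (mem_roots'.1 hα).2, rfl⟩

/-- The coefficients of the monic polynomial of degree `d` with roots `α`. -/
def vieta (d : ℕ) (α : Fin d → ℂ) : Fin d → ℂ := lowerCoeffs d (∏ i, (X - C (α i)))

lemma toPoly_vieta {d : ℕ} (α : Fin d → ℂ) : toPoly (vieta d α) = ∏ i, (X - C (α i)) :=
  toPoly_lowerCoeffs (monic_prod_of_monic _ _ fun i _ => monic_X_sub_C _) (by simp)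

lemma roots_toPoly_vieta {d : ℕ} (α : Fin d → ℂ) :
    (toPoly (vieta d α)).roots = Finset.univ.val.map α := by
  rw [← roots_multiset_prod_X_sub_C (Finset.univ.val.map α), toPoly_vieta, Multiset.map_map]
  rfl

lemma mapRoots_toPoly_vieta {d : ℕ} (ψ : ℂ → ℂ) (α : Fin d → ℂ) :
    mapRoots ψ (toPoly (vieta d α)) = ∏ i, (X - C (ψ (α i))) := by
  rw [mapRoots, roots_toPoly_vieta, Multiset.map_map, Multiset.map_map]
  rfl

lemma continuous_vieta (d : ℕ) : Continuous (vieta d) := by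
  have h : ∏ i, (fun α : Fin d → ℂ => X - C (α i)) ∈ continuousCoeffs (Fin d → ℂ) :=
    prod_mem fun i _ => X_sub_C_mem_continuousCoeffs (continuous_apply i)
  exact continuous_pi fun l => by
    simpa only [Finset.prod_apply, vieta, lowerCoeffs] using h l

lemma vieta_surjective (d : ℕ) : Function.Surjective (vieta d) := by
  intro a
  obtain ⟨roots, hroots⟩ := Quot.exists_rep (toPoly a).roots
  have hlength : roots.length = d := by
    rw [← natDegree_toPoly a, (IsAlgClosed.splits (toPoly a)).natDegree_eq_card_roots, ← hroots]
    rfl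
  subst hlength
  refine ⟨roots.get, toPoly_injective ?_⟩
  rw [← mapRoots_id (monic_toPoly a), ← mapRoots_id (monic_toPoly _), mapRoots, mapRoots,
    roots_toPoly_vieta, Fin.univ_val_map, List.ofFn_get, ← hroots]
  rfl

lemma norm_le_of_eval_toPoly_eq_zero {d : ℕ} {a : Fin d → ℂ} {z : ℂ}
    (hz : (toPoly a).eval z = 0) : ‖z‖ ≤ ‖a‖ + 1 := by
  have hbound : (toPoly a).cauchyBound ≤ ‖a‖₊ + 1 := by
    rw [cauchyBound, (monic_toPoly a).leadingCoeff, natDegree_toPoly, nnnorm_one, div_one]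
    gcongr
    refine Finset.sup_le fun l hl => ?_
    rw [coeff_toPoly a ⟨l, Finset.mem_range.1 hl⟩]
    exact nnnorm_le_pi_nnnorm a _
  have hroot : (toPoly a).IsRoot z := hz
  exact_mod_cast (hroot.norm_lt_cauchyBound (monic_toPoly a).ne_zero).le.trans hbound

lemma isProperMap_vieta (d : ℕ) : IsProperMap (vieta d) := by
  rw [isProperMap_iff_isCompact_preimage]
  refine ⟨continuous_vieta d, fun S hS => ?_⟩
  obtain ⟨M, hM⟩ := hS.isBounded.exists_norm_le
  refine Metric.isCompact_of_isClosed_isBounded (hS.isClosed.preimage (continuous_vieta d))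
    (isBounded_iff_forall_norm_le.2 ⟨max M 0 + 1, fun α hα => ?_⟩)
  refine (pi_norm_le_iff_of_nonneg (by positivity)).2 fun i => ?_
  have hroot : (toPoly (vieta d α)).eval (α i) = 0 := by
    rw [toPoly_vieta, eval_prod]
    exact Finset.prod_eq_zero (Finset.mem_univ i) (by simp)
  linarith [norm_le_of_eval_toPoly_eq_zero hroot, hM _ hα, le_max_left M 0]

lemma mapRoots_toPoly_mem_continuousCoeffs {T : Type*} [TopologicalSpace T] {d : ℕ}
    {ψ : T → ℂ → ℂ} (hψ : Continuous fun p : T × ℂ => ψ p.1 p.2) :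
    (fun q : T × (Fin d → ℂ) => mapRoots (ψ q.1) (toPoly q.2)) ∈
      continuousCoeffs (T × (Fin d → ℂ)) := by
  intro l
  have hquot : Topology.IsQuotientMap (Prod.map (id : T → T) (vieta d)) :=
    ((Homeomorph.refl T).isProperMap.prodMap (isProperMap_vieta d)).isClosedMap.isQuotientMap
      (continuous_id.prodMap (continuous_vieta d))
      (Function.surjective_id.prodMap (vieta_surjective d))
  have hprod : ∏ i, (fun q : T × (Fin d → ℂ) => X - C (ψ q.1 (q.2 i))) ∈
      continuousCoeffs (T × (Fin d → ℂ)) :=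
    prod_mem fun i _ => X_sub_C_mem_continuousCoeffs
      (hψ.comp (by fun_prop : Continuous fun q : T × (Fin d → ℂ) => (q.1, q.2 i)))
  rw [hquot.continuous_iff]
  convert hprod l using 2 with q
  simp [mapRoots_toPoly_vieta]

end Roots

/-! ### Stabilization -/

section Stabilization

open Polynomial

/-- The conditions on `ψ` under which moving roots by `ψ` creates no common real root: no nonreal
point becomes real, and no two real points are identified. -/
structure ReflectsReals (ψ : ℂ → ℂ) : Prop where
  im_eq_zero : ∀ z, (ψ z).im = 0 → z.im = 0
  injective_ofReal : Function.Injective fun x : ℝ => ψ x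

lemma reflectsReals_id : ReflectsReals id := ⟨fun _ h => h, Complex.ofReal_injective⟩

/-- A map `ψ` whose real part is monotone on the real axis with the direction of `ε`, and which
preserves (`0 < δ`) or exchanges (`δ < 0`) the upper and the lower half plane. -/
structure IsOriented (ε δ : ℝ) (ψ : ℂ → ℂ) : Prop where
  strictMono_re : StrictMono fun x : ℝ => ε * (ψ x).re
  im_pos : ∀ z, z.im ≠ 0 → 0 < δ * z.im * (ψ z).im

namespace IsOriented

variable {ε δ : ℝ} {ψ ψ' : ℂ → ℂ}

lemma reflectsReals (h : IsOriented ε δ ψ) : ReflectsReals ψ where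
  im_eq_zero z hz := by
    by_contra hne
    simpa [hz] using h.im_pos z hne
  injective_ofReal x y hxy := h.strictMono_re.injective
    (congrArg (fun z : ℂ => ε * z.re) hxy)

lemma convexComb {u : ℝ} (hu : u ∈ Set.Icc (0 : ℝ) 1) (h : IsOriented ε δ ψ)
    (h' : IsOriented ε δ ψ') : IsOriented ε δ fun z => (1 - u) • ψ z + u • ψ' z where
  strictMono_re x y hxy := by
    have hpos := convexComb_pos hu (sub_pos.2 (h.strictMono_re hxy))
      (sub_pos.2 (h'.strictMono_re hxy))
    simp only [Complex.add_re, Complex.smul_re, smul_eq_mul]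
    linarith
  im_pos z hz := by
    convert convexComb_pos hu (h.im_pos z hz) (h'.im_pos z hz) using 1
    simp only [Complex.add_im, Complex.smul_im, smul_eq_mul]
    ring

end IsOriented

/-- The real-linear map scaling the real axis by `ε` and the imaginary axis by `δ`. -/
def axisScaling (ε δ : ℝ) (z : ℂ) : ℂ := ⟨ε * z.re, δ * z.im⟩

lemma continuous_axisScaling (ε δ : ℝ) : Continuous (axisScaling ε δ) := by
  have h : axisScaling ε δ = fun z => Complex.equivRealProdCLM.symm (ε * z.re, δ * z.im) := by
    ext z
    exact (Complex.equivRealProdCLM.symm_apply_apply (axisScaling ε δ z)).symm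
  rw [h]
  fun_prop

lemma isOriented_axisScaling {ε δ : ℝ} (hε : ε ≠ 0) (hδ : δ ≠ 0) :
    IsOriented ε δ (axisScaling ε δ) where
  strictMono_re x y hxy := by
    simp only [axisScaling, Complex.ofReal_re, ← mul_assoc]
    exact mul_lt_mul_of_pos_left hxy (mul_self_pos.2 hε)
  im_pos z hz := by
    change 0 < δ * z.im * (δ * z.im)
    exact mul_self_pos.2 (mul_ne_zero hδ hz)

lemma axisScaling_comp_inv {ε δ : ℝ} (hε : ε ≠ 0) (hδ : δ ≠ 0) :
    axisScaling ε δ ∘ axisScaling ε⁻¹ δ⁻¹ = id := by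
  funext z
  simp [axisScaling, hε, hδ]

namespace AdmissiblePhi

variable {b : ℝ} {φ : ℂ → ℂ}

lemma im_eq_zero_iff (hφ : AdmissiblePhi b φ) {z : ℂ} : (φ z).im = 0 ↔ z.im = 0 := by
  obtain ⟨-, hinj, -, hrange, hreal⟩ := hφ
  have hre : (φ z).re < b := hrange.subset (Set.mem_range_self z)
  have himage := Set.ext_iff.1 hreal (φ z)
  simpa [hinj.mem_set_image, hre] using himage.symm

lemma im_mul_im_pos (hφ : AdmissiblePhi b φ) {z w : ℂ} (h : 0 < z.im * w.im) :
    0 < (φ z).im * (φ w).im := by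
  have hhalf : IsPreconnected {v : ℂ | 0 < z.im * v.im} :=
    (convex_halfSpace_gt ⟨fun v v' => by simp [mul_add], fun c v => by simp [mul_left_comm]⟩
      0).isPreconnected
  have himage : ((fun v => (φ v).im) '' {v : ℂ | 0 < z.im * v.im}).OrdConnected :=
    (hhalf.image _ (Complex.continuous_im.comp hφ.1).continuousOn).ordConnected
  have hz : z ∈ {v : ℂ | 0 < z.im * v.im} := mul_self_pos.2 (left_ne_zero_of_mul h.ne')
  by_contra! hsign
  have hzero : (0 : ℝ) ∈ Set.uIcc (φ z).im (φ w).im := by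
    rw [Set.mem_uIcc]
    exact (mul_nonpos_iff.1 hsign).symm.imp id And.symm
  obtain ⟨v, hv, hv0⟩ :=
    himage.uIcc_subset (Set.mem_image_of_mem _ hz) (Set.mem_image_of_mem _ h) hzero
  exact (right_ne_zero_of_mul (ne_of_gt hv)) (hφ.im_eq_zero_iff.1 hv0)

lemma exists_im_eq (hφ : AdmissiblePhi b φ) (y : ℝ) : ∃ z, (φ z).im = y := by
  have hmem : (⟨b - 1, y⟩ : ℂ) ∈ Set.range φ := by
    rw [hφ.2.2.2.1]
    exact sub_one_lt b
  exact hmem.imp fun z hz => by rw [hz]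

lemma exists_strictMono_re (hφ : AdmissiblePhi b φ) :
    ∃ ε : ℝ, ε ≠ 0 ∧ StrictMono fun x : ℝ => ε * (φ x).re := by
  have hcont : Continuous fun x : ℝ => (φ x).re :=
    Complex.continuous_re.comp (hφ.1.comp Complex.continuous_ofReal)
  have hinj : Function.Injective fun x : ℝ => (φ x).re := fun x y hxy =>
    Complex.ofReal_injective (hφ.2.1 (Complex.ext hxy (by
      rw [hφ.im_eq_zero_iff.2 (Complex.ofReal_im x), hφ.im_eq_zero_iff.2 (Complex.ofReal_im y)])))
  obtain hmono | hanti := hcont.strictMono_of_inj hinj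
  · exact ⟨1, one_ne_zero, by simpa using hmono⟩
  · exact ⟨-1, by norm_num, by simpa using hanti.neg⟩

lemma exists_im_pos (hφ : AdmissiblePhi b φ) :
    ∃ δ : ℝ, δ ≠ 0 ∧ ∀ z : ℂ, z.im ≠ 0 → 0 < δ * z.im * (φ z).im := by
  obtain ⟨p, hp⟩ := hφ.exists_im_eq 1
  obtain ⟨m, hm⟩ := hφ.exists_im_eq (-1)
  have hp0 : p.im ≠ 0 := fun h => by simp [hφ.im_eq_zero_iff.2 h] at hp
  have hm0 : m.im ≠ 0 := fun h => by simp [hφ.im_eq_zero_iff.2 h] at hm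
  have hopposite : p.im * m.im < 0 := by
    refine lt_of_le_of_ne (not_lt.1 fun h => ?_) (mul_ne_zero hp0 hm0)
    have := hφ.im_mul_im_pos h
    norm_num [hp, hm] at this
  refine ⟨p.im, hp0, fun z hz => ?_⟩
  obtain hneg | hpos := (mul_ne_zero hp0 hz).lt_or_gt
  · have hsame : 0 < m.im * z.im := by
      refine pos_of_mul_pos_right (a := p.im * p.im) ?_ (mul_self_nonneg _)
      rw [mul_mul_mul_comm]
      exact mul_pos_of_neg_of_neg hopposite hneg
    have := hφ.im_mul_im_pos hsame
    rw [hm] at this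
    exact mul_pos_of_neg_of_neg hneg (by linarith)
  · have := hφ.im_mul_im_pos hpos
    rw [hp, one_mul] at this
    exact mul_pos hpos this

lemma exists_isOriented (hφ : AdmissiblePhi b φ) :
    ∃ ε δ : ℝ, ε ≠ 0 ∧ δ ≠ 0 ∧ IsOriented ε δ φ := by
  obtain ⟨ε, hε, hre⟩ := hφ.exists_strictMono_re
  obtain ⟨δ, hδ, him⟩ := hφ.exists_im_pos
  exact ⟨ε, δ, hε, hδ, hre, him⟩

end AdmissiblePhi

variable {r : ℕ} {K : Set (Finset (Fin r))} {D D' : Fin r → ℕ} {ψ ψ' : ℂ → ℂ}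
  {y : Fin r → ℂ} {f : ∀ k, Fin (D k) → ℂ}

/-- The coefficients of the `r`-tuple obtained by moving the roots of `f` by `ψ` and adding the
root `y k` to the `k`th polynomial until its degree is `D' k`. -/
def stabCoeffs (ψ : ℂ → ℂ) (y : Fin r → ℂ) (D' : Fin r → ℕ) (f : ∀ k, Fin (D k) → ℂ) :
    ∀ k, Fin (D' k) → ℂ := fun k =>
  lowerCoeffs (D' k) (mapRoots ψ (toPoly (f k)) * (X - C (y k)) ^ (D' k - D k))

lemma toPoly_stabCoeffs (hD : D ≤ D') (k : Fin r) : toPoly (stabCoeffs ψ y D' f k) =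
    mapRoots ψ (toPoly (f k)) * (X - C (y k)) ^ (D' k - D k) := by
  have hlinear : ((X - C (y k)) ^ (D' k - D k)).Monic := (monic_X_sub_C _).pow _
  refine toPoly_lowerCoeffs ((monic_mapRoots _ _).mul hlinear) ?_
  rw [(monic_mapRoots _ _).natDegree_mul hlinear, natDegree_mapRoots, natDegree_toPoly,
    (monic_X_sub_C _).natDegree_pow, natDegree_X_sub_C, mul_one, Nat.add_sub_of_le (hD k)]

lemma stabCoeffs_mem_polSp (hψ : ReflectsReals ψ) (hy : ∀ k, (y k).im ≠ 0) (hD : D ≤ D')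
    (hf : f ∈ PolSp K D) : stabCoeffs ψ y D' f ∈ PolSp K D' := by
  intro σ hσ t
  by_contra! hcommon
  have hroot : ∀ k ∈ σ, ∃ β : ℝ, (toPoly (f k)).eval (β : ℂ) = 0 ∧ ψ β = t := fun k hk => by
    have hne : (t : ℂ) - y k ≠ 0 := fun h => hy k (by simpa using congrArg Complex.im h)
    have hzero := hcommon k hk
    rw [toPoly_stabCoeffs hD, eval_mul, eval_pow, eval_sub, eval_X, eval_C] at hzero
    obtain ⟨α, hα, hαt⟩ :=
      exists_of_eval_mapRoots_eq_zero ((mul_eq_zero_iff_right (pow_ne_zero _ hne)).1 hzero)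
    lift α to ℝ using hψ.im_eq_zero α (by rw [hαt, Complex.ofReal_im])
    exact ⟨α, hα, hαt⟩
  obtain ⟨l, hl, -⟩ := hf σ hσ 0
  obtain ⟨β, -, hβ⟩ := hroot l hl
  obtain ⟨k, hk, hne⟩ := hf σ hσ β
  obtain ⟨γ, hγ, hγt⟩ := hroot k hk
  rw [hψ.injective_ofReal (hγt.trans hβ.symm)] at hγ
  exact hne hγ

lemma continuous_stabCoeffs {T : Type*} [TopologicalSpace T] {ψ : T → ℂ → ℂ} {y : T → Fin r → ℂ}
    (hψ : Continuous fun p : T × ℂ => ψ p.1 p.2) (hy : Continuous y) :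
    Continuous fun q : T × (∀ k, Fin (D k) → ℂ) => stabCoeffs (ψ q.1) (y q.1) D' q.2 := by
  refine continuous_pi fun k => continuous_pi fun l => ?_
  have hroot : (fun q : T × (Fin (D k) → ℂ) => X - C (y q.1 k)) ∈ continuousCoeffs _ :=
    X_sub_C_mem_continuousCoeffs (by fun_prop)
  have hcoeff := mul_mem (mapRoots_toPoly_mem_continuousCoeffs hψ)
    (pow_mem hroot (D' k - D k)) l
  simp only [Pi.mul_apply, Pi.pow_apply] at hcoeff
  have hpair : Continuous fun q : T × (∀ k, Fin (D k) → ℂ) => (q.1, q.2 k) := by fun_prop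
  simpa only [stabCoeffs, lowerCoeffs, Function.comp_def] using hcoeff.comp hpair

/-- The stabilization map which moves roots by `ψ` and adds the nonreal roots `y`. -/
def stabilize (K : Set (Finset (Fin r))) (hψ : ReflectsReals ψ) (hcont : Continuous ψ)
    (hy : ∀ k, (y k).im ≠ 0) (hD : D ≤ D') : C(PolSp K D, PolSp K D') where
  toFun f := ⟨stabCoeffs ψ y D' f.1, stabCoeffs_mem_polSp hψ hy hD f.2⟩
  continuous_toFun := by
    have hpair : Continuous fun f : PolSp K D => ((), f.1) := by fun_prop
    exact ((continuous_stabCoeffs (T := Unit) (ψ := fun _ => ψ) (y := fun _ => y)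
      (hcont.comp continuous_snd) continuous_const).comp hpair).subtype_mk _

lemma toPoly_stabilize (hψ : ReflectsReals ψ) (hcont : Continuous ψ) (hy : ∀ k, (y k).im ≠ 0)
    (hD : D ≤ D') (f : PolSp K D) (k : Fin r) : toPoly ((stabilize K hψ hcont hy hD f).1 k) =
      mapRoots ψ (toPoly (f.1 k)) * (X - C (y k)) ^ (D' k - D k) :=
  toPoly_stabCoeffs hD k

lemma polSp_ext {f g : PolSp K D} (h : ∀ k, toPoly (f.1 k) = toPoly (g.1 k)) : f = g :=
  Subtype.ext (funext fun k => toPoly_injective (h k))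

lemma stabilize_comp_self (hψ : ReflectsReals ψ) (hcont : Continuous ψ) (hψ' : ReflectsReals ψ')
    (hcont' : Continuous ψ') (hinv : ψ ∘ ψ' = id) (hy : ∀ k, (y k).im ≠ 0) (f : PolSp K D) :
    stabilize K hψ hcont hy le_rfl (stabilize K hψ' hcont' hy le_rfl f) = f := by
  refine polSp_ext fun k => ?_
  simp [toPoly_stabilize, hinv, mapRoots_id (monic_toPoly _)]

/-- The self-homeomorphism of the polynomial space induced by `axisScaling` on roots. -/
def polSpScaling (K : Set (Finset (Fin r))) (D : Fin r → ℕ) {ε δ : ℝ} (hε : ε ≠ 0) (hδ : δ ≠ 0) :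
    PolSp K D ≃ₜ PolSp K D :=
  have hI : ∀ _ : Fin r, Complex.I.im ≠ 0 := fun _ => by simp
  have h := (isOriented_axisScaling hε hδ).reflectsReals
  have h' := (isOriented_axisScaling (inv_ne_zero hε) (inv_ne_zero hδ)).reflectsReals
  { toFun := stabilize K h (continuous_axisScaling _ _) hI le_rfl
    invFun := stabilize K h' (continuous_axisScaling _ _) hI le_rfl
    left_inv := stabilize_comp_self _ _ _ _
      (by simpa using axisScaling_comp_inv (inv_ne_zero hε) (inv_ne_zero hδ)) _
    right_inv := stabilize_comp_self _ _ _ _ (axisScaling_comp_inv hε hδ) _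
    continuous_toFun := map_continuous _
    continuous_invFun := map_continuous _ }

lemma toPoly_polSpScaling {ε δ : ℝ} (hε : ε ≠ 0) (hδ : δ ≠ 0) (f : PolSp K D) (k : Fin r) :
    toPoly ((polSpScaling K D hε hδ f).1 k) = mapRoots (axisScaling ε δ) (toPoly (f.1 k)) := by
  change toPoly (stabCoeffs (axisScaling ε δ) (fun _ => Complex.I) D f.1 k) = _
  rw [toPoly_stabCoeffs le_rfl, Nat.sub_self, pow_zero, mul_one]

lemma exists_forall_im_ne_zero (x : ℂ) : ∃ v : ℂ, ∀ u : ℝ, 0 < u → (x + u • v).im ≠ 0 := by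
  obtain hx | hx := le_or_gt 0 x.im
  · exact ⟨Complex.I, fun u hu => by simpa using (add_pos_of_nonneg_of_pos hx hu).ne'⟩
  · exact ⟨-Complex.I, fun u hu => by simpa using (add_neg hx (neg_neg_of_pos hu)).ne⟩

lemma StabSpec.homotopic_comp_homeomorph {b : ℝ} {φ : ℂ → ℂ} {x : Fin r → ℂ}
    {s : C(PolSp K D, PolSp K D')} (hs : StabSpec K φ x D D' s) (hφ : AdmissiblePhi b φ)
    (hD : D ≤ D') :
    ∃ (y : Fin r → ℂ) (T : C(PolSp K D, PolSp K D')) (e : PolSp K D ≃ₜ PolSp K D),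
      (∀ k, (y k).im ≠ 0) ∧
      (∀ f k, toPoly ((T f).1 k) = toPoly (f.1 k) * (X - C (y k)) ^ (D' k - D k)) ∧
      s.Homotopic (T.comp e) := by
  obtain ⟨ε, δ, hε, hδ, hor⟩ := hφ.exists_isOriented
  choose v hv using fun k => exists_forall_im_ne_zero (x k)
  let ψ (u : unitInterval) (z : ℂ) : ℂ := (1 - (u : ℝ)) • φ z + (u : ℝ) • axisScaling ε δ z
  let y (u : unitInterval) (k : Fin r) : ℂ := x k + (u : ℝ) • v k
  have hψ : Continuous fun p : unitInterval × ℂ => ψ p.1 p.2 := by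
    have := hφ.1
    have := continuous_axisScaling ε δ
    fun_prop
  have hy : Continuous y := by fun_prop
  have hzero (f : PolSp K D) : stabCoeffs (ψ 0) (y 0) D' f.1 = (s f).1 :=
    funext fun k => toPoly_injective (by
      rw [toPoly_stabCoeffs hD, hs f k]
      simp [ψ, y, mapRoots])
  have hmem (q : unitInterval × PolSp K D) : stabCoeffs (ψ q.1) (y q.1) D' q.2.1 ∈ PolSp K D' := by
    obtain ⟨u, f⟩ := q
    obtain rfl | hu := eq_or_ne u 0
    · exact hzero f ▸ (s f).2
    · exact stabCoeffs_mem_polSp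
        (hor.convexComb u.2 (isOriented_axisScaling hε hδ)).reflectsReals
        (fun k => hv k u (unitInterval.pos_iff_ne_zero.2 hu)) hD f.2
  have hone (k : Fin r) : (y 1 k).im ≠ 0 := hv k 1 one_pos
  refine ⟨y 1, stabilize K reflectsReals_id continuous_id hone hD, polSpScaling K D hε hδ, hone,
    fun f k => by rw [toPoly_stabilize, mapRoots_id (monic_toPoly _)],
    ⟨⟨⟨fun q => ⟨_, hmem q⟩, .subtype_mk ?_ hmem⟩, fun f => Subtype.ext (hzero f), fun f => ?_⟩⟩⟩
  · have hpair : Continuous fun q : unitInterval × PolSp K D => (q.1, q.2.1) := by fun_prop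
    simpa only [Function.comp_def] using (continuous_stabCoeffs hψ hy).comp hpair
  · refine polSp_ext fun k => ?_
    change toPoly (stabCoeffs (ψ 1) (y 1) D' f.1 k) = _
    simp [toPoly_stabCoeffs hD, toPoly_stabilize, toPoly_polSpScaling, ψ]

end Stabilization

/-! ### Lifts through the toric quotient -/

section ToricLift

variable {n r : ℕ}

lemma zr_injective : Function.Injective (zr (n := n)) := fun a b h =>
  funext fun i => by simpa [zr] using congrFun h i

lemma zr_mem_coneIdx {N : Fin r → Fin n → ℤ} {τ : Finset (Fin r)} {l : Fin r} (hl : l ∈ τ) :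
    zr (N l) ∈ coneIdx N τ :=
  ⟨Pi.single l 1, (Pi.single_nonneg.2 zero_le_one : (0 : Fin r → ℝ) ≤ Pi.single l 1),
    by simp [Pi.single_apply, hl]⟩

lemma IsPrimGens.eq_of_mem_ray {F : Fan n} {N : Fin r → Fin n → ℤ} (hN : IsPrimGens F N)
    (b : Module.Basis (Fin n) ℤ (Fin n → ℤ)) {i : Fin n} {l : Fin r}
    (h : zr (b i) ∈ ray (zr (N l))) : N l = b i := by
  have hlattice : zr (b i) ∈ ray (zr (N l)) ∩ {x | IsLatticePoint x} := ⟨h, fun j => ⟨b i j, rfl⟩⟩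
  rw [hN.primitive l] at hlattice
  obtain ⟨c, hc⟩ := hlattice
  have hmultiple : b i = (c : ℤ) • N l := zr_injective (by rw [hc]; funext j; simp [zr])
  have hcoord : (1 : ℤ) = c * b.coord i (N l) := by
    have h := congrArg (b.coord i) hmultiple
    rwa [map_smul, smul_eq_mul, b.coord_apply, b.repr_self, Finsupp.single_eq_same] at h
  rw [hmultiple, Int.eq_one_of_dvd_one (by positivity) ⟨_, hcoord⟩, one_smul]

lemma IsPrimGens.exists_eq_basis {F : Fan n} {N : Fin r → Fin n → ℤ} (hN : IsPrimGens F N)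
    {τ : Finset (Fin r)} (hτ : τ ∈ KC F N) (b : Module.Basis (Fin n) ℤ (Fin n → ℤ))
    (s : Finset (Fin n)) (hb : coneIdx N τ =
      {x | ∃ lam : Fin n → ℝ, (∀ i, 0 ≤ lam i) ∧ x = ∑ i ∈ s, lam i • zr (b i)})
    {l : Fin r} (hl : l ∈ τ) : ∃ i, N l = b i := by
  obtain ⟨L, hL, hface⟩ := F.inter_face _ hτ _ (hN.ray_mem l)
  have hmem := zr_mem_coneIdx (N := N) hl
  have hLl : L (zr (N l)) = 0 := (hface.subset ⟨hmem, 1, zero_le_one, (one_smul ℝ _).symm⟩).2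
  have hbasis (i) (hi : i ∈ s) : zr (b i) ∈ coneIdx N τ := hb.superset
    ⟨Pi.single i 1, (Pi.single_nonneg.2 zero_le_one : (0 : Fin n → ℝ) ≤ Pi.single i 1),
      by simp [Pi.single_apply, hi]⟩
  obtain ⟨lam, hlam, hsum⟩ := hb.subset hmem
  have hterms : ∀ i ∈ s, lam i * L (zr (b i)) = 0 := by
    refine (Finset.sum_eq_zero_iff_of_nonneg fun i hi =>
      mul_nonneg (hlam i) (hL _ (hbasis i hi))).1 ?_
    simpa [hsum] using hLl
  obtain ⟨i, hi, hne⟩ : ∃ i ∈ s, lam i ≠ 0 := by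
    by_contra! hzero
    refine hN.ne_zero l (zr_injective ?_)
    rw [hsum, Finset.sum_eq_zero fun i hi => by rw [hzero i hi, zero_smul]]
    funext j
    simp [zr]
  have hLi : L (zr (b i)) = 0 := (mul_eq_zero.1 (hterms i hi)).resolve_left hne
  exact ⟨i, hN.eq_of_mem_ray b (hface.superset ⟨hbasis i hi, hLi⟩).2⟩

lemma IsPrimGens.exists_dual {F : Fan n} {N : Fin r → Fin n → ℤ} (hN : IsPrimGens F N)
    (hF : F.NonSingular) {τ : Finset (Fin r)} (hτ : τ ∈ KC F N) {k : Fin r} (hk : k ∈ τ) :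
    ∃ m : Fin n → ℤ, ∀ l ∈ τ, ∑ j, N l j * m j = if l = k then 1 else 0 := by
  obtain ⟨b, s, hb⟩ := hF _ hτ
  obtain ⟨i, hi⟩ := hN.exists_eq_basis hτ b s hb hk
  refine ⟨fun j => b.coord i fun j' => if j = j' then 1 else 0, fun l hl => ?_⟩
  obtain ⟨i', hi'⟩ := hN.exists_eq_basis hτ b s hb hl
  have hiff : i' = i ↔ l = k := by rw [← hN.inj.eq_iff, hi, hi', b.injective.eq_iff]
  simp_rw [← smul_eq_mul, ← LinearMap.pi_apply_eq_sum_univ (b.coord i) (N l), hi',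
    Module.Basis.coord_apply, Module.Basis.repr_self, Finsupp.single_apply, hiff]

lemma equivalence_toricRel (N : Fin r → Fin n → ℤ) (K : Set (Finset (Fin r))) :
    Equivalence (toricRel N K) where
  refl _ := ⟨fun _ => 1, ⟨by simp, by simp⟩, by simp⟩
  symm := by
    rintro x y ⟨μ, ⟨hne, hμ⟩, h⟩
    refine ⟨fun k => (μ k)⁻¹, ⟨fun k => inv_ne_zero (hne k), fun m => ?_⟩, ?_⟩
    · simp only [inv_zpow, Finset.prod_inv_distrib, hμ m, inv_one]
    · simp only [← h, inv_mul_cancel_left₀ (hne _)]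
  trans := by
    rintro x y z ⟨μ, ⟨hne, hμ⟩, h⟩ ⟨ν, ⟨hne', hν⟩, h'⟩
    refine ⟨fun k => ν k * μ k, ⟨fun k => mul_ne_zero (hne' k) (hne k), fun m => ?_⟩, ?_⟩
    · simp only [mul_zpow, Finset.prod_mul_distrib, hμ m, hν m, mul_one]
    · simp only [← h', ← h, mul_assoc]

lemma toricRel_of_qmap_eq {N : Fin r → Fin n → ℤ} {K : Set (Finset (Fin r))} {x y : UK K}
    (h : qmap N K x = qmap N K y) : toricRel N K x y :=
  (equivalence_toricRel N K).eqvGen_iff.1 (Quot.eqvGen_exact h)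

lemma GSet.eq_inv_prod_compl {N : Fin r → Fin n → ℤ} {μ : Fin r → ℂ} (hμ : μ ∈ GSet N)
    {τ : Finset (Fin r)} {k : Fin r} (hk : k ∈ τ) {m : Fin n → ℤ}
    (hm : ∀ l ∈ τ, ∑ j, N l j * m j = if l = k then 1 else 0) :
    μ k = (∏ l ∈ τᶜ, μ l ^ (∑ j, N l j * m j))⁻¹ := by
  have hτ : ∏ l ∈ τ, μ l ^ (∑ j, N l j * m j) = μ k := by
    rw [Finset.prod_eq_single_of_mem k hk fun l hl hlk => by rw [hm l hl, if_neg hlk, zpow_zero],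
      hm k hk, if_pos rfl, zpow_one]
  refine eq_inv_of_mul_eq_one_left ?_
  rw [← hμ.2 m, ← Finset.prod_mul_prod_compl τ, hτ]

-- Near a point whose vanishing coordinates are `τ`, the coordinates of `μ` outside `τ` are
-- quotients, and those in `τ` are monomials in them because the cone over `τ` is non-singular.
lemma continuous_of_mul_mem_UK {F : Fan n} {N : Fin r → Fin n → ℤ} (hN : IsPrimGens F N)
    (hF : F.NonSingular) {Y : Type*} [TopologicalSpace Y] {p μ : Y → Fin r → ℂ}
    (hp : Continuous p) (hpU : ∀ y, p y ∈ UK (KC F N)) (hμ : ∀ y, μ y ∈ GSet N)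
    (hq : Continuous fun y => μ y * p y) : Continuous μ := by
  refine continuous_iff_continuousAt.2 fun y₀ => continuousAt_pi.2 fun k => ?_
  have hpk (l : Fin r) : ContinuousAt (fun y => p y l) y₀ := by fun_prop
  have hqk (l : Fin r) : ContinuousAt (fun y => μ y l * p y l) y₀ :=
    ((continuous_apply l).comp hq).continuousAt
  let τ : Finset (Fin r) := {l | p y₀ l = 0}
  have hτ : τ ∈ KC F N := by
    by_contra hnot
    obtain ⟨l, hl, hne⟩ := mem_UK.1 (hpU y₀) τ hnot
    exact hne (Finset.mem_filter.1 hl).2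
  have hout (l) (hl : l ∉ τ) : ContinuousAt (fun y => μ y l) y₀ := by
    have hne : p y₀ l ≠ 0 := by simpa [τ] using hl
    refine ((hqk l).div (hpk l) hne).congr ?_
    filter_upwards [(hpk l).eventually_ne hne] with y hy
    exact mul_div_cancel_right₀ _ hy
  by_cases hk : k ∈ τ
  · obtain ⟨m, hm⟩ := hN.exists_dual hF hτ hk
    simp_rw [fun y => GSet.eq_inv_prod_compl (hμ y) hk hm]
    refine ContinuousAt.inv₀ (tendsto_finsetProd _ fun l hl => ?_)
      (Finset.prod_ne_zero_iff.2 fun l _ => zpow_ne_zero _ ((hμ y₀).1 l))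
    exact (hout l (Finset.mem_compl.1 hl)).zpow₀ _ (Or.inl ((hμ y₀).1 l))
  · exact hout k hk

lemma exists_circle_factor {Z : Type*} [TopologicalSpace Z] {a B : Z × OnePoint ℝ → ℂ}
    (ha : Continuous a) (hB : Continuous B) (ha_infty : ∀ z, a (z, OnePoint.infty) = 1)
    (hB_infty : ∀ z, B (z, OnePoint.infty) = 1) {c : Z × ℝ → ℂ} (hc : Continuous c)
    (hc_ne : ∀ p, c p ≠ 0) (h : ∀ z (t : ℝ), a (z, t) = c (z, t) * B (z, t)) :
    ∃ Λ : C(Z × OnePoint ℝ, ℂ), (∀ p, Λ p ≠ 0) ∧ (∀ z, Λ (z, OnePoint.infty) = 1) ∧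
      ∀ p, a p = Λ p * B p := by
  let Λ (p : Z × OnePoint ℝ) : ℂ := p.2.elim 1 fun t => c (p.1, t)
  have hfactor (p) : a p = Λ p * B p := by
    obtain ⟨z, s⟩ := p
    induction s using OnePoint.rec with
    | infty => simp [Λ, ha_infty, hB_infty]
    | coe t => exact h z t
  have hne (p) : Λ p ≠ 0 := by
    obtain ⟨z, s⟩ := p
    induction s using OnePoint.rec with
    | infty => exact one_ne_zero
    | coe t => exact hc_ne (z, t)
  have hemb : Topology.IsOpenEmbedding fun p : Z × ℝ => (p.1, (p.2 : OnePoint ℝ)) :=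
    Topology.IsOpenEmbedding.id.prodMap OnePoint.isOpenEmbedding_coe
  have hcont : Continuous Λ := continuous_iff_continuousAt.2 fun ⟨z, s⟩ => by
    induction s using OnePoint.rec with
    | infty =>
      have hBz : B (z, OnePoint.infty) ≠ 0 := by simp [hB_infty]
      refine (ha.continuousAt.div hB.continuousAt hBz).congr ?_
      filter_upwards [hB.continuousAt.eventually_ne hBz] with p hp
      rw [Pi.div_apply, hfactor, mul_div_cancel_right₀ _ hp]
    | coe t => exact (hemb.continuousAt_iff (x := (z, t))).1 hc.continuousAt
  exact ⟨⟨Λ, hcont⟩, hne, fun _ => rfl, hfactor⟩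

lemma continuous_eval_toPoly {d : ℕ} :
    Continuous fun p : (Fin d → ℂ) × ℂ => (toPoly p.1).eval p.2 := by
  simp only [eval_toPoly]
  fun_prop

lemma IsLiftOfID.exists_factor {F : Fan n} {N : Fin r → Fin n → ℤ} (hN : IsPrimGens F N)
    (hF : F.NonSingular) {hE : ∅ ∈ KC F N} {D : Fin r → ℕ}
    {j : C(PolSp (KC F N) D, Loop (UK (KC F N)) (onesUK hE))} (hj : IsLiftOfID N (KC F N) hE D j) :
    ∃ μ : PolSp (KC F N) D × ℝ → Fin r → ℂ, Continuous μ ∧ (∀ p k, μ p k ≠ 0) ∧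
      ∀ f (t : ℝ) k, ((j f).1 t).1 k = μ (f, t) k * (toPoly (f.1 k)).eval (t : ℂ) := by
  choose μ hμ hmul using fun p : PolSp (KC F N) D × ℝ => toricRel_of_qmap_eq (hj p.1 p.2).symm
  have heval : Continuous fun (p : PolSp (KC F N) D × ℝ) k =>
      (toPoly (p.1.1 k)).eval (p.2 : ℂ) := by
    refine continuous_pi fun k => ?_
    have hpair : Continuous fun p : PolSp (KC F N) D × ℝ => (p.1.1 k, (p.2 : ℂ)) :=
      ((continuous_apply k).comp (continuous_subtype_val.comp continuous_fst)).prodMk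
        (Complex.continuous_ofReal.comp continuous_snd)
    simpa only [Function.comp_def] using continuous_eval_toPoly.comp hpair
  have hlift : Continuous fun p : PolSp (KC F N) D × ℝ => ((j p.1).1 p.2).1 :=
    continuous_subtype_val.comp ((Loop.uncurry j).continuous.comp
      (continuous_fst.prodMk (OnePoint.continuous_coe.comp continuous_snd)))
  refine ⟨μ, continuous_of_mul_mem_UK hN hF heval (fun p => polEval_mem_UK p.1 p.2) hμ ?_,
    fun p => (hμ p).1, fun f t k => (congrFun (hmul (f, t)) k).symm⟩
  exact hlift.congr fun p => (hmul p).symm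

lemma PolyWeight.continuous_monicEval_polSp {K : Set (Finset (Fin r))} {D : Fin r → ℕ} (k : Fin r)
    {g : ℝ → ℂ} (hg : PolyWeight (D k) g) :
    Continuous fun p : PolSp K D × OnePoint ℝ => hg.monicEval (p.1.1 k) p.2 := by
  have hpair : Continuous fun p : PolSp K D × OnePoint ℝ => (p.1.1 k, p.2) :=
    ((continuous_apply k).comp (continuous_subtype_val.comp continuous_fst)).prodMk continuous_snd
  simpa only [Function.comp_def] using hg.continuous_monicEval.comp hpair

lemma IsLiftOfID.exists_circle_factor {F : Fan n} {N : Fin r → Fin n → ℤ} (hN : IsPrimGens F N)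
    (hF : F.NonSingular) {hE : ∅ ∈ KC F N} {D D' : Fin r → ℕ}
    {j : C(PolSp (KC F N) D', Loop (UK (KC F N)) (onesUK hE))}
    (hj : IsLiftOfID N (KC F N) hE D' j) {y : Fin r → ℂ} (hy : ∀ k, (y k).im ≠ 0)
    {T : C(PolSp (KC F N) D, PolSp (KC F N) D')} (hT : ∀ f k, toPoly ((T f).1 k) =
      toPoly (f.1 k) * (Polynomial.X - Polynomial.C (y k)) ^ (D' k - D k)) :
    ∃ Λ : Fin r → C(PolSp (KC F N) D × OnePoint ℝ, ℂ), (∀ k p, Λ k p ≠ 0) ∧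
      (∀ k f, Λ k (f, OnePoint.infty) = 1) ∧ ∀ f s k, ((j (T f)).1 s).1 k =
        Λ k (f, s) * (polyWeight_inv_add_I_pow (D k)).monicEval (f.1 k) s := by
  obtain ⟨μ, hμ, hμ_ne, hfactor⟩ := hj.exists_factor hN hF
  have hsub_ne (k) (t : ℝ) : (t : ℂ) - y k ≠ 0 := fun h => hy k (by simp [← sub_eq_zero.1 h])
  choose Λ hne hinfty heq using fun k => Toric.exists_circle_factor
    (a := fun p : PolSp (KC F N) D × OnePoint ℝ => (Loop.uncurry (j.comp T) p).1 k)
    (B := fun p => (polyWeight_inv_add_I_pow (D k)).monicEval (p.1.1 k) p.2)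
    (c := fun p => μ (T p.1, p.2) k * (p.2 - y k) ^ (D' k - D k) * (p.2 + Complex.I) ^ D k)
    ((continuous_apply k).comp (continuous_subtype_val.comp (Loop.uncurry (j.comp T)).continuous))
    (PolyWeight.continuous_monicEval_polSp k (polyWeight_inv_add_I_pow (D k)))
    (fun f => congrFun (congrArg Subtype.val (j (T f)).2) k)
    (fun f => PolyWeight.monicEval_infty ..)
    (by fun_prop)
    (fun p => mul_ne_zero (mul_ne_zero (hμ_ne _ _) (pow_ne_zero _ (hsub_ne k p.2)))
      (pow_ne_zero _ (ofReal_add_I_ne_zero p.2)))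
    (fun f t => by
      have hunit : (t + Complex.I) ^ D k * (t + Complex.I)⁻¹ ^ D k = 1 := by
        rw [← mul_pow, mul_inv_cancel₀ (ofReal_add_I_ne_zero t), one_pow]
      rw [Loop.uncurry_apply, ContinuousMap.comp_apply, hfactor, hT, PolyWeight.monicEval_coe]
      simp only [Polynomial.eval_mul, Polynomial.eval_pow, Polynomial.eval_sub, Polynomial.eval_X,
        Polynomial.eval_C]
      linear_combination (-(μ (T f, t) k * ((toPoly (f.1 k)).eval (t : ℂ) *
        ((t : ℂ) - y k) ^ (D' k - D k)))) * hunit)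
  exact ⟨Λ, hne, hinfty, fun f s k => heq k (f, s)⟩

end ToricLift

/-! ### Connectedness of the space of polynomials -/

section Connected

open scoped Topology

variable {r : ℕ} {K : Set (Finset (Fin r))} {D : Fin r → ℕ} {f g : ∀ k, Fin (D k) → ℂ}

/-- The tuples of monic polynomials of degrees `D`, none of which has a real root. -/
def realRootFree (D : Fin r → ℕ) : Set (∀ k, Fin (D k) → ℂ) :=
  {f | ∀ k (t : ℝ), (toPoly (f k)).eval (t : ℂ) ≠ 0}

lemma mem_polSp_of_forall_ne (hK : ∀ σ ∉ K, 2 ≤ σ.card) (k : Fin r)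
    (h : ∀ l ≠ k, ∀ t : ℝ, (toPoly (f l)).eval (t : ℂ) ≠ 0) : f ∈ PolSp K D := fun σ hσ t => by
  obtain ⟨l, hl, hlk⟩ := Finset.exists_mem_ne (hK σ hσ) k
  exact ⟨l, hl, h l hlk t⟩

lemma realRootFree_subset_polSp (hK : ∅ ∈ K) : realRootFree D ⊆ PolSp K D := fun f hf σ hσ t => by
  obtain ⟨l, hl⟩ := Finset.nonempty_iff_ne_empty.2 (ne_of_mem_of_not_mem hK hσ).symm
  exact ⟨l, hl, hf l t⟩

lemma exists_im_notMem_Ioc (S : Finset ℂ) : ∃ ε > 0, ∀ α ∈ S, α.im ∉ Set.Ioc 0 ε := by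
  have h : ∀ᶠ ε in 𝓝[>] (0 : ℝ), ∀ α ∈ S, α.im ∉ Set.Ioc 0 ε := S.eventually_all.2 fun α _ => by
    obtain hα | hα := le_or_gt α.im 0
    · exact .of_forall fun ε h => hα.not_gt h.1
    · filter_upwards [nhdsWithin_le_nhds (Iio_mem_nhds hα)] with ε hε h using hε.not_ge h.2
  obtain ⟨ε, hε, hpos⟩ := (h.and self_mem_nhdsWithin).exists
  exact ⟨ε, hpos, hε⟩

/-- The tuple `f` with all roots translated by `-s * I`. -/
def lowerRoots (f : ∀ k, Fin (D k) → ℂ) (s : ℝ) : ∀ k, Fin (D k) → ℂ :=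
  stabCoeffs (fun z => z - s * Complex.I) 0 D f

lemma toPoly_lowerRoots (s : ℝ) (k : Fin r) : toPoly (lowerRoots f s k) =
    mapRoots (fun z => z - s * Complex.I) (toPoly (f k)) :=
  (toPoly_stabCoeffs le_rfl k).trans (by simp)

lemma lowerRoots_zero : lowerRoots f 0 = f := funext fun k => toPoly_injective <| by
  rw [toPoly_lowerRoots, ← mapRoots_id (monic_toPoly (f k)), mapRoots_mapRoots]
  simp [Function.comp_def, Function.id_def]

lemma continuous_lowerRoots : Continuous fun s => lowerRoots f s := by
  have hcont : Continuous fun q : ℝ × (∀ k, Fin (D k) → ℂ) =>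
      stabCoeffs (fun z => z - q.1 * Complex.I) 0 D q.2 :=
    continuous_stabCoeffs (ψ := fun (s : ℝ) z => z - s * Complex.I) (y := fun _ => 0) (by fun_prop)
      continuous_const
  have hpair : Continuous fun s : ℝ => (s, f) := by fun_prop
  simpa only [lowerRoots, Function.comp_def] using hcont.comp hpair

lemma exists_lowerRoots_mem_realRootFree (f : ∀ k, Fin (D k) → ℂ) :
    ∃ ε > 0, ∀ s ∈ Set.Ioc 0 ε, lowerRoots f s ∈ realRootFree D := by
  obtain ⟨ε, hε, hroots⟩ :=
    exists_im_notMem_Ioc (Finset.univ.biUnion fun k => (toPoly (f k)).roots.toFinset)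
  refine ⟨ε, hε, fun s hs k t ht => ?_⟩
  rw [toPoly_lowerRoots] at ht
  obtain ⟨α, hα, hαt⟩ := exists_of_eval_mapRoots_eq_zero ht
  refine hroots α (Finset.mem_biUnion.2 ⟨k, Finset.mem_univ k, ?_⟩) ?_
  · exact Multiset.mem_toFinset.2 ((Polynomial.mem_roots (monic_toPoly _).ne_zero).2 hα)
  · have him : α.im = s := by simpa [sub_eq_zero] using congrArg Complex.im hαt
    rwa [him]

lemma exists_joinedIn_realRootFree (hK : ∅ ∈ K) (hf : f ∈ PolSp K D) :
    ∃ g ∈ realRootFree D, JoinedIn (PolSp K D) f g := by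
  obtain ⟨ε, hε, hfree⟩ := exists_lowerRoots_mem_realRootFree f
  refine ⟨lowerRoots f ε, hfree ε ⟨hε, le_rfl⟩,
    JoinedIn.ofLine (f := fun u => lowerRoots f (u * ε))
    (continuous_lowerRoots.comp (by fun_prop)).continuousOn (by simp [lowerRoots_zero])
    (by simp) ?_⟩
  rintro _ ⟨u, ⟨hu, hu1⟩, rfl⟩
  obtain rfl | hu := hu.eq_or_lt
  · simpa [lowerRoots_zero] using hf
  · exact realRootFree_subset_polSp hK (hfree _ ⟨by positivity, by nlinarith⟩)

lemma joinedIn_update (hK : ∀ σ ∉ K, 2 ≤ σ.card) (hf : f ∈ realRootFree D) (k : Fin r)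
    (a : Fin (D k) → ℂ) : JoinedIn (PolSp K D) f (Function.update f k a) := by
  refine JoinedIn.ofLine (f := fun u : ℝ => Function.update f k (AffineMap.lineMap (f k) a u))
    (by fun_prop) (by simp) (by simp) ?_
  rintro _ ⟨u, -, rfl⟩
  refine mem_polSp_of_forall_ne hK k fun l hl t => ?_
  simpa [Function.update_of_ne hl] using hf l t

lemma joinedIn_of_mem_realRootFree (hK : ∀ σ ∉ K, 2 ≤ σ.card) (hf : f ∈ realRootFree D)
    (hg : g ∈ realRootFree D) : JoinedIn (PolSp K D) f g := by
  suffices h : ∀ S : Finset (Fin r), S.piecewise g f ∈ realRootFree D ∧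
      JoinedIn (PolSp K D) f (S.piecewise g f) by simpa using (h Finset.univ).2
  intro S
  induction S using Finset.induction_on with
  | empty =>
    have hmem := realRootFree_subset_polSp (K := K) (by by_contra h; simpa using hK ∅ h) hf
    simpa using ⟨hf, JoinedIn.refl hmem⟩
  | insert k S _ ih =>
    rw [Finset.piecewise_insert]
    refine ⟨fun l t => ?_, ih.2.trans (joinedIn_update hK ih.1 k _)⟩
    obtain rfl | hl := eq_or_ne l k
    · simpa using hg l t
    · simpa [hl] using ih.1 l t

theorem isPreconnected_polSp (hK : ∀ σ ∉ K, 2 ≤ σ.card) : IsPreconnected (PolSp K D) := by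
  have hempty : ∅ ∈ K := by
    by_contra h
    simpa using hK ∅ h
  refine isPreconnected_of_forall_pair fun f hf g hg => ?_
  obtain ⟨f', hf', hff'⟩ := exists_joinedIn_realRootFree hempty hf
  obtain ⟨g', hg', hgg'⟩ := exists_joinedIn_realRootFree hempty hg
  obtain ⟨γ, hγ⟩ := (hff'.trans (joinedIn_of_mem_realRootFree hK hf' hg')).trans hgg'.symm
  exact ⟨Set.range γ, Set.range_subset_iff.2 hγ, ⟨0, γ.source⟩, ⟨1, γ.target⟩,
    isPreconnected_range γ.continuous⟩

end Connected

/-! ### Logarithms of functions on the circle -/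

section CircleLog

open scoped Topology

variable {Y : Type*} [TopologicalSpace Y]

lemma exists_exp_lift (Λ : C(unitInterval × Y, ℂ)) (hne : ∀ p, Λ p ≠ 0) (h0 : ∀ y, Λ (0, y) = 1) :
    ∃ L : C(unitInterval × Y, ℂ), (∀ y, L (0, y) = 0) ∧ ∀ p, Complex.exp (L p) = Λ p := by
  let H : C(unitInterval × Y, {z : ℂ // z ≠ 0}) := ⟨fun p => ⟨Λ p, hne p⟩, by fun_prop⟩
  have hstart (y) : H (0, y) = ⟨Complex.exp (ContinuousMap.const Y 0 y), Complex.exp_ne_zero _⟩ :=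
    Subtype.ext (by simp [H, h0])
  refine ⟨Complex.isCoveringMap_exp.liftHomotopy H (.const Y 0) hstart,
    Complex.isCoveringMap_exp.liftHomotopy_zero H _ hstart, fun p => ?_⟩
  exact congrArg Subtype.val
    (congrFun (Complex.isCoveringMap_exp.liftHomotopy_lifts H _ hstart) p)

lemma exists_int_of_exp_eq_one [PreconnectedSpace Y] {g : Y → ℂ} (hg : Continuous g)
    (h : ∀ y, Complex.exp (g y) = 1) : ∃ n : ℤ, ∀ y, g y = n * (2 * Real.pi * Complex.I) := by
  obtain hY | ⟨⟨y₀⟩⟩ := isEmpty_or_nonempty Y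
  · exact ⟨0, isEmptyElim⟩
  obtain ⟨n, hn⟩ := Complex.exp_eq_one_iff.1 (h y₀)
  refine ⟨n, fun y => hn ▸ Complex.isCoveringMap_exp.const_of_comp hg (fun a b => ?_) y y₀⟩
  exact Subtype.ext ((h a).trans (h b).symm)

lemma exists_addCircle_descend (h : C(unitInterval × Y, ℂ)) (h01 : ∀ y, h (0, y) = h (1, y)) :
    ∃ κ : C(UnitAddCircle × Y, ℂ), ∀ (u : unitInterval) y, κ ((u : ℝ), y) = h (u, y) := by
  let coe : C(unitInterval, UnitAddCircle) :=
    ⟨fun u => (u : ℝ), (AddCircle.continuous_mk' 1).comp continuous_subtype_val⟩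
  have hsurj : Function.Surjective coe := fun x => by
    obtain ⟨t, ht, rfl⟩ := (AddCircle.coe_image_Icc_eq (1 : ℝ) 0).superset (Set.mem_univ x)
    exact ⟨⟨t, by simpa using ht⟩, rfl⟩
  have hquot : Topology.IsQuotientMap (coe.prodMap (ContinuousMap.id Y)) :=
    (coe.continuous.isProperMap.prodMap (Homeomorph.refl Y).isProperMap).isClosedMap.isQuotientMap
      (by fun_prop) (hsurj.prodMap Function.surjective_id)
  have hIco (u : unitInterval) :
      ∃ u' : unitInterval, (u' : ℝ) ∈ Set.Ico 0 1 ∧ coe u' = coe u ∧ ∀ y, h (u', y) = h (u, y) := by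
    obtain rfl | hu := eq_or_ne u 1
    · exact ⟨0, by simp, (AddCircle.coe_period (1 : ℝ)).symm, h01⟩
    · exact ⟨u, ⟨u.2.1, unitInterval.lt_one_iff_ne_one.2 hu⟩, rfl, fun _ => rfl⟩
  have hfactors : Function.FactorsThrough h (coe.prodMap (ContinuousMap.id Y)) := by
    rintro ⟨u, y⟩ ⟨v, z⟩ huv
    obtain ⟨u', hu', hcoe_u, hh_u⟩ := hIco u
    obtain ⟨v', hv', hcoe_v, hh_v⟩ := hIco v
    obtain ⟨hcoe, rfl⟩ : coe u = coe v ∧ y = z := Prod.ext_iff.1 huv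
    rw [← hcoe_u, ← hcoe_v] at hcoe
    have huv' : (u' : ℝ) = v' := (AddCircle.coe_eq_coe_iff_of_mem_Ico (a := 0)
      (by simpa using hu') (by simpa using hv')).1 hcoe
    rw [← hh_u, ← hh_v, Subtype.ext huv']
  exact ⟨hquot.lift h hfactors,
    fun u y => DFunLike.congr_fun (hquot.lift_comp h hfactors) (u, y)⟩

lemma exists_eq_exp_mul_fourier [PreconnectedSpace Y] (Λ : C(UnitAddCircle × Y, ℂ))
    (hne : ∀ p, Λ p ≠ 0) (h0 : ∀ y, Λ (0, y) = 1) :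
    ∃ (n : ℤ) (κ : C(UnitAddCircle × Y, ℂ)), (∀ y, κ (0, y) = 0) ∧
      ∀ x y, Λ (x, y) = Complex.exp (κ (x, y)) * fourier n x := by
  have : Continuous fun u : unitInterval => ((u : ℝ) : UnitAddCircle) :=
    (AddCircle.continuous_mk' 1).comp continuous_subtype_val
  obtain ⟨L, hL0, hL⟩ := exists_exp_lift
    ⟨fun p : unitInterval × Y => Λ ((p.1 : ℝ), p.2), by fun_prop⟩ (fun p => hne _)
    (by simpa using h0)
  obtain ⟨n, hn⟩ := exists_int_of_exp_eq_one (g := fun y => L (1, y)) (by fun_prop) fun y => by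
    simpa [hL, AddCircle.coe_period] using h0 y
  obtain ⟨κ, hκ⟩ := exists_addCircle_descend
    ⟨fun p : unitInterval × Y => L p - (p.1 : ℝ) * (n * (2 * Real.pi * Complex.I)), by fun_prop⟩
    (by simp [hL0, hn])
  refine ⟨n, κ, fun y => by simpa [hL0] using hκ 0 y, fun x y => ?_⟩
  obtain ⟨t, ht, rfl⟩ := (AddCircle.coe_image_Icc_eq (1 : ℝ) 0).superset (Set.mem_univ x)
  have hu : t ∈ unitInterval := by simpa using ht
  have hval := hL (⟨t, hu⟩, y)
  rw [hκ ⟨t, hu⟩ y, fourier_coe_apply, ← Complex.exp_add]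
  refine hval.symm.trans (congrArg Complex.exp ?_)
  simp
  ring

/-- The Cayley transform `t ↦ (t - I) / (t + I)`, identifying `ℝ ∪ {∞}` with the unit circle. -/
def cayley : C(OnePoint ℝ, ℂ) := ⟨fun s => 1 - 2 * Complex.I * circleCoord s, by fun_prop⟩

lemma cayley_infty : cayley OnePoint.infty = 1 := by simp [cayley, circleCoord_infty]

lemma cayley_coe (t : ℝ) :
    cayley (t : OnePoint ℝ) = (t - Complex.I) * ((t : ℂ) + Complex.I)⁻¹ := by
  have := ofReal_add_I_ne_zero t
  simp only [cayley, ContinuousMap.coe_mk, circleCoord_coe]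
  field_simp
  ring

lemma norm_cayley (s : OnePoint ℝ) : ‖cayley s‖ = 1 := by
  induction s using OnePoint.rec with
  | infty => rw [cayley_infty, norm_one]
  | coe t =>
    have hconj : (t : ℂ) - Complex.I = starRingEnd ℂ (t + Complex.I) := by simp [sub_eq_add_neg]
    rw [cayley_coe, hconj, norm_mul, norm_inv, Complex.norm_conj,
      mul_inv_cancel₀ (norm_ne_zero_iff.2 (ofReal_add_I_ne_zero t))]

lemma cayley_ne_zero (s : OnePoint ℝ) : cayley s ≠ 0 := norm_ne_zero_iff.1 (by simp [norm_cayley])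

lemma cayley_injective : Function.Injective cayley := fun _ _ h =>
  circleCoord_injective (mul_left_cancel₀ (by simp) (sub_right_injective h))

lemma exists_cayley_eq {ζ : ℂ} (hζ : ‖ζ‖ = 1) : ∃ s, cayley s = ζ := by
  obtain rfl | hζ1 := eq_or_ne ζ 1
  · exact ⟨OnePoint.infty, cayley_infty⟩
  have hsub : 1 - ζ ≠ 0 := sub_ne_zero.2 hζ1.symm
  have hζ0 : ζ ≠ 0 := norm_ne_zero_iff.1 (by simp [hζ])
  have hconj : starRingEnd ℂ ζ = ζ⁻¹ := (Complex.inv_eq_conj hζ).symm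
  obtain ⟨t, ht⟩ : ∃ t : ℝ, (t : ℂ) = Complex.I * (1 + ζ) / (1 - ζ) := by
    refine (Complex.conj_eq_iff_real.1 ?_).imp fun _ h => h.symm
    have hsub' : ζ - 1 ≠ 0 := sub_ne_zero.2 hζ1
    simp only [map_div₀, map_mul, map_add, map_sub, map_one, Complex.conj_I, hconj]
    field_simp
    ring
  have hadd : (t : ℂ) + Complex.I = 2 * Complex.I / (1 - ζ) := by rw [ht]; field_simp; ring
  have hsub_I : (t : ℂ) - Complex.I = ζ * (2 * Complex.I / (1 - ζ)) := by rw [ht]; field_simp; ring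
  refine ⟨t, ?_⟩
  rw [cayley_coe, hadd, hsub_I, mul_assoc, mul_inv_cancel₀ (by simp [hsub]), mul_one]

/-- The circle `ℝ ∪ {∞}` as the additive circle, with `∞` corresponding to `0`. -/
def onePointHomeoAddCircle : OnePoint ℝ ≃ₜ UnitAddCircle :=
  (Continuous.homeoOfEquivCompactToT2 (f := Equiv.ofBijective
    (fun s => (⟨cayley s, mem_sphere_zero_iff_norm.2 (norm_cayley s)⟩ : Circle))
    ⟨fun _ _ h => cayley_injective (congrArg Subtype.val h), fun z =>
      (exists_cayley_eq (Circle.norm_coe z)).imp fun _ h => Subtype.ext h⟩)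
    (cayley.continuous.subtype_mk _)).trans (AddCircle.homeomorphCircle one_ne_zero).symm

lemma fourier_onePointHomeoAddCircle (n : ℤ) (s : OnePoint ℝ) :
    fourier n (onePointHomeoAddCircle s) = cayley s ^ n := by
  have hcircle : (AddCircle.toCircle (onePointHomeoAddCircle s) : ℂ) = cayley s := by
    rw [← AddCircle.homeomorphCircle_apply one_ne_zero]
    exact congrArg Subtype.val ((AddCircle.homeomorphCircle one_ne_zero).apply_symm_apply _)
  rw [fourier_apply, AddCircle.toCircle_zsmul, Circle.coe_zpow, hcircle]

lemma onePointHomeoAddCircle_infty : onePointHomeoAddCircle OnePoint.infty = 0 := by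
  refine AddCircle.injective_toCircle one_ne_zero (Subtype.ext ?_)
  simpa [cayley_infty] using fourier_onePointHomeoAddCircle 1 OnePoint.infty

theorem exists_eq_exp_mul_cayley_zpow [PreconnectedSpace Y] (Λ : C(Y × OnePoint ℝ, ℂ))
    (hne : ∀ p, Λ p ≠ 0) (hinfty : ∀ y, Λ (y, OnePoint.infty) = 1) :
    ∃ (n : ℤ) (κ : C(Y × OnePoint ℝ, ℂ)), (∀ y, κ (y, OnePoint.infty) = 0) ∧
      ∀ p, Λ p = Complex.exp (κ p) * cayley p.2 ^ n := by
  obtain ⟨n, κ, hκ0, hκ⟩ := exists_eq_exp_mul_fourier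
    ⟨fun p : UnitAddCircle × Y => Λ (p.2, onePointHomeoAddCircle.symm p.1), by fun_prop⟩
    (fun p => hne _) fun y => by
      simp [← onePointHomeoAddCircle_infty, hinfty]
  refine ⟨n, ⟨fun p => κ (onePointHomeoAddCircle p.2, p.1), by fun_prop⟩, fun y => ?_, fun p => ?_⟩
  · simp [onePointHomeoAddCircle_infty, hκ0]
  · simpa [fourier_onePointHomeoAddCircle, -fourier_apply] using hκ (onePointHomeoAddCircle p.2) p.1

end CircleLog

/-! ### The lift after stabilization -/

section Main

open scoped Topology

lemma tendsto_cayley : Filter.Tendsto (fun t : ℝ => cayley t) (Filter.cocompact ℝ) (𝓝 1) := by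
  simpa [cayley, circleCoord_coe] using
    (tendsto_inv_ofReal_add_I.const_mul (2 * Complex.I)).const_sub 1

lemma contDiff_cayley_zpow (n : ℤ) : ContDiff ℝ 1 fun t : ℝ => cayley t ^ n := by
  have hcayley : ContDiff ℝ 1 fun t : ℝ => cayley t := by
    simpa only [cayley, ContinuousMap.coe_mk, circleCoord_coe] using
      contDiff_const.sub (contDiff_const.mul contDiff_inv_ofReal_add_I)
  cases n with
  | ofNat n => simpa only [Int.ofNat_eq_natCast, zpow_natCast] using hcayley.pow n
  | negSucc n =>
    simp only [zpow_negSucc]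
    exact (hcayley.pow (n + 1)).inv fun t => pow_ne_zero _ (cayley_ne_zero _)

lemma polyWeight_cayley_zpow (n : ℤ) (d : ℕ) :
    PolyWeight d fun t : ℝ => cayley t ^ n * ((t : ℂ) + Complex.I)⁻¹ ^ d where
  contDiff := (contDiff_cayley_zpow n).mul (polyWeight_inv_add_I_pow d).contDiff
  ne_zero t :=
    mul_ne_zero (zpow_ne_zero _ (cayley_ne_zero _)) ((polyWeight_inv_add_I_pow d).ne_zero t)
  tendsto := by
    simpa [mul_left_comm] using
      (tendsto_cayley.zpow₀ n (Or.inl one_ne_zero)).mul (polyWeight_inv_add_I_pow d).tendsto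

lemma monicEval_cayley_zpow (n : ℤ) (d : ℕ) (u : Fin d → ℂ) (s : OnePoint ℝ) :
    (polyWeight_cayley_zpow n d).monicEval u s =
      cayley s ^ n * (polyWeight_inv_add_I_pow d).monicEval u s := by
  induction s using OnePoint.rec with
  | infty => simp [cayley_infty]
  | coe t => rw [PolyWeight.monicEval_coe, PolyWeight.monicEval_coe]; ring

variable {n r : ℕ} {K : Set (Finset (Fin r))} {D : Fin r → ℕ}

lemma mul_mem_UK {c x : Fin r → ℂ} (hc : ∀ k, c k ≠ 0) (hx : x ∈ UK K) :
    (fun k => c k * x k) ∈ UK K := mem_UK.2 fun σ hσ =>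
  (mem_UK.1 hx σ hσ).imp fun k hk => ⟨hk.1, mul_ne_zero (hc k) hk.2⟩

lemma exists_homotopic_exp_mul {Y : Type*} [TopologicalSpace Y] {hE : (∅ : Finset (Fin r)) ∈ K}
    (J : C(Y, Loop (UK K) (onesUK hE))) (κ : Fin r → C(Y × OnePoint ℝ, ℂ))
    (hκ : ∀ k y, κ k (y, OnePoint.infty) = 0) :
    ∃ J₁ : C(Y, Loop (UK K) (onesUK hE)), J.Homotopic J₁ ∧
      ∀ y s k, ((J₁ y).1 s).1 k = Complex.exp (κ k (y, s)) * ((J y).1 s).1 k := by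
  let H : C((unitInterval × Y) × OnePoint ℝ, UK K) :=
    ⟨fun p => ⟨fun k => Complex.exp ((p.1.1 : ℝ) * κ k (p.1.2, p.2)) * ((J p.1.2).1 p.2).1 k,
      mul_mem_UK (fun _ => Complex.exp_ne_zero _) ((J p.1.2).1 p.2).2⟩, by
      have hJ (k) : Continuous fun p : (unitInterval × Y) × OnePoint ℝ => ((J p.1.2).1 p.2).1 k :=
        (continuous_apply k).comp (continuous_subtype_val.comp ((Loop.uncurry J).continuous.comp
          ((continuous_snd.comp continuous_fst).prodMk continuous_snd)))
      exact .subtype_mk (continuous_pi fun k => .mul (by fun_prop) (hJ k)) _⟩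
  have hH (z : unitInterval × Y) : H (z, OnePoint.infty) = onesUK hE := Subtype.ext <| funext
    fun k => by simpa [H, hκ] using congrFun (congrArg Subtype.val (J z.2).2) k
  refine ⟨(Loop.curry H hH).comp ⟨fun y => (1, y), by fun_prop⟩,
    ⟨⟨Loop.curry H hH, fun y => Loop.ext_apply fun s => ?_, fun y => rfl⟩⟩, fun y s k => ?_⟩
  · exact Subtype.ext (funext fun k => by simp [H])
  · simp [H]

theorem hasCompression_of_mul_monicEval {hE : (∅ : Finset (Fin r)) ∈ K} {R m : ℕ} (hR : 1 ≤ R)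
    (hK : ∀ σ, σ ∉ K → R + 1 ≤ σ.card) (hm : ∀ k, m + 1 ≤ 2 * R * D k)
    (J : C(PolSp K D, Loop (UK K) (onesUK hE))) (Λ : Fin r → C(PolSp K D × OnePoint ℝ, ℂ))
    (hne : ∀ k p, Λ k p ≠ 0) (hinfty : ∀ k f, Λ k (f, OnePoint.infty) = 1)
    (hJ : ∀ f s k, ((J f).1 s).1 k =
      Λ k (f, s) * (polyWeight_inv_add_I_pow (D k)).monicEval (f.1 k) s) :
    HasCompression m J := by
  have : PreconnectedSpace (PolSp K D) := isPreconnected_iff_preconnectedSpace.1 <|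
    isPreconnected_polSp fun σ hσ => (Nat.succ_le_succ hR).trans (hK σ hσ)
  choose n κ hκ_infty hκ using fun k => exists_eq_exp_mul_cayley_zpow (Λ k) (hne k) (hinfty k)
  obtain ⟨J₁, hJJ₁, hJ₁⟩ := exists_homotopic_exp_mul J (fun k => -κ k) (by simp [hκ_infty])
  refine .of_homotopic ((hasHomotopyExtension_of_isOpen (isOpen_UK K)).loop _) hJJ₁ ?_
  refine hasCompression_of_monicEval hR hK hm (fun k => polyWeight_cayley_zpow (n k) (D k)) J₁
    fun f s k => ?_
  rw [hJ₁, hJ, hκ, monicEval_cayley_zpow, ContinuousMap.neg_apply, Complex.exp_neg, mul_assoc,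
    inv_mul_cancel_left₀ (Complex.exp_ne_zero _)]

lemma exists_subset_primitiveSet (σ : Finset (Fin r)) (hσ : σ ∉ K) :
    ∃ τ ⊆ σ, PrimitiveSet K τ := by
  obtain ⟨τ, hτσ, hτ⟩ := exists_minimal_le_of_wellFoundedLT (· ∉ K) σ hσ
  exact ⟨τ, hτσ, hτ.prop, fun t ht => not_not.1 (hτ.not_prop_of_lt ht)⟩

lemma rmin_le_card {σ : Finset (Fin r)} (hσ : σ ∉ K) : rmin K ≤ σ.card := by
  obtain ⟨τ, hτσ, hτ⟩ := exists_subset_primitiveSet σ hσ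
  have : rmin K ≤ τ.card := Nat.sInf_le ⟨τ, hτ, rfl⟩
  exact this.trans (Finset.card_le_card hτσ)

variable {F : Fan n} {N : Fin r → Fin n → ℤ} {D' : Fin r → ℕ}

theorem hasCompression_comp_stabilization (hPG : IsPrimGens F N) (hNS : F.NonSingular)
    {hE : ∅ ∈ KC F N} (hD : D ≤ D') {b : ℝ} {φ : ℂ → ℂ} (hφ : AdmissiblePhi b φ) {x : Fin r → ℂ}
    {j : C(PolSp (KC F N) D', Loop (UK (KC F N)) (onesUK hE))}
    (hj : IsLiftOfID N (KC F N) hE D' j) {s : C(PolSp (KC F N) D, PolSp (KC F N) D')}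
    (hs : StabSpec (KC F N) φ x D D' s) {R m : ℕ} (hR : 1 ≤ R) (hrmin : R + 1 ≤ rmin (KC F N))
    (hm : m + 1 ≤ 2 * R * dmin D) : HasCompression m (j.comp s) := by
  obtain ⟨y, T, e, hy, hT, hsT⟩ := hs.homotopic_comp_homeomorph hφ hD
  obtain ⟨Λ, hne, hinfty, hΛ⟩ := hj.exists_circle_factor hPG hNS hy hT
  have hcompression : HasCompression m (j.comp T) :=
    hasCompression_of_mul_monicEval hR (fun σ hσ => hrmin.trans (rmin_le_card hσ))
      (fun k => hm.trans (Nat.mul_le_mul_left _ (Nat.sInf_le ⟨k, rfl⟩))) _ Λ hne hinfty hΛ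
  exact .of_homotopic ((hasHomotopyExtension_of_isOpen (isOpen_UK _)).loop _)
    ((ContinuousMap.Homotopic.refl j).comp hsT) (hcompression.comp_homeomorph e)

theorem polSpace_jD_composite_homotopyEquiv_through_general (hPG : IsPrimGens F N)
    (hNS : F.NonSingular) {hE : ∅ ∈ KC F N} (hD : D ≤ D') {b : ℝ} {φ : ℂ → ℂ}
    (hφ : AdmissiblePhi b φ) {x : Fin r → ℂ}
    {j : C(PolSp (KC F N) D', Loop (UK (KC F N)) (onesUK hE))}
    (hj : IsLiftOfID N (KC F N) hE D' j) {s : C(PolSp (KC F N) D, PolSp (KC F N) D')}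
    (hs : StabSpec (KC F N) φ x D D' s) :
    HomotopyEquivThrough (j.comp s) (dBound (KC F N) D) := by
  intro f q hq
  obtain ⟨R, hR⟩ : ∃ R, R = rmin (KC F N) - 1 := ⟨_, rfl⟩
  have hq_le : q + 2 ≤ 2 * R * dmin D := by
    have hmul : ((rmin (KC F N) : ℤ) - 1) * dmin D ≤ R * dmin D :=
      mul_le_mul_of_nonneg_right (by omega) (by positivity)
    unfold dBound at hq
    zify
    linarith
  have hR_pos : 1 ≤ R := Nat.one_le_iff_ne_zero.2 fun h => by simp [h] at hq_le
  exact (hasCompression_comp_stabilization hPG hNS hD hφ hj hs hR_pos (by omega)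
    hq_le).homotopyEquivThrough (d := q) (by simp) f q le_rfl

end Main

/-- When `∑ d_k n_k ≠ 0`, the composite
`j_D = j_{D₀} ∘ s_{D,D₀} : Pol*_D(S¹,X_Σ) → Ω U(K_Σ)` (for `D₀ = m₀ D*` as in (2.9.1))
is a homotopy equivalence through dimension `d(D,Σ)`. -/
theorem polSpace_jD_composite_homotopyEquiv_through
    {n r : ℕ} (F : Fan n) (N : Fin r → Fin n → ℤ)
    (hPG : IsPrimGens F N) (hNS : F.NonSingular)
    (h1 : Cond1 N) (h2 : Cond2 N)
    (D : Fin r → ℕ) (hD : ∀ k, 0 < D k)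
    (hsum : ∑ k, (D k : ℤ) • N k ≠ 0)
    (dstar : Fin r → ℕ) (hds : ∀ k, 0 < dstar k)
    (hdsum : ∑ k, (dstar k : ℤ) • N k = 0)
    (m₀ : ℕ) (hm₀ : ∀ k, D k < m₀ * dstar k)
    (φ : ℂ → ℂ) (hφ : AdmissiblePhi ((∑ k, D k : ℕ) : ℝ) φ)
    (xpt : Fin r → ℂ) (hx : ∀ k, ((∑ k, D k : ℕ) : ℝ) < (xpt k).re)
    (hxinj : Function.Injective xpt)
    (j₀ : C(↥(PolSp (KC F N) fun k => m₀ * dstar k),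
        Loop ↥(UK (KC F N)) (onesUK (empty_mem_KC F N))))
    (hj₀ : IsLiftOfID N (KC F N) (empty_mem_KC F N) (fun k => m₀ * dstar k) ⇑j₀)
    (s₀ : C(↥(PolSp (KC F N) D), ↥(PolSp (KC F N) fun k => m₀ * dstar k)))
    (hs₀ : StabSpec (KC F N) φ xpt D (fun k => m₀ * dstar k) ⇑s₀) :
    HomotopyEquivThrough (j₀.comp s₀) (dBound (KC F N) D) := by
  exact polSpace_jD_composite_homotopyEquiv_through_general hPG hNS (fun k => (hm₀ k).le) hφ hj₀ hs₀

end Toric
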